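/- arXiv:0804.3032 — 2 statements merged into one kernel-verified Lean document; each statement's English description precedes it below -/
import Mathlib

section
/- Let β > 0 and let m ≥ 1 be an integer. Set c_1 = m(m−1)(1+β)²/β² + m(m−1)²(1+β)³/(β²(2+β)) and c_2 = (2+5β)/(2β)·m² + (2−β)/(2β)·m. Then there exist a constant K > 0 and an integer n_0 ≥ 3 such that for all n ≥ n_0, the expected clustering coefficient of the Móri graph satisfies |E[C(G^n_{m,β})] − 3·c_1·log n/(c_2·n)| ≤ K/n. -/
open Finset


/-- A parent sequence of length `N`: for each `t ∈ {2,…,N}` an index `f t ∈ {1,…,t-1}`. -/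
def ParentSeq (N : ℕ) : Type :=
  ∀ t : Set.Icc 2 N, Set.Icc 1 ((t : ℕ) - 1)

noncomputable instance (N : ℕ) : Fintype (ParentSeq N) := by
  unfold ParentSeq
  classical
  infer_instance

/-- The value of a parent sequence at `j` (junk value `0` outside `{2,…,N}`). -/
def pval {N : ℕ} (f : ParentSeq N) (j : ℕ) : ℕ :=
  if h : 2 ≤ j ∧ j ≤ N then (f ⟨j, Set.mem_Icc.mpr h⟩ : ℕ) else 0

/-- The degree `d_t(v_i)` of vertex `i` at time `t` in the tree determined by `f`. -/
def deg {N : ℕ} (f : ParentSeq N) (t i : ℕ) : ℕ :=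
  ((Finset.Icc 2 t).filter (fun j => pval f j = i)).card + (if 2 ≤ i then 1 else 0)

/-- The Móri probability of the parent sequence `f`. -/
noncomputable def moriP {N : ℕ} (β : ℝ) (f : ParentSeq N) : ℝ :=
  ∏ t ∈ Finset.Icc 2 N, ((deg f (t - 1) (pval f t) : ℝ) + β) / ((2 + β) * ((t : ℝ) - 1) - 2)

/-- Expectation of `X` under the Móri measure on parent sequences of length `N`. -/
noncomputable def moriE (N : ℕ) (β : ℝ) (X : ParentSeq N → ℝ) : ℝ :=
  ∑ f : ParentSeq N, moriP β f * X f

open Classical in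
/-- Probability of an event under the Móri measure on parent sequences of length `N`. -/
noncomputable def moriPr (N : ℕ) (β : ℝ) (p : ParentSeq N → Prop) : ℝ :=
  ∑ f : ParentSeq N, if p f then moriP β f else 0

/-- The index of the merged vertex containing tree vertex `t` when merging in blocks of `m`. -/
def blk (m t : ℕ) : ℕ := (t - 1) / m + 1

/-- The number `m(a,b)` of edges joining `u_a` and `u_b` in the Móri graph `G^n_{m,β}`. -/
def mult (n m : ℕ) (f : ParentSeq (n * m)) (a b : ℕ) : ℕ :=
  ((Finset.Icc 2 (n * m)).filter (fun t =>
    (blk m t = a ∧ blk m (pval f t) = b) ∨ (blk m t = b ∧ blk m (pval f t) = a))).card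

/-- The degree `d(u_i)` of the merged vertex `u_i` in the Móri graph `G^n_{m,β}`
(a loop contributes `2`). -/
def degU (n m : ℕ) (f : ParentSeq (n * m)) (i : ℕ) : ℕ :=
  ((Finset.Icc 2 (n * m)).filter (fun t => blk m t = i)).card +
  ((Finset.Icc 2 (n * m)).filter (fun t => blk m (pval f t) = i)).card




section onestep
variable {ι : Type} [Fintype ι] [DecidableEq ι]

def ind (a i : ι) : ℝ := if i = a then 1 else 0
def stepZ (Z : ι → ℝ) (a : ι) : ι → ℝ := fun i => Z i + ind a i
def stepM (M : ι → ι → ℝ) (c a : ι) : ι → ι → ℝ := fun i j =>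
  M i j + (if a = c then 0 else ind a i * ind c j + ind c i * ind a j)
def yy (M : ι → ι → ℝ) (W : ι → ℝ) (i : ι) : ℝ := ∑ j, M i j * W j
def PP (M : ι → ι → ℝ) (W : ι → ℝ) : ℝ := ∑ i, W i * yy M W i
def RR (M : ι → ι → ℝ) (W : ι → ℝ) : ℝ := ∑ i, W i * (yy M W i) ^ 2
def VV (M : ι → ι → ℝ) (W : ι → ℝ) (c : ι) : ℝ := ∑ b, M c b * (yy M W b - M b c * W c)
noncomputable def NN (M : ι → ι → ℝ) : ℝ := (∑ a, ∑ b, ∑ d, M a b * M b d * M d a) / 6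

lemma sum_ind (a : ι) (f : ι → ℝ) : ∑ i, ind a i * f i = f a := by
  simp [ind]
lemma sum_ind' (a : ι) (f : ι → ℝ) : ∑ i, f i * ind a i = f a := by
  simp [ind]
lemma ind_self (a : ι) : ind a a = 1 := by simp [ind]
lemma ind_ne {a i : ι} (h : i ≠ a) : ind a i = 0 := by simp [ind, h]
lemma ind_nonneg (a i : ι) : 0 ≤ ind a i := by unfold ind; split_ifs <;> norm_num

lemma stepM_self (M : ι → ι → ℝ) (c : ι) : stepM M c c = M := by
  funext i j; simp [stepM]

lemma stepM_ne (M : ι → ι → ℝ) {c a : ι} (h : a ≠ c) (i j : ι) :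
    stepM M c a i j = M i j + (ind a i * ind c j + ind c i * ind a j) := by
  simp [stepM, h]

lemma yy_stepZ (M : ι → ι → ℝ) (W : ι → ℝ) (a i : ι) :
    yy M (stepZ W a) i = yy M W i + M i a := by
  simp only [yy, stepZ, mul_add, Finset.sum_add_distrib, sum_ind']

lemma yy_step (M : ι → ι → ℝ) (W : ι → ℝ) (c a i : ι) :
    yy (stepM M c a) (stepZ W a) i = yy M W i + M i a +
      if a = c then 0 else (ind a i * W c + ind c i * (W a + 1)) := by
  by_cases h : a = c
  · subst h; simp [stepM_self, yy_stepZ]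
  · rw [if_neg h, ← yy_stepZ]
    simp only [yy, stepM_ne M h, add_mul, Finset.sum_add_distrib]
    have e1 : ∑ j, ind a i * ind c j * stepZ W a j = ind a i * W c := by
      simp only [mul_assoc]
      rw [← Finset.mul_sum, sum_ind]
      simp [stepZ, ind_ne (Ne.symm h)]
    have e2 : ∑ j, ind c i * ind a j * stepZ W a j = ind c i * (W a + 1) := by
      simp only [mul_assoc]
      rw [← Finset.mul_sum, sum_ind]
      simp [stepZ, ind_self]
    rw [e1, e2]

lemma PP_step (M : ι → ι → ℝ) (W : ι → ℝ) (c a : ι) (hs : ∀ i j, M i j = M j i)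
    (hd : ∀ i, M i i = 0) :
    PP (stepM M c a) (stepZ W a) = PP M W + 2 * yy M W a +
      if a = c then 0 else 2 * (W a + 1) * W c := by
  have e3 : ∑ i, W i * M i a = yy M W a := by
    unfold yy; exact Finset.sum_congr rfl fun i _ => by rw [hs i a]; ring
  unfold PP
  simp only [yy_step]
  simp only [stepZ, add_mul, mul_add, Finset.sum_add_distrib, sum_ind, hd, e3]
  by_cases h : a = c
  · simp [h]; ring
  · simp only [if_neg h]
    simp only [mul_add, add_mul, Finset.sum_add_distrib, ind_self, ind_ne h]
    have e1 : ∑ i, W i * (ind a i * W c) = W a * W c := by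
      rw [← sum_ind a (fun i => W i * W c)]; exact Finset.sum_congr rfl fun i _ => by ring
    have e2 : ∑ i, W i * (ind c i * W a) = W a * W c := by
      rw [← mul_comm (W c), ← sum_ind c (fun i => W i * W a)]; exact Finset.sum_congr rfl fun i _ => by ring
    have e4 : ∑ i, W i * (ind c i * 1) = W c := by
      rw [← sum_ind c (fun i => W i)]; exact Finset.sum_congr rfl fun i _ => by ring
    rw [e1, e2, e4]; ring

lemma VV_step (M : ι → ι → ℝ) (W : ι → ℝ) (c a : ι) (hs : ∀ i j, M i j = M j i)
    (hd : ∀ i, M i i = 0) :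
    VV (stepM M c a) (stepZ W a) c = VV M W c +
      if a = c then 0 else ((∑ b, M c b * M b a) + (yy M W a - M a c * W c)) := by
  unfold VV
  simp only [yy_step]
  by_cases h : a = c
  · subst h
    simp only [stepM_self, stepZ, ind_self, if_true]
    rw [add_zero]
    exact Finset.sum_congr rfl fun i _ => by ring
  · simp only [if_neg h, stepM_ne M h, stepZ, ind_ne (Ne.symm h), ind_self]
    have hc : ∀ b, ind a b * ind c b = 0 := by
      intro b; by_cases hb : b = a
      · subst hb; simp [ind_ne h]
      · simp [ind_ne hb]
    have : ∀ b, (M c b + (0 * ind c b + 1 * ind a b)) * (yy M W b + M b a + (ind a b * W c + ind c b * (W a + 1)) - (M b c + (ind a b * 1 + ind c b * 0)) * (W c + 0)) = 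
      M c b * (yy M W b - M b c * W c) + M c b * M b a + ind c b * (M c b * (W a + 1)) + ind a b * (yy M W b + M b a - M b c * W c) := by
      intro b
      linear_combination (W a + 1) * hc b
    simp only [this, Finset.sum_add_distrib, sum_ind, hd]
    ring

lemma NN_eq_trace (M : ι → ι → ℝ) :
    NN M = Matrix.trace (Matrix.of M * Matrix.of M * Matrix.of M) / 6 := by
  unfold NN Matrix.trace
  congr 1
  refine Finset.sum_congr rfl fun a _ => ?_
  simp only [Matrix.diag_apply, Matrix.mul_apply, Matrix.of_apply, Finset.sum_mul]
  rw [Finset.sum_comm]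

lemma NN_step (M : ι → ι → ℝ) (c a : ι) (hs : ∀ i j, M i j = M j i)
    (hd : ∀ i, M i i = 0) :
    NN (stepM M c a) = NN M + if a = c then 0 else ∑ b, M c b * M b a := by
  by_cases h : a = c
  · simp [h, stepM_self]
  · rw [NN_eq_trace, NN_eq_trace, if_neg h]
    set A := Matrix.of M with hA
    have hst : Matrix.of (stepM M c a) = A + (Matrix.single a c (1:ℝ) + Matrix.single c a 1) := by
      ext i j
      simp only [Matrix.of_apply, stepM_ne M h, Matrix.add_apply, hA, Matrix.single_apply, ind]
      congr 2 <;> grind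
    have hAA : ∀ i j, A i j = M i j := fun i j => rfl
    rw [hst]
    have q1 : Matrix.trace (A * A * Matrix.single a c (1:ℝ)) = ∑ b, M c b * M b a := by
      rw [Matrix.trace_mul_single]; simp [Matrix.mul_apply, hAA]
    have q2 : Matrix.trace (A * A * Matrix.single c a (1:ℝ)) = ∑ b, M c b * M b a := by
      rw [Matrix.trace_mul_single]; simp only [Matrix.mul_apply, hAA, mul_one]
      simp
      exact Finset.sum_congr rfl fun b _ => by rw [hs a b, hs b c]; ring
    set D1 := Matrix.single a c (1:ℝ)
    set D2 := Matrix.single c a (1:ℝ)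
    have z11 : D1 * D1 = 0 := by simp [D1, Matrix.single_mul_single_of_ne, Ne.symm h]
    have z22 : D2 * D2 = 0 := by simp [D2, Matrix.single_mul_single_of_ne, h]
    have z12 : D1 * D2 = Matrix.single a a 1 := by simp [D1, D2]
    have z21 : D2 * D1 = Matrix.single c c 1 := by simp [D1, D2]
    have t1 : ∀ i, Matrix.trace (A * Matrix.single i i (1:ℝ)) = 0 := by
      intro i; rw [Matrix.trace_mul_single]; simp [hAA, hd]
    set D := D1 + D2 with hD
    have hDD : D * D = Matrix.single a a 1 + Matrix.single c c 1 := by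
      rw [hD, add_mul, mul_add, mul_add, z11, z22, z12, z21]; simp
    have hDDD : Matrix.trace (D * D * D) = 0 := by
      rw [hDD, hD]
      simp [add_mul, mul_add, D1, D2, Matrix.trace_add, h, Ne.symm h, Matrix.single_mul_single_of_ne, Matrix.trace_single_eq_of_ne]
    have tAAD : Matrix.trace (A * A * D) = 2 * ∑ b, M c b * M b a := by
      rw [hD, mul_add, Matrix.trace_add, q1, q2]; ring
    have tADD : Matrix.trace (A * D * D) = 0 := by
      rw [mul_assoc, hDD, mul_add, Matrix.trace_add, t1, t1]; simp
    have c1 : Matrix.trace (A * D * A) = Matrix.trace (A * A * D) := by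
      rw [Matrix.trace_mul_cycle]
    have c2 : Matrix.trace (D * A * A) = Matrix.trace (A * A * D) := by
      rw [Matrix.trace_mul_cycle, c1]
    have c3 : Matrix.trace (D * A * D) = Matrix.trace (A * D * D) := by
      rw [Matrix.trace_mul_cycle, Matrix.trace_mul_cycle]
    have c4 : Matrix.trace (D * D * A) = Matrix.trace (A * D * D) := by
      rw [Matrix.trace_mul_cycle]
    have : (A + D) * (A + D) * (A + D) = A * A * A + A * A * D + A * D * A + A * D * D + D * A * A + D * A * D + D * D * A + D * D * D := by
      noncomm_ring
    rw [this]
    simp only [Matrix.trace_add, c1, c2, c3, c4, tADD, tAAD, hDDD]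
    ring
end onestep


section avgs
variable {ι : Type} [Fintype ι] [DecidableEq ι]

noncomputable def avg (X : ι → ℝ) (L : ℝ) (F : ι → ℝ) : ℝ := ∑ a, X a / L * F a

structure Good (m w0 g L : ℝ) (c : ι) (w Z W X : ι → ℝ) (M : ι → ι → ℝ) : Prop where
  m1 : 1 ≤ m
  w0nn : 0 ≤ w0
  Znn : ∀ i, 0 ≤ Z i
  Mnn : ∀ i j, 0 ≤ M i j
  Ms : ∀ i j, M i j = M j i
  Md : ∀ i, M i i = 0
  Mle : ∀ i j, M i j ≤ m
  Mrow : ∑ j, M c j ≤ m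
  Zc : Z c ≤ m
  wnn : ∀ i, 0 ≤ w i
  wle : ∀ i, w i ≤ w0
  WZ : ∀ i, W i = w i + Z i
  Lpos : 0 < L
  Xnn : ∀ i, 0 ≤ X i
  Xsum : ∑ i, X i = L
  Zsum : ∑ i, Z i ≤ L
  Xc : X c = W c - g
  gnn : 0 ≤ g
  gle : g ≤ w0
  Xo : ∀ i, i ≠ c → X i = W i ∨ (X i = 0 ∧ Z i = 0 ∧ ∀ j, M i j = 0)

lemma avg_add (X : ι → ℝ) (L : ℝ) (F G : ι → ℝ) :
    avg X L (fun a => F a + G a) = avg X L F + avg X L G := by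
  simp [avg, mul_add, Finset.sum_add_distrib]
lemma avg_sub (X : ι → ℝ) (L : ℝ) (F G : ι → ℝ) :
    avg X L (fun a => F a - G a) = avg X L F - avg X L G := by
  simp [avg, mul_sub, Finset.sum_sub_distrib]
lemma avg_mul (X : ι → ℝ) (L r : ℝ) (F : ι → ℝ) :
    avg X L (fun a => r * F a) = r * avg X L F := by
  simp only [avg, Finset.mul_sum]; exact Finset.sum_congr rfl fun a _ => by ring
lemma avg_eq (X : ι → ℝ) (L : ℝ) (F : ι → ℝ) : avg X L F = (∑ a, X a * F a) / L := by
  simp only [avg, Finset.sum_div]; exact Finset.sum_congr rfl fun a _ => by ring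

namespace Good
variable {m w0 g L : ℝ} {c : ι} {w Z W X : ι → ℝ} {M : ι → ι → ℝ}
variable (h : Good m w0 g L c w Z W X M)
include h

lemma const (r : ℝ) : avg X L (fun _ => r) = r := by
  rw [avg_eq, ← Finset.sum_mul, h.Xsum]; field_simp [h.Lpos.ne']

lemma mono {F G : ι → ℝ} (hFG : ∀ a, F a ≤ G a) : avg X L F ≤ avg X L G :=
  Finset.sum_le_sum fun a _ => mul_le_mul_of_nonneg_left (hFG a) (div_nonneg (h.Xnn a) h.Lpos.le)

lemma Wnn (i : ι) : 0 ≤ W i := by rw [h.WZ]; exact add_nonneg (h.wnn i) (h.Znn i)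
lemma Wle (i : ι) : W i ≤ w0 + Z i := by rw [h.WZ]; linarith [h.wle i]
lemma Xle (i : ι) : X i ≤ W i := by
  by_cases hi : i = c
  · rw [hi, h.Xc]; linarith [h.gnn]
  · rcases h.Xo i hi with h1 | h1
    · exact h1.le
    · rw [h1.1]; exact h.Wnn i
lemma Wc : W c ≤ w0 + m := by linarith [h.Wle c, h.Zc]
lemma XM {i : ι} (hi : i ≠ c) (j : ι) : X i * M i j = W i * M i j := by
  rcases h.Xo i hi with h1 | h1
  · rw [h1]
  · rw [h1.2.2 j]; simp
lemma ynn (i : ι) : 0 ≤ yy M W i :=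
  Finset.sum_nonneg fun j _ => mul_nonneg (h.Mnn i j) (h.Wnn j)
lemma Xy {i : ι} (hi : i ≠ c) : X i * yy M W i = W i * yy M W i := by
  unfold yy; rw [Finset.mul_sum, Finset.mul_sum]
  exact Finset.sum_congr rfl fun j _ => by rw [← mul_assoc, h.XM hi, mul_assoc]
lemma Pnn : 0 ≤ PP M W := Finset.sum_nonneg fun i _ => mul_nonneg (h.Wnn i) (h.ynn i)
lemma Rnn : 0 ≤ RR M W := Finset.sum_nonneg fun i _ => mul_nonneg (h.Wnn i) (sq_nonneg _)
lemma znn (i : ι) : 0 ≤ yy M W i - M i c * W c := by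
  have := Finset.single_le_sum (f := fun j => M i j * W j) (s := Finset.univ)
    (fun j _ => mul_nonneg (h.Mnn i j) (h.Wnn j)) (Finset.mem_univ c)
  unfold yy; linarith
lemma Vnn : 0 ≤ VV M W c := Finset.sum_nonneg fun i _ => mul_nonneg (h.Mnn c i) (h.znn i)
lemma NNnn : 0 ≤ NN M := by
  unfold NN
  refine div_nonneg (Finset.sum_nonneg fun a _ => Finset.sum_nonneg fun b _ => Finset.sum_nonneg fun d _ => ?_) (by norm_num)
  exact mul_nonneg (mul_nonneg (h.Mnn _ _) (h.Mnn _ _)) (h.Mnn _ _)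
lemma dnn (a : ι) : 0 ≤ ∑ b, M c b * M b a :=
  Finset.sum_nonneg fun b _ => mul_nonneg (h.Mnn _ _) (h.Mnn _ _)
lemma dle (a : ι) : ∑ b, M c b * M b a ≤ m ^ 2 := by
  calc ∑ b, M c b * M b a ≤ ∑ b, M c b * m :=
        Finset.sum_le_sum fun b _ => mul_le_mul_of_nonneg_left (h.Mle _ _) (h.Mnn _ _)
    _ = (∑ b, M c b) * m := by rw [Finset.sum_mul]
    _ ≤ m * m := mul_le_mul_of_nonneg_right h.Mrow (by linarith [h.m1])
    _ = m ^ 2 := by ring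

lemma avgW : avg X L W = ((∑ i, (W i ^ 2 - w i ^ 2)) - g * Z c + ∑ i, w i * (X i - Z i)) / L := by
  rw [avg_eq]; congr 1
  have : ∀ i, X i * W i = (W i ^ 2 - w i ^ 2) + w i * (X i - Z i) - ind c i * (g * Z i) := by
    intro i
    by_cases hi : i = c
    · subst hi; rw [ind_self, h.Xc, h.WZ]; ring
    · rw [ind_ne hi]
      rcases h.Xo i hi with h1 | ⟨h1, h2, -⟩
      · rw [h1, h.WZ]; ring
      · rw [h1, h.WZ, h2]; ring
  simp only [this, Finset.sum_sub_distrib, Finset.sum_add_distrib, sum_ind]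
  ring

lemma avgy : avg X L (yy M W) = (PP M W - g * yy M W c) / L := by
  rw [avg_eq]; congr 1
  have : ∀ i, X i * yy M W i = W i * yy M W i - ind c i * (g * yy M W i) := by
    intro i
    by_cases hi : i = c
    · subst hi; rw [ind_self, h.Xc]; ring
    · rw [ind_ne hi, h.Xy hi]; ring
  simp only [this, Finset.sum_sub_distrib, sum_ind]; rfl

lemma avgz : avg X L (fun a => if a = c then 0 else yy M W a - M a c * W c)
    = (PP M W - 2 * W c * yy M W c) / L := by
  rw [avg_eq]; congr 1
  have : ∀ i, X i * (if i = c then 0 else yy M W i - M i c * W c)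
      = W i * yy M W i - ind c i * (W i * yy M W i) - (M c i * W i) * W c := by
    intro i
    by_cases hi : i = c
    · subst hi; rw [ind_self, if_pos rfl, h.Md]; ring
    · rw [ind_ne hi, if_neg hi, mul_sub, h.Xy hi, h.Ms c i, ← mul_assoc, h.XM hi]; ring
  simp only [this, Finset.sum_sub_distrib, sum_ind, ← Finset.sum_mul]
  unfold PP; rw [show ∑ i, M c i * W i = yy M W c from rfl]; ring

lemma avgd : avg X L (fun a => if a = c then 0 else ∑ b, M c b * M b a) = VV M W c / L := by
  rw [avg_eq]; congr 1
  have : ∀ i, X i * (if i = c then 0 else ∑ b, M c b * M b i)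
      = (∑ b, M c b * (M b i * W i)) - ind c i * (∑ b, M c b * (M b i * W i)) := by
    intro i
    by_cases hi : i = c
    · subst hi; rw [ind_self, if_pos rfl]; ring
    · rw [ind_ne hi, if_neg hi, Finset.mul_sum, zero_mul, sub_zero]
      refine Finset.sum_congr rfl fun b _ => ?_
      have := h.XM hi b
      rw [h.Ms b i]; linear_combination (M c b) * this
  simp only [this, Finset.sum_sub_distrib, sum_ind]
  rw [Finset.sum_comm]
  unfold VV
  rw [← Finset.sum_sub_distrib]
  refine Finset.sum_congr rfl fun b _ => ?_
  rw [← Finset.mul_sum, ← mul_sub]; rfl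

/-- averages of squares of y -/
lemma avgy2 : avg X L (fun a => yy M W a ^ 2) ≤ RR M W / L := by
  rw [avg_eq]
  exact div_le_div_of_nonneg_right (Finset.sum_le_sum fun i _ =>
    mul_le_mul_of_nonneg_right (h.Xle i) (sq_nonneg _)) h.Lpos.le

lemma avgy_le : avg X L (yy M W) ≤ PP M W / L := by
  rw [h.avgy]
  exact div_le_div_of_nonneg_right (by nlinarith [h.gnn, h.ynn c]) h.Lpos.le

lemma avgW2 : avg X L (fun a => (1 + W a) ^ 2) ≤
    (2 * (1 + w0) ^ 2 + 2 * w0) * (1 + (∑ i, Z i ^ 3) / L) := by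
  have hT : 0 ≤ ∑ i, Z i ^ 3 := Finset.sum_nonneg fun i _ => pow_nonneg (h.Znn i) 3
  have hL := h.Lpos
  rw [avg_eq, div_le_iff₀ hL]
  have e : (2 * (1 + w0) ^ 2 + 2 * w0) * (1 + (∑ i, Z i ^ 3) / L) * L =
     (2 * (1 + w0) ^ 2 + 2 * w0) * (L + (∑ i, Z i ^ 3)) := by field_simp
  rw [e]
  have h1 : ∀ i, X i * (1 + W i) ^ 2 ≤ 2 * (1 + w0) ^ 2 * X i + 2 * w0 * Z i + 2 * (1 + w0) * Z i ^ 3 := by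
    intro i
    have a1 := h.Wle i
    have a2 := h.Wnn i
    have a3 := h.Xle i
    have a4 := h.Xnn i
    have a5 := h.Znn i
    have a6 := h.w0nn
    have b1 : (1 + W i) ^ 2 ≤ 2 * (1 + w0) ^ 2 + 2 * Z i ^ 2 := by nlinarith [sq_nonneg (1 + w0 - Z i)]
    have b2 : X i * Z i ^ 2 ≤ (w0 + Z i) * Z i ^ 2 := mul_le_mul_of_nonneg_right (by linarith) (sq_nonneg _)
    have b3 : Z i ^ 2 ≤ Z i + Z i ^ 3 := by nlinarith [mul_nonneg a5 (sq_nonneg (Z i - 1)), pow_nonneg a5 3]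
    have b4 := mul_le_mul_of_nonneg_left b1 a4
    have b5 := mul_le_mul_of_nonneg_left b3 a6
    nlinarith
  calc ∑ i, X i * (1 + W i) ^ 2 ≤ ∑ i, (2 * (1 + w0) ^ 2 * X i + 2 * w0 * Z i + 2 * (1 + w0) * Z i ^ 3) :=
        Finset.sum_le_sum fun i _ => h1 i
    _ = 2 * (1 + w0) ^ 2 * L + 2 * w0 * (∑ i, Z i) + 2 * (1 + w0) * ∑ i, Z i ^ 3 := by
        simp only [Finset.sum_add_distrib, ← Finset.mul_sum, h.Xsum]
    _ ≤ _ := by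
        have b1 := mul_le_mul_of_nonneg_left h.Zsum h.w0nn
        have b2 : 0 ≤ (w0 + w0 ^ 2 + w0) * ∑ i, Z i ^ 3 := mul_nonneg (by nlinarith [h.w0nn]) hT
        nlinarith

lemma stepT : avg X L (fun a => ∑ i, stepZ Z a i ^ 3) ≤
    (1 + 4 / L) * (∑ i, Z i ^ 3) + ((3 * w0 + 3) ^ 2 / 4 + 3 * w0 + 1) := by
  have hL := h.Lpos
  have e : ∀ a, ∑ i, stepZ Z a i ^ 3 = (∑ i, Z i ^ 3) + (3 * Z a ^ 2 + 3 * Z a + 1) := by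
    intro a
    have : ∀ i, stepZ Z a i ^ 3 = Z i ^ 3 + ind a i * (3 * Z i ^ 2 + 3 * Z i + 1) := by
      intro i; unfold stepZ ind; split_ifs <;> ring
    simp only [this, Finset.sum_add_distrib, sum_ind]
  simp only [e]
  rw [avg_add, h.const]
  have h1 : avg X L (fun a => 3 * Z a ^ 2 + 3 * Z a + 1) ≤
     (4 * (∑ i, Z i ^ 3) + ((3 * w0 + 3) ^ 2 / 4 + 3 * w0 + 1) * L) / L := by
    rw [avg_eq]
    refine div_le_div_of_nonneg_right ?_ hL.le
    have h1 : ∀ i, X i * (3 * Z i ^ 2 + 3 * Z i + 1) ≤ X i + 4 * Z i ^ 3 + ((3 * w0 + 3) ^ 2 / 4 + 3 * w0) * Z i := by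
      intro i
      have a1 := h.Wle i
      have a3 := h.Xle i
      have a5 := h.Znn i
      have b2 : X i * (3 * Z i ^ 2 + 3 * Z i) ≤ (w0 + Z i) * (3 * Z i ^ 2 + 3 * Z i) :=
        mul_le_mul_of_nonneg_right (by linarith) (by positivity)
      nlinarith [mul_nonneg a5 (sq_nonneg (Z i - (3 * w0 + 3) / 2))]
    calc _ ≤ ∑ i, (X i + 4 * Z i ^ 3 + ((3 * w0 + 3) ^ 2 / 4 + 3 * w0) * Z i) := Finset.sum_le_sum fun i _ => h1 i
      _ = L + 4 * (∑ i, Z i ^ 3) + ((3 * w0 + 3) ^ 2 / 4 + 3 * w0) * ∑ i, Z i := by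
        simp only [Finset.sum_add_distrib, ← Finset.mul_sum, h.Xsum]
      _ ≤ _ := by
        have : 0 ≤ (3 * w0 + 3) ^ 2 / 4 + 3 * w0 := by have := h.w0nn; positivity
        nlinarith [mul_le_mul_of_nonneg_left h.Zsum this]
  have e2 : (4 * (∑ i, Z i ^ 3) + ((3 * w0 + 3) ^ 2 / 4 + 3 * w0 + 1) * L) / L
     = 4 / L * (∑ i, Z i ^ 3) + ((3 * w0 + 3) ^ 2 / 4 + 3 * w0 + 1) := by field_simp
  rw [e2] at h1
  linarith

lemma stepN : avg X L (fun a => NN (stepM M c a)) = NN M + VV M W c / L := by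
  simp only [NN_step M c _ h.Ms h.Md]
  rw [avg_add, h.const, h.avgd]

lemma stepV : avg X L (fun a => VV (stepM M c a) (stepZ W a) c)
    = (1 + 1 / L) * VV M W c + (PP M W - 2 * W c * yy M W c) / L := by
  simp only [VV_step M W c _ h.Ms h.Md]
  rw [avg_add, h.const]
  have : (fun a => if a = c then 0 else ((∑ b, M c b * M b a) + (yy M W a - M a c * W c))) =
    fun a => (if a = c then 0 else ∑ b, M c b * M b a) + (if a = c then 0 else yy M W a - M a c * W c) := by
    funext a; split_ifs <;> simp
  rw [this, avg_add, h.avgd, h.avgz]; ring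

lemma stepP : avg X L (fun a => PP (stepM M c a) (stepZ W a))
    = (1 + 2 / L) * PP M W - 2 * g * yy M W c / L + 2 * W c * (avg X L W + 1) - 2 * W c * (X c * (W c + 1)) / L := by
  simp only [PP_step M W c _ h.Ms h.Md]
  rw [avg_add, avg_add, h.const, avg_mul, h.avgy]
  have : avg X L (fun a => if a = c then 0 else 2 * (W a + 1) * W c) = 
     2 * W c * (avg X L W + 1) - 2 * W c * (X c * (W c + 1)) / L := by
    have e : (fun a => if a = c then 0 else 2 * (W a + 1) * W c) = 
      fun a => 2 * W c * (W a + 1) - ind c a * (2 * W c * (W a + 1)) := by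
      funext a; unfold ind; split_ifs <;> ring
    rw [e, avg_sub, avg_mul, avg_add, h.const]
    congr 1
    rw [avg_eq]; congr 1
    rw [show X c * (W c + 1) = ∑ i, ind c i * (X i * (W i + 1)) by rw [sum_ind], Finset.mul_sum]
    refine Finset.sum_congr rfl fun i _ => ?_
    by_cases hi : i = c
    · subst hi; ring
    · rw [ind_ne hi]; ring
  rw [this]; ring

lemma stepy2 : avg X L (fun a => yy (stepM M c a) (stepZ W a) c ^ 2) ≤
    2 * yy M W c ^ 2 + 2 * (m + 1) ^ 2 * avg X L (fun a => (1 + W a) ^ 2) := by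
  rw [← h.const (2 * yy M W c ^ 2), ← avg_mul, ← avg_add]
  refine h.mono fun a => ?_
  rw [yy_step]
  have a1 := h.ynn c
  have a2 := h.Mle c a
  have a3 := h.Mnn c a
  have a4 := h.Wnn a
  have a5 := h.m1
  set u := M c a + (if a = c then 0 else (ind a c * W c + ind c c * (W a + 1))) with hu
  have u0 : 0 ≤ u := by
    rw [hu]; split_ifs with q
    · linarith
    · rw [ind_ne (Ne.symm q), ind_self]; linarith
  have u1 : u ≤ (m + 1) * (1 + W a) := by
    rw [hu]; split_ifs with q
    · nlinarith
    · rw [ind_ne (Ne.symm q), ind_self]; nlinarith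
  rw [add_assoc, ← hu]
  have : u ^ 2 ≤ ((m + 1) * (1 + W a)) ^ 2 := pow_le_pow_left₀ u0 u1 2
  nlinarith [sq_nonneg (yy M W c - u)]

lemma stepP2 {β : ℝ} (hβ : 0 < β) : avg X L (fun a => PP (stepM M c a) (stepZ W a) ^ 2) ≤
    (1 + (4 + β) / L) * PP M W ^ 2 + 4 * (w0 + m) ^ 2 / β * (L * (avg X L W + 1) ^ 2) + 8 * (RR M W / L)
      + 8 * (w0 + m) ^ 2 * avg X L (fun a => (1 + W a) ^ 2) := by
  have hL := h.Lpos
  have hP := h.Pnn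
  have hC : 0 ≤ w0 + m := by linarith [h.w0nn, h.m1]
  have hb : ∀ a, PP (stepM M c a) (stepZ W a) ^ 2 ≤ PP M W ^ 2 + (2 * PP M W) * (2 * yy M W a + 2 * (w0 + m) * (W a + 1))
     + (8 * yy M W a ^ 2 + 8 * (w0 + m) ^ 2 * (1 + W a) ^ 2) := by
    intro a
    rw [PP_step M W c a h.Ms h.Md]
    have a1 := h.ynn a
    have a4 := h.Wnn a
    set u := 2 * yy M W a + (if a = c then 0 else 2 * (W a + 1) * W c) with hu
    have u0 : 0 ≤ u := by
      rw [hu]; have := h.Wnn c; split_ifs <;> positivity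
    have u1 : u ≤ 2 * yy M W a + 2 * (w0 + m) * (W a + 1) := by
      rw [hu]; have := h.Wc; have := h.Wnn c; split_ifs 
      · have : 0 ≤ 2 * (w0 + m) * (W a + 1) := by positivity
        linarith
      · nlinarith
    rw [add_assoc, ← hu]
    have : u ^ 2 ≤ (2 * yy M W a + 2 * (w0 + m) * (W a + 1)) ^ 2 := pow_le_pow_left₀ u0 u1 2
    nlinarith [sq_nonneg (2 * yy M W a - 2 * (w0 + m) * (W a + 1)), mul_le_mul_of_nonneg_left u1 hP]
  have h1 := h.mono hb
  rw [avg_add, avg_add, h.const, avg_mul, avg_add, avg_add, avg_mul, avg_mul, avg_mul, avg_mul, avg_add, h.const] at h1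
  have h2 := h.avgy_le
  have h3 := h.avgy2
  set A := avg X L W + 1 with hA
  have h4 : 2 * PP M W * (2 * (w0 + m) * A) ≤ β / L * PP M W ^ 2 + 4 * (w0 + m) ^ 2 / β * (L * A ^ 2) := by
    have : 0 ≤ (β * PP M W - 2 * (w0 + m) * (L * A)) ^ 2 / (β * L) := by positivity
    have e : (β * PP M W - 2 * (w0 + m) * (L * A)) ^ 2 / (β * L) = β / L * PP M W ^ 2 + 4 * (w0 + m) ^ 2 / β * (L * A ^ 2) -
      2 * PP M W * (2 * (w0 + m) * A) := by field_simp; ring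
    linarith
  have h5 : 2 * PP M W * (2 * avg X L (yy M W)) ≤ 4 / L * PP M W ^ 2 := by
    calc 2 * PP M W * (2 * avg X L (yy M W)) ≤ 2 * PP M W * (2 * (PP M W / L)) := by gcongr
      _ = _ := by ring
  have e1 : (1 + (4 + β) / L) * PP M W ^ 2 = PP M W ^ 2 + 4 / L * PP M W ^ 2 + β / L * PP M W ^ 2 := by ring
  rw [e1]
  nlinarith

lemma stepV2 : avg X L (fun a => VV (stepM M c a) (stepZ W a) c ^ 2) ≤
    2 * VV M W c ^ 2 + 4 * m ^ 4 + 4 * (RR M W / L) := by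
  have hb : ∀ a, VV (stepM M c a) (stepZ W a) c ^ 2 ≤ (2 * VV M W c ^ 2 + 4 * m ^ 4) + 4 * yy M W a ^ 2 := by
    intro a
    rw [VV_step M W c a h.Ms h.Md]
    have a1 := h.ynn a
    have a2 := h.znn a
    have a3 := h.dnn a
    have a4 := h.dle a
    have a5 := h.Vnn
    have a6 := mul_nonneg (h.Mnn a c) (h.Wnn c)
    set u := (if a = c then 0 else ((∑ b, M c b * M b a) + (yy M W a - M a c * W c))) with hu
    have u0 : 0 ≤ u := by rw [hu]; split_ifs <;> linarith
    have u1 : u ≤ m ^ 2 + yy M W a := by rw [hu]; split_ifs <;> nlinarith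
    have : u ^ 2 ≤ (m ^ 2 + yy M W a) ^ 2 := pow_le_pow_left₀ u0 u1 2
    nlinarith [sq_nonneg (VV M W c - u), sq_nonneg (m ^ 2 - yy M W a)]
  have h1 := h.mono hb
  rw [avg_add, avg_mul, h.const] at h1
  linarith [h.avgy2]

lemma stepN2 : avg X L (fun a => NN (stepM M c a) ^ 2) ≤
    NN M ^ 2 + 2 * (NN M * VV M W c) / L + m ^ 2 * (VV M W c / L) := by
  have hb : ∀ a, NN (stepM M c a) ^ 2 ≤ NN M ^ 2 + (2 * NN M + m ^ 2) * (if a = c then 0 else ∑ b, M c b * M b a) := by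
    intro a
    rw [NN_step M c a h.Ms h.Md]
    have a3 := h.dnn a
    have a4 := h.dle a
    split_ifs
    · simp
    · nlinarith
  have h1 := h.mono hb
  rw [avg_add, avg_mul, h.const, h.avgd] at h1
  refine h1.trans (le_of_eq ?_); ring

lemma stepNV : avg X L (fun a => NN (stepM M c a) * VV (stepM M c a) (stepZ W a) c) ≤
    (1 + 1 / L) * (NN M * VV M W c) + NN M * PP M W / L + VV M W c ^ 2 / L
      + m ^ 2 * ((VV M W c + PP M W) / L) := by
  have hb : ∀ a, NN (stepM M c a) * VV (stepM M c a) (stepZ W a) c ≤ NN M * VV M W c +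
     ((NN M + m ^ 2 + VV M W c) * (if a = c then 0 else ∑ b, M c b * M b a)
      + (NN M + m ^ 2) * (if a = c then 0 else yy M W a - M a c * W c)) := by
    intro a
    rw [NN_step M c a h.Ms h.Md, VV_step M W c a h.Ms h.Md]
    have a2 := h.znn a
    have a3 := h.dnn a
    have a4 := h.dle a
    split_ifs
    · simp
    · nlinarith [mul_le_mul_of_nonneg_right a4 (add_nonneg a3 a2)]
  have h1 := h.mono hb
  rw [avg_add, avg_add, avg_mul X L (NN M + m ^ 2 + VV M W c), avg_mul X L (NN M + m ^ 2), h.const, h.avgd, h.avgz] at h1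
  have h2 : (PP M W - 2 * W c * yy M W c) / L ≤ PP M W / L :=
    div_le_div_of_nonneg_right (by nlinarith [h.Wnn c, h.ynn c, mul_nonneg (h.Wnn c) (h.ynn c)]) h.Lpos.le
  have h3 : 0 ≤ NN M + m ^ 2 := by nlinarith [h.NNnn, sq_nonneg m]
  have h4 := mul_le_mul_of_nonneg_left h2 h3
  have e : (1 + 1 / L) * (NN M * VV M W c) + NN M * PP M W / L + VV M W c ^ 2 / L
      + m ^ 2 * ((VV M W c + PP M W) / L) = NN M * VV M W c + ((NN M + m ^ 2 + VV M W c) * (VV M W c / L) + (NN M + m ^ 2) * (PP M W / L)) := by ring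
  rw [e]; linarith

lemma step_y_le (a i : ι) : yy (stepM M c a) (stepZ W a) i ^ 2 ≤
    yy M W i ^ 2 + (2 * yy M W i * M i a + m * M i a) + ind a i * (2 * (w0 + m) * yy M W a + (w0 + m) ^ 2)
      + ind c i * (yy M W c ^ 2 + 2 * ((m + 1) * (1 + W a)) ^ 2) := by
  rw [yy_step]
  have a1 := h.ynn i
  have a2 := h.Mle i a
  have a3 := h.Mnn i a
  have a4 := h.Wnn a
  have a5 := h.Wnn c
  have a6 := h.Wc
  have a7 := h.m1
  have a8 := h.w0nn
  by_cases hac : a = c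
  · rw [if_pos hac]
    have b1 : 0 ≤ ind a i * (2 * (w0 + m) * yy M W a + (w0 + m) ^ 2) :=
      mul_nonneg (ind_nonneg _ _) (by have := h.ynn a; positivity)
    have b2 : 0 ≤ ind c i * (yy M W c ^ 2 + 2 * ((m + 1) * (1 + W a)) ^ 2) :=
      mul_nonneg (ind_nonneg _ _) (by positivity)
    nlinarith
  · rw [if_neg hac]
    by_cases hia : i = a
    · subst hia
      rw [ind_self, ind_ne hac, h.Md]
      nlinarith
    · rw [ind_ne hia]
      by_cases hic : i = c
      · subst hic
        rw [ind_self]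
        have u1 : M i a + (W a + 1) ≤ (m + 1) * (1 + W a) := by nlinarith
        have := pow_le_pow_left₀ (by positivity : 0 ≤ M i a + (W a + 1)) u1 2
        nlinarith [sq_nonneg (yy M W i - (M i a + (W a + 1))), mul_nonneg a1 a3]
      · rw [ind_ne hic]; nlinarith

lemma stepR : avg X L (fun a => RR (stepM M c a) (stepZ W a)) ≤
    (1 + 4 / L) * RR M W + ((m + 2 * (w0 + m)) ^ 2 / 4 + (w0 + m) ^ 2 + 2 * (w0 + m + 1) * (m + 1) ^ 2) *
      avg X L (fun a => (1 + W a) ^ 2) + (w0 + m + 1) * yy M W c ^ 2 := by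
  set C := w0 + m with hC
  have hm := h.m1
  have hw := h.w0nn
  have C0 : 0 ≤ C := by linarith
  have hb : ∀ a, RR (stepM M c a) (stepZ W a) ≤ (RR M W + (C + 1) * yy M W c ^ 2) +
      (2 * (∑ i, W i * (yy M W i * M i a)) + (2 * yy M W a ^ 2 + ((m + 2 * C) ^ 2 / 4 + C ^ 2 + 2 * (C + 1) * (m + 1) ^ 2) * (1 + W a) ^ 2)) := by
    intro a
    have a1 := h.ynn a
    have a4 := h.Wnn a
    have q1 : ∑ i, W i * M i a = yy M W a := by
      unfold yy; exact Finset.sum_congr rfl fun i _ => by rw [h.Ms i a]; ring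
    have q2 : RR (stepM M c a) (stepZ W a) = (∑ i, W i * yy (stepM M c a) (stepZ W a) i ^ 2) + yy (stepM M c a) (stepZ W a) a ^ 2 := by
      unfold RR
      simp only [stepZ, add_mul, Finset.sum_add_distrib, sum_ind]
    have q3 : ∑ i, W i * yy (stepM M c a) (stepZ W a) i ^ 2 ≤ RR M W + (2 * (∑ i, W i * (yy M W i * M i a)) + m * yy M W a)
       + W a * (2 * C * yy M W a + C ^ 2) + W c * (yy M W c ^ 2 + 2 * ((m + 1) * (1 + W a)) ^ 2) := by
      calc _ ≤ ∑ i, W i * (yy M W i ^ 2 + (2 * yy M W i * M i a + m * M i a) + ind a i * (2 * C * yy M W a + C ^ 2)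
      + ind c i * (yy M W c ^ 2 + 2 * ((m + 1) * (1 + W a)) ^ 2)) :=
            Finset.sum_le_sum fun i _ => mul_le_mul_of_nonneg_left (h.step_y_le a i) (h.Wnn i)
        _ = ∑ i, (W i * yy M W i ^ 2 + 2 * (W i * (yy M W i * M i a)) + m * (W i * M i a) + ind a i * (W i * (2 * C * yy M W a + C ^ 2))
          + ind c i * (W i * (yy M W c ^ 2 + 2 * ((m + 1) * (1 + W a)) ^ 2))) := Finset.sum_congr rfl fun i _ => by ring
        _ = _ := by
          simp only [Finset.sum_add_distrib, ← Finset.mul_sum, sum_ind, q1]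
          unfold RR; ring
    have q4 := h.step_y_le a a
    rw [h.Md, ind_self] at q4
    have q5 : ind c a * (yy M W c ^ 2 + 2 * ((m + 1) * (1 + W a)) ^ 2) ≤ 1 * (yy M W c ^ 2 + 2 * ((m + 1) * (1 + W a)) ^ 2) := by
      refine mul_le_mul_of_nonneg_right ?_ (by positivity)
      unfold ind; split_ifs <;> norm_num
    have q6 : W c * (yy M W c ^ 2 + 2 * ((m + 1) * (1 + W a)) ^ 2) ≤ C * (yy M W c ^ 2 + 2 * ((m + 1) * (1 + W a)) ^ 2) :=
      mul_le_mul_of_nonneg_right h.Wc (by positivity)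
    have q7 : (m + 2 * C * (1 + W a)) * yy M W a ≤ yy M W a ^ 2 + (m + 2 * C) ^ 2 / 4 * (1 + W a) ^ 2 := by
      have : (m + 2 * C * (1 + W a)) * yy M W a ≤ ((m + 2 * C) * (1 + W a)) * yy M W a :=
        mul_le_mul_of_nonneg_right (by nlinarith) a1
      nlinarith [sq_nonneg (yy M W a - (m + 2 * C) * (1 + W a) / 2)]
    have q8 : C ^ 2 * (1 + W a) ≤ C ^ 2 * (1 + W a) ^ 2 := mul_le_mul_of_nonneg_left (by nlinarith) (sq_nonneg _)
    rw [q2]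
    rw [← hC] at q4
    nlinarith
  have h1 := h.mono hb
  rw [avg_add, avg_add X L (fun a => 2 * _), avg_mul X L 2, avg_add X L (fun a => 2 * yy M W a ^ 2), avg_mul X L 2, avg_mul, h.const] at h1
  have h2 : avg X L (fun a => ∑ i, W i * (yy M W i * M i a)) ≤ RR M W / L := by
    rw [avg_eq]
    refine div_le_div_of_nonneg_right ?_ h.Lpos.le
    calc ∑ a, X a * ∑ i, W i * (yy M W i * M i a) ≤ ∑ a, W a * ∑ i, W i * (yy M W i * M i a) :=
          Finset.sum_le_sum fun a _ => mul_le_mul_of_nonneg_right (h.Xle a)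
            (Finset.sum_nonneg fun i _ => mul_nonneg (h.Wnn i) (mul_nonneg (h.ynn i) (h.Mnn i a)))
      _ = ∑ i, ∑ a, W i * yy M W i * (M i a * W a) := by
          simp only [Finset.mul_sum]
          rw [Finset.sum_comm]
          exact Finset.sum_congr rfl fun i _ => Finset.sum_congr rfl fun a _ => by ring
      _ = RR M W := by
          unfold RR
          refine Finset.sum_congr rfl fun i _ => ?_
          rw [← Finset.mul_sum]; change _ * yy M W i = _; ring
  have h3 := h.avgy2
  have e : (1 + 4 / L) * RR M W = RR M W + 2 * (RR M W / L) + 2 * (RR M W / L) := by ring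
  rw [e]; linarith

lemma avgW_eq_S : avg X L (fun a => ∑ i, (stepZ W a i ^ 2 - w i ^ 2)) = (∑ i, (W i ^ 2 - w i ^ 2)) + 2 * avg X L W + 1 := by
  have e : ∀ a, ∑ i, (stepZ W a i ^ 2 - w i ^ 2) = (∑ i, (W i ^ 2 - w i ^ 2)) + 2 * W a + 1 := by
    intro a
    have : ∀ i, stepZ W a i ^ 2 - w i ^ 2 = (W i ^ 2 - w i ^ 2) + ind a i * (2 * W i + 1) := by
      intro i; unfold stepZ ind; split_ifs <;> ring
    simp only [this, Finset.sum_add_distrib, sum_ind]; ring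
  simp only [e]
  rw [avg_add, avg_add, h.const, h.const, avg_mul]

/-- second moment of `G = S - s` with new centering `s'` -/
lemma stepG2 (G δ : ℝ) : avg X L (fun a => (G + (2 * W a + 1 - δ)) ^ 2) ≤
    G ^ 2 + 2 * G * (2 * avg X L W + 1 - δ) + (8 * avg X L (fun a => (1 + W a) ^ 2) + 2 * (1 + δ) ^ 2) := by
  have hb : ∀ a, (G + (2 * W a + 1 - δ)) ^ 2 ≤ (G ^ 2 + 2 * G * (1 - δ) + 2 * (1 + δ) ^ 2) + 4 * G * W a + 8 * (1 + W a) ^ 2 := by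
    intro a
    nlinarith [sq_nonneg (2 * (1 + W a) + (1 + δ))]
  have h1 := h.mono hb
  rw [avg_add, avg_add, h.const, avg_mul, avg_mul] at h1
  linarith
end Good
end avgs


section analysis

noncomputable def Lt (β : ℝ) (t : ℕ) : ℝ := (2 + β) * t - 2

lemma Lt_pos {β : ℝ} (hβ : 0 < β) {t : ℕ} (ht : 1 ≤ t) : 0 < Lt β t := by
  have : (1:ℝ) ≤ t := by exact_mod_cast ht
  unfold Lt; nlinarith

/-- lower bound for `L` -/
lemma Lt_ge {β : ℝ} (hβ : 0 < β) {t : ℕ} (ht : 1 ≤ t) : min 1 β * t ≤ Lt β t := by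
  have h1 : (1:ℝ) ≤ t := by exact_mod_cast ht
  have h2 : min 1 β ≤ β := min_le_right _ _
  have h3 : min 1 β ≤ 1 := min_le_left _ _
  unfold Lt
  rcases eq_or_lt_of_le ht with h | h
  · rw [← h]; push_cast; linarith
  · have : (2:ℝ) ≤ t := by exact_mod_cast h
    nlinarith

lemma Lt_le {β : ℝ} (hβ : 0 < β) (t : ℕ) : Lt β t ≤ (2 + β) * t := by
  unfold Lt; linarith

lemma tendsto_tL {β : ℝ} (hβ : 0 < β) :
    Filter.Tendsto (fun t : ℕ => (t:ℝ) / Lt β t) Filter.atTop (nhds (1 / (2 + β))) := by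
  have h1 : Filter.Tendsto (fun t : ℕ => (2 + β) - 2 / (t:ℝ)) Filter.atTop (nhds ((2 + β) - 0)) :=
    tendsto_const_nhds.sub (tendsto_const_div_atTop_nhds_zero_nat 2)
  have h2 := h1.inv₀ (by linarith)
  rw [sub_zero, ← one_div] at h2
  refine h2.congr' ?_
  filter_upwards [Filter.eventually_ge_atTop 1] with t ht
  have := (Lt_pos hβ ht).ne'
  have h3 : (t:ℝ) ≠ 0 := by positivity
  have e : (2 + β) - 2 / (t:ℝ) = Lt β t / t := by unfold Lt; field_simp
  rw [e, inv_div]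

lemma rpow_succ_ge {ρ : ℝ} (hρ : 0 < ρ) {t : ℕ} (ht : 1 ≤ t) :
    (t:ℝ) ^ ρ * (1 + ρ / (t + 1)) ≤ ((t + 1 : ℕ) : ℝ) ^ ρ := by
  have h0 : (0:ℝ) < t := by exact_mod_cast ht
  have e : ((t + 1 : ℕ) : ℝ) = t * (1 + 1 / t) := by push_cast; field_simp
  rw [e, Real.mul_rpow h0.le (by positivity)]
  refine mul_le_mul_of_nonneg_left ?_ (by positivity)
  rw [Real.rpow_def_of_pos (by positivity)]
  refine le_trans ?_ (Real.add_one_le_exp _)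
  have h1 : 1 / ((t:ℝ) + 1) ≤ Real.log (1 + 1 / t) := by
    have := Real.one_sub_inv_le_log_of_pos (by positivity : 0 < 1 + 1 / (t:ℝ))
    refine le_trans (le_of_eq ?_) this
    field_simp; ring
  have h2 := mul_le_mul_of_nonneg_right h1 hρ.le
  have e2 : ρ / ((t:ℝ) + 1) = 1 / ((t:ℝ) + 1) * ρ := by ring
  linarith

lemma growth {β : ℝ} (hβ : 0 < β) {q C ρ : ℝ} (U : ℝ) (hq0 : 0 ≤ q) (hC : 0 ≤ C) (hρ : 0 < ρ)
    (hq : q / (2 + β) < ρ) :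
    ∃ K : ℝ, 0 ≤ K ∧ ∀ (T : ℕ) (u : ℕ → ℝ), u 1 ≤ U →
      (∀ t, 1 ≤ t → t < T → u (t + 1) ≤ (1 + q / Lt β t + C / Lt β t ^ 2) * u t + C * (t:ℝ) ^ (ρ - 1)) →
      ∀ t, 1 ≤ t → t ≤ T → u t ≤ K * (t:ℝ) ^ ρ := by
  set d := (ρ - q / (2 + β)) / 2 with hd
  have d0 : 0 < d := by rw [hd]; linarith
  have lim : Filter.Tendsto (fun t : ℕ => ρ * ((t:ℝ) / (t + 1)) - (q * ((t:ℝ) / Lt β t) + C * (((t:ℝ) / Lt β t) * ((t:ℝ) / Lt β t) * (1 / (t:ℝ)))))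
      Filter.atTop (nhds (ρ * 1 - (q * (1 / (2 + β)) + C * ((1 / (2 + β)) * (1 / (2 + β)) * 0)))) := by
    have a1 := tendsto_tL hβ
    have a2 : Filter.Tendsto (fun t : ℕ => (t:ℝ) / (t + 1)) Filter.atTop (nhds 1) :=
      tendsto_natCast_div_add_atTop 1
    have a3 : Filter.Tendsto (fun t : ℕ => 1 / (t:ℝ)) Filter.atTop (nhds 0) := tendsto_const_div_atTop_nhds_zero_nat 1
    exact (a2.const_mul ρ).sub ((a1.const_mul q).add (((a1.mul a1).mul a3).const_mul C))
  have ev := lim.eventually_const_lt (u := d) (by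
    have : ρ * 1 - (q * (1 / (2 + β)) + C * ((1 / (2 + β)) * (1 / (2 + β)) * 0)) = 2 * d := by
      rw [hd]; ring
    rw [this]; linarith)
  obtain ⟨t0, ht0⟩ := Filter.eventually_atTop.mp ev
  have small : ∀ s : ℕ, ∃ A : ℝ, 0 ≤ A ∧ ∀ (T : ℕ) (u : ℕ → ℝ), u 1 ≤ U →
      (∀ t, 1 ≤ t → t < T → u (t + 1) ≤ (1 + q / Lt β t + C / Lt β t ^ 2) * u t + C * (t:ℝ) ^ (ρ - 1)) →
      ∀ t, 1 ≤ t → t ≤ s + 1 → t ≤ T → u t ≤ A := by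
    intro s
    induction s with
    | zero =>
      refine ⟨|U|, abs_nonneg _, fun T u h1 _ t ht hs _ => ?_⟩
      have : t = 1 := by omega
      rw [this]; exact h1.trans (le_abs_self U)
    | succ s ih =>
      obtain ⟨A, hA0, hA⟩ := ih
      have hL := Lt_pos hβ (show 1 ≤ s + 1 by omega)
      have p1 : 0 ≤ (1 + q / Lt β (s+1) + C / Lt β (s+1) ^ 2) := by positivity
      have p2 : 0 ≤ C * ((s+1:ℕ):ℝ) ^ (ρ - 1) := by positivity
      refine ⟨A + ((1 + q / Lt β (s+1) + C / Lt β (s+1) ^ 2) * A + C * ((s+1:ℕ):ℝ) ^ (ρ - 1)), by positivity, fun T u h1 h2 t ht hs hT => ?_⟩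
      rcases Nat.lt_or_ge t (s + 2) with h | h
      · have := hA T u h1 h2 t ht (by omega) hT
        have p3 := mul_nonneg p1 hA0
        linarith
      · have e : t = s + 1 + 1 := by omega
        subst e
        have a1 := h2 (s+1) (by omega) (by omega)
        have a2 := mul_le_mul_of_nonneg_left (hA T u h1 h2 (s+1) (by omega) le_rfl (by omega)) p1
        linarith
  obtain ⟨A, hA0, hA⟩ := small t0
  refine ⟨A + C / d, by positivity, fun T u h1 h2 => ?_⟩
  set K := A + C / d with hK
  have hK0 : 0 ≤ K := by positivity
  have key : ∀ s, s + 1 ≤ T → u (s + 1) ≤ K * ((s + 1 : ℕ):ℝ) ^ ρ := by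
    intro s
    induction s with
    | zero =>
      intro hT
      have := hA T u h1 h2 1 le_rfl (by omega) hT
      simp
      have : 0 ≤ C / d := by positivity
      linarith
    | succ s ih =>
      intro hT
      rcases Nat.lt_or_ge s t0 with h | h
      · have a1 := hA T u h1 h2 (s+1+1) (by omega) (by omega) hT
        have a2 : (1:ℝ) ≤ ((s + 1 + 1 : ℕ):ℝ) ^ ρ := Real.one_le_rpow (by push_cast; linarith [(Nat.cast_nonneg s : (0:ℝ) ≤ s)]) hρ.le
        have : 0 ≤ C / d := by positivity
        nlinarith
      · set t := s + 1 with ht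
        have ht1 : 1 ≤ t := by omega
        have tpos : (0:ℝ) < t := by exact_mod_cast ht1
        have hL := Lt_pos hβ ht1
        have a1 := h2 t ht1 (by omega)
        have p1 : 0 ≤ (1 + q / Lt β t + C / Lt β t ^ 2) := by positivity
        have a2 := mul_le_mul_of_nonneg_left (ih (by omega)) p1
        have a3 := rpow_succ_ge hρ ht1
        have a4 := ht0 t (by omega)
        have a5 : d / t ≤ ρ / (t + 1) - (q / Lt β t + C / Lt β t ^ 2) := by
          rw [div_le_iff₀ tpos]
          refine a4.le.trans (le_of_eq ?_)
          field_simp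
        have a6 : (t:ℝ) ^ (ρ - 1) = (t:ℝ) ^ ρ / t := Real.rpow_sub_one tpos.ne' ρ
        have tp : 0 < (t:ℝ) ^ ρ := by positivity
        rw [a6] at a1
        have a7 : C ≤ K * d := by
          rw [hK, add_mul, div_mul_cancel₀ _ d0.ne']; nlinarith
        have a8 := mul_le_mul_of_nonneg_left a5 (mul_nonneg hK0 tp.le)
        have a9 := mul_le_mul_of_nonneg_left a3 hK0
        have a10 : C * ((t:ℝ) ^ ρ / t) ≤ K * (t:ℝ) ^ ρ * (d / t) := by
          have : K * (t:ℝ) ^ ρ * (d / t) = (K * d) * ((t:ℝ) ^ ρ / t) := by ring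
          rw [this]; exact mul_le_mul_of_nonneg_right a7 (by positivity)
        nlinarith
  intro t ht hT
  obtain ⟨s, rfl⟩ : ∃ s, t = s + 1 := ⟨t - 1, by omega⟩
  exact key s hT

lemma block_bound {m : ℕ} (hm : 2 ≤ m) {A : ℝ} (hA : 0 ≤ A) (T : ℕ) (u b : ℕ → ℝ)
    (hb : ∀ t, 1 ≤ t → 0 ≤ b t) (hb2 : ∀ t, 1 ≤ t → t < T → b t ≤ 2 * b (t + 1)) (h1 : u 1 ≤ b 1)
    (h0 : ∀ t, 1 ≤ t → t ≤ T → t % m = 0 → u t ≤ b t)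
    (hs : ∀ t, 1 ≤ t → t < T → (t + 1) % m ≠ 0 → u (t + 1) ≤ A * u t + b t) :
    ∀ t, 1 ≤ t → t ≤ T → u t ≤ (2 * A + 2) ^ m * b t := by
  have key : ∀ s, s + 1 ≤ T → u (s + 1) ≤ (2 * A + 2) ^ ((s + 1) % m) * b (s + 1) := by
    intro s
    induction s with
    | zero =>
      intro hT
      have h2 : (1:ℝ) ≤ (2 * A + 2) ^ ((0 + 1) % m) := one_le_pow₀ (by linarith)
      have := hb 1 le_rfl
      simp only [zero_add] at *
      nlinarith
    | succ s ih =>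
      intro hT
      by_cases hz : (s + 1 + 1) % m = 0
      · rw [hz]; simpa using h0 _ (by omega) hT hz
      · have e : (s + 1 + 1) % m = (s + 1) % m + 1 := by
          rw [Nat.add_mod, Nat.mod_eq_of_lt (show 1 < m by omega)] at hz ⊢
          have := Nat.mod_lt (s + 1) (show 0 < m by omega)
          rcases Nat.lt_or_ge ((s + 1) % m + 1) m with h | h
          · exact Nat.mod_eq_of_lt h
          · have : (s + 1) % m + 1 = m := by omega
            rw [this] at hz; simp at hz
        rw [e, pow_succ]
        have a1 := hs (s + 1) (by omega) (by omega) hz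
        have a2 := ih (by omega)
        have a3 := hb2 (s + 1) (by omega) (by omega)
        have a4 := hb (s + 1) (by omega)
        set k := (s + 1) % m
        have p : (1:ℝ) ≤ (2 * A + 2) ^ k := one_le_pow₀ (by linarith)
        have a5 := mul_le_mul_of_nonneg_left a2 hA
        have a6 : b (s + 1) ≤ (2 * A + 2) ^ k * b (s + 1) := by nlinarith
        have a7 := mul_le_mul_of_nonneg_left a3 (show 0 ≤ (A + 1) * (2 * A + 2) ^ k by positivity)
        nlinarith
  intro t ht hT
  obtain ⟨s, rfl⟩ : ∃ s, t = s + 1 := ⟨t - 1, by omega⟩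
  refine (key s hT).trans (mul_le_mul_of_nonneg_right ?_ (hb _ ht))
  exact pow_le_pow_right₀ (by linarith) (Nat.mod_lt _ (by omega)).le

lemma rpow_half {θ : ℝ} (h1 : -1 ≤ θ) {t : ℕ} (ht : 1 ≤ t) : (t:ℝ) ^ θ ≤ 2 * ((t + 1 : ℕ):ℝ) ^ θ := by
  have t0 : (0:ℝ) < t := by exact_mod_cast ht
  have t1 : (1:ℝ) ≤ t := by exact_mod_cast ht
  rcases le_or_gt 0 θ with h | h
  · have := Real.rpow_le_rpow t0.le (show (t:ℝ) ≤ ((t+1:ℕ):ℝ) by push_cast; linarith) h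
    have : 0 ≤ (t:ℝ) ^ θ := by positivity
    linarith
  · have h2 : ((2 * t : ℝ)) ^ θ ≤ ((t + 1 : ℕ):ℝ) ^ θ :=
      Real.rpow_le_rpow_of_nonpos (by positivity) (by push_cast; linarith) h.le
    rw [Real.mul_rpow (by norm_num) t0.le] at h2
    have h3 : (2:ℝ) ^ (-1:ℝ) ≤ 2 ^ θ := Real.rpow_le_rpow_of_exponent_le (by norm_num) h1
    rw [Real.rpow_neg_one] at h3
    have : 0 ≤ (t:ℝ) ^ θ := by positivity
    nlinarith

lemma pseries {θ : ℝ} (h : θ < -1) : ∃ C : ℝ, 0 ≤ C ∧ ∀ T : ℕ, ∑ t ∈ Finset.Ico 1 T, (t:ℝ) ^ θ ≤ C := by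
  have hs : Summable (fun t : ℕ => (t:ℝ) ^ θ) := Real.summable_nat_rpow.mpr h
  refine ⟨∑' t : ℕ, (t:ℝ) ^ θ, tsum_nonneg fun t => by positivity, fun T => ?_⟩
  exact hs.sum_le_tsum _ fun t _ => by positivity

lemma harmonic_log : ∀ n : ℕ, 1 ≤ n → |(∑ j ∈ Finset.Ico 1 n, (1:ℝ) / j) - Real.log n| ≤ 2 := by
  intro n hn
  have h1 := log_add_one_le_harmonic n
  have h2 := harmonic_le_one_add_log n
  have n0 : (0:ℝ) < n := by exact_mod_cast hn
  have e : ((harmonic n : ℚ) : ℝ) = (∑ j ∈ Finset.Ico 1 n, (1:ℝ) / j) + 1 / n := by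
    rw [harmonic_eq_sum_Icc]
    push_cast
    rw [← Finset.Ico_succ_right_eq_Icc]
    simp only [Nat.succ_eq_succ, Order.succ_eq_add_one]
    rw [Finset.sum_Ico_succ_top hn]
    simp
  have h3 : Real.log n ≤ Real.log ((n + 1 : ℕ):ℝ) := Real.log_le_log n0 (by push_cast; linarith)
  have h4 : 1 / (n:ℝ) ≤ 1 := by rw [div_le_one n0]; exact_mod_cast hn
  have h5 : 0 ≤ 1 / (n:ℝ) := by positivity
  rw [e] at h1 h2
  rw [abs_le]; constructor <;> linarith

lemma gaussR (m : ℕ) : (∑ k ∈ Finset.range m, (k:ℝ)) = m * (m - 1) / 2 := by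
  induction m with
  | zero => simp
  | succ m ih => rw [Finset.sum_range_succ, ih]; push_cast; ring

lemma modsum {m : ℕ} (hm : 2 ≤ m) : ∃ C : ℝ, 0 ≤ C ∧ ∀ n : ℕ, 1 ≤ n →
    |(∑ t ∈ Finset.Ico 1 (n * m), ((t % m : ℕ):ℝ) / t) - ((m:ℝ) - 1) / 2 * Real.log n| ≤ C := by
  have m0 : (0:ℝ) < m := by positivity
  have hsq : Summable (fun j : ℕ => (m:ℝ) * (1 / (j:ℝ) ^ 2)) :=
    (Real.summable_one_div_nat_pow.mpr (by norm_num)).mul_left _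
  set B := ∑' j : ℕ, (m:ℝ) * (1 / (j:ℝ) ^ 2)
  have hB0 : 0 ≤ B := tsum_nonneg fun j => by positivity
  refine ⟨m + B + ((m:ℝ) - 1) / 2 * 2, by have : (2:ℝ) ≤ m := by exact_mod_cast hm
                                          linarith, ?_⟩
  -- block sums
  set blkS : ℕ → ℝ := fun j => ∑ k ∈ Finset.range m, (k:ℝ) / ((j * m + k : ℕ):ℝ) with hbs
  have hblk : ∀ n, 1 ≤ n → ∑ t ∈ Finset.Ico 1 (n * m), ((t % m : ℕ):ℝ) / t = ∑ j ∈ Finset.range n, blkS j := by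
    intro n hn
    have e : ∑ t ∈ Finset.Ico 1 (n * m), ((t % m : ℕ):ℝ) / t = ∑ t ∈ Finset.range (n * m), ((t % m : ℕ):ℝ) / t := by
      rw [Finset.range_eq_Ico, Finset.sum_eq_sum_Ico_succ_bot (show 0 < n * m by positivity)]
      simp
    rw [e]
    clear e hn
    induction n with
    | zero => simp
    | succ n ih =>
      rw [Finset.sum_range_succ, add_mul, one_mul, Finset.sum_range_add, ih, hbs]
      congr 1
      refine Finset.sum_congr rfl fun k hk => ?_
      rw [show (n * m + k) % m = k from by
        rw [Nat.mul_comm, Nat.mul_add_mod]; exact Nat.mod_eq_of_lt (Finset.mem_range.mp hk)]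
  have hb0 : blkS 0 ≤ m ∧ 0 ≤ blkS 0 := by
    constructor
    · rw [hbs]
      calc _ ≤ ∑ k ∈ Finset.range m, (1:ℝ) := by
            refine Finset.sum_le_sum fun k _ => ?_
            simp; exact div_self_le_one _
        _ = m := by simp
    · exact Finset.sum_nonneg fun k _ => by positivity
  have hbj : ∀ j, 1 ≤ j → |blkS j - ((m:ℝ) - 1) / 2 * (1 / j)| ≤ m * (1 / (j:ℝ) ^ 2) := by
    intro j hj
    have j0 : (0:ℝ) < j := by exact_mod_cast hj
    have e : ((m:ℝ) - 1) / 2 * (1 / j) = ∑ k ∈ Finset.range m, (k:ℝ) / (j * m) := by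
      rw [← Finset.sum_div]
      have := gaussR m
      rw [this]; field_simp
    rw [e, hbs, ← Finset.sum_sub_distrib]
    refine (Finset.abs_sum_le_sum_abs _ _).trans ?_
    have : ∀ k ∈ Finset.range m, |(k:ℝ) / ((j * m + k : ℕ):ℝ) - (k:ℝ) / (j * m)| ≤ 1 / (j:ℝ) ^ 2 := by
      intro k hk
      have hk' : (k:ℝ) ≤ m := by exact_mod_cast (Finset.mem_range.mp hk).le
      have e : (k:ℝ) / ((j * m + k : ℕ):ℝ) - (k:ℝ) / (j * m) = - ((k:ℝ) ^ 2 / ((j * m + k) * (j * m))) := by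
        push_cast; field_simp; ring
      rw [e, abs_neg, abs_of_nonneg (by positivity), div_le_div_iff₀ (by positivity) (by positivity)]
      have : (k:ℝ) ^ 2 ≤ m ^ 2 := pow_le_pow_left₀ (by positivity) hk' 2
      have h2 : 0 ≤ (k:ℝ) * (j * m) := by positivity
      nlinarith [mul_le_mul_of_nonneg_right this (sq_nonneg (j:ℝ))]
    calc _ ≤ ∑ k ∈ Finset.range m, 1 / (j:ℝ) ^ 2 := Finset.sum_le_sum this
      _ = _ := by simp
  intro n hn
  rw [hblk n hn, Finset.range_eq_Ico, Finset.sum_eq_sum_Ico_succ_bot (by omega : 0 < n)]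
  have h1 : |(∑ j ∈ Finset.Ico 1 n, blkS j) - ((m:ℝ) - 1) / 2 * ∑ j ∈ Finset.Ico 1 n, (1:ℝ) / j| ≤ B := by
    rw [Finset.mul_sum, ← Finset.sum_sub_distrib]
    refine (Finset.abs_sum_le_sum_abs _ _).trans ?_
    refine (Finset.sum_le_sum fun j hj => hbj j (Finset.mem_Ico.mp hj).1).trans ?_
    exact hsq.sum_le_tsum _ fun j _ => by positivity
  have h2 := harmonic_log n hn
  have hm2 : (0:ℝ) ≤ ((m:ℝ) - 1) / 2 := by
    have : (2:ℝ) ≤ m := by exact_mod_cast hm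
    linarith
  have h3 := mul_le_mul_of_nonneg_left h2 hm2
  rw [← abs_of_nonneg hm2, ← abs_mul, abs_of_nonneg hm2, mul_sub] at h3
  simp only [zero_add]
  rw [abs_le] at *
  constructor <;> linarith [h1.1, h1.2, h3.1, h3.2, hb0.1, hb0.2]
end analysis


section chain

@[ext] structure St (n : ℕ) where
  Z : Fin (n+1) → ℝ
  M : Fin (n+1) → Fin (n+1) → ℝ

def cb (m n t : ℕ) : Fin (n+1) := Fin.ofNat (n+1) (t / m)
def nv (m t i : ℕ) : ℝ := ((min m (t - i * m) : ℕ) : ℝ)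
noncomputable def wv (β : ℝ) (m n : ℕ) (i : Fin (n+1)) : ℝ := (1 + β) * m - if i.val = 0 then 1 else 0
noncomputable def xv (β : ℝ) (m n t : ℕ) (i : Fin (n+1)) : ℝ := (1 + β) * nv m t i.val - if i.val = 0 then 1 else 0
noncomputable def Xs (β : ℝ) (m n t : ℕ) (s : St n) (i : Fin (n+1)) : ℝ := s.Z i + xv β m n t i
noncomputable def sW (β : ℝ) (m n : ℕ) (s : St n) (i : Fin (n+1)) : ℝ := wv β m n i + s.Z i
def stp (m n t : ℕ) (s : St n) (a : Fin (n+1)) : St n := ⟨stepZ s.Z a, stepM s.M (cb m n t) a⟩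
def s0 (n : ℕ) : St n := ⟨fun _ => 0, fun _ _ => 0⟩

noncomputable def EE (β : ℝ) (m n : ℕ) : ℕ → (St n → ℝ) → ℝ
  | 0, F => F (s0 n)
  | 1, F => F (s0 n)
  | (t+2), F => EE β m n (t+1) (fun s => avg (Xs β m n (t+1) s) (Lt β (t+1)) (fun a => F (stp m n (t+1) s a)))

structure IV (m n t : ℕ) (s : St n) : Prop where
  Znn : ∀ i, 0 ≤ s.Z i
  Mnn : ∀ i j, 0 ≤ s.M i j
  Ms : ∀ i j, s.M i j = s.M j i
  Md : ∀ i, s.M i i = 0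
  Mle : ∀ i j, s.M i j ≤ m
  fZ : ∀ i, cb m n t < i → s.Z i = 0
  fM : ∀ i, cb m n t < i → ∀ j, s.M i j = 0
  Zc : s.Z (cb m n t) ≤ ((t % m : ℕ):ℝ)
  Mrow : ∑ j, s.M (cb m n t) j ≤ ((t % m : ℕ):ℝ)
  Zsum : ∑ i, s.Z i = (t:ℝ) - 1

variable {β : ℝ} {m n : ℕ}

lemma EE_one (F : St n → ℝ) : EE β m n 1 F = F (s0 n) := rfl
lemma EE_succ {t : ℕ} (ht : 1 ≤ t) (F : St n → ℝ) : EE β m n (t+1) F =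
    EE β m n t (fun s => avg (Xs β m n t s) (Lt β t) (fun a => F (stp m n t s a))) := by
  obtain ⟨k, rfl⟩ : ∃ k, t = k + 1 := ⟨t - 1, by omega⟩
  rfl

lemma EE_add (t : ℕ) : ∀ (F G : St n → ℝ), EE β m n t (fun s => F s + G s) = EE β m n t F + EE β m n t G := by
  induction t using Nat.strong_induction_on with
  | _ t ih =>
    intro F G
    match t, ih with
    | 0, _ => rfl
    | 1, _ => rfl
    | (t+2), ih =>
      simp only [EE]
      rw [← ih (t+1) (by omega)]
      simp only [avg_add]

lemma EE_mul (t : ℕ) : ∀ (r : ℝ) (F : St n → ℝ), EE β m n t (fun s => r * F s) = r * EE β m n t F := by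
  induction t using Nat.strong_induction_on with
  | _ t ih =>
    intro F G
    match t, ih with
    | 0, _ => rfl
    | 1, _ => rfl
    | (t+2), ih =>
      simp only [EE]
      rw [← ih (t+1) (by omega)]
      simp only [avg_mul]

lemma cb_val (hm : 1 ≤ m) {t : ℕ} (ht : t ≤ n * m) : (cb m n t).val = t / m := by
  have : t / m < n + 1 := by
    rw [Nat.div_lt_iff_lt_mul (by omega)]; nlinarith
  simp [cb, Fin.ofNat, Nat.mod_eq_of_lt this]

lemma nv_lt (hm : 1 ≤ m) {t i : ℕ} (h : i < t / m) : nv m t i = m := by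
  have h1 : (i + 1) * m ≤ t := by
    have := Nat.div_mul_le_self t m
    nlinarith
  have : min m (t - i * m) = m := by
    apply min_eq_left; rw [add_mul] at h1; omega
  simp [nv, this]

lemma nv_gt (hm : 1 ≤ m) {t i : ℕ} (h : t / m < i) : nv m t i = 0 := by
  have h1 : t < i * m := (Nat.div_lt_iff_lt_mul (by omega)).mp h
  have : min m (t - i * m) = 0 := by omega
  simp [nv, this]

lemma nv_eq (hm : 1 ≤ m) (t : ℕ) : nv m t (t / m) = ((t % m : ℕ):ℝ) := by
  have h1 := Nat.div_add_mod t m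
  have h2 := Nat.mod_lt t (show 0 < m by omega)
  rw [mul_comm] at h1
  have : min m (t - t / m * m) = t % m := by omega
  simp [nv, this]

lemma nv_succ (hm : 1 ≤ m) (t i : ℕ) : nv m (t+1) i = nv m t i + if i = t / m then 1 else 0 := by
  have h1 := Nat.div_add_mod t m
  have h2 := Nat.mod_lt t (show 0 < m by omega)
  rw [mul_comm] at h1
  unfold nv
  split_ifs with h
  · subst h
    have : min m (t + 1 - t / m * m) = min m (t - t / m * m) + 1 := by omega
    rw [this]; push_cast; ring
  · have : min m (t + 1 - i * m) = min m (t - i * m) := by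
      rcases Nat.lt_or_gt_of_ne h with h | h
      · have : (i + 1) * m ≤ t / m * m := Nat.mul_le_mul_right _ h
        rw [add_mul] at this; omega
      · have : (t / m + 1) * m ≤ i * m := Nat.mul_le_mul_right _ h
        rw [add_mul] at this; omega
    rw [this]; simp

lemma sum_nv (hm : 1 ≤ m) {t : ℕ} (ht : t ≤ n * m) : ∑ i : Fin (n+1), nv m t i.val = t := by
  induction t with
  | zero => simp [nv]
  | succ t ih =>
    simp only [nv_succ hm, Finset.sum_add_distrib]
    rw [ih (by omega)]
    have h : t / m < n + 1 := by rw [Nat.div_lt_iff_lt_mul (by omega)]; nlinarith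
    have : ∀ i : Fin (n+1), (if i.val = t / m then (1:ℝ) else 0) = if i = ⟨t / m, h⟩ then 1 else 0 := by
      intro i; simp [Fin.ext_iff]
    simp only [this, Finset.sum_ite_eq', Finset.mem_univ, if_true]
    push_cast; ring

lemma sum_i0 : ∑ i : Fin (n+1), (if i.val = 0 then (1:ℝ) else 0) = 1 := by
  have : ∀ i : Fin (n+1), (if i.val = 0 then (1:ℝ) else 0) = if i = 0 then 1 else 0 := by
    intro i; simp only [Fin.ext_iff, Fin.val_zero]
  simp only [this, Finset.sum_ite_eq', Finset.mem_univ, if_true]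

lemma sum_xv (hm : 1 ≤ m) {t : ℕ} (ht : t ≤ n * m) : ∑ i, xv β m n t i = (1 + β) * t - 1 := by
  unfold xv
  rw [Finset.sum_sub_distrib, ← Finset.mul_sum, sum_nv hm ht, sum_i0]

lemma nv_nonneg (m t i : ℕ) : 0 ≤ nv m t i := by unfold nv; positivity
lemma nv_le (m t i : ℕ) : nv m t i ≤ m := by
  unfold nv; exact_mod_cast min_le_left _ _

lemma xv_nonneg (hβ : 0 < β) (hm : 1 ≤ m) {t : ℕ} (ht : 1 ≤ t) (i : Fin (n+1)) : 0 ≤ xv β m n t i := by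
  unfold xv
  split_ifs with h
  · have : (1:ℝ) ≤ nv m t i.val := by
      rw [h]; unfold nv; simp only [zero_mul, Nat.sub_zero]
      exact_mod_cast (le_min hm ht)
    nlinarith
  · have := nv_nonneg m t i.val
    rw [sub_zero]; positivity

lemma wv_nonneg (hβ : 0 < β) (hm : 1 ≤ m) (i : Fin (n+1)) : 0 ≤ wv β m n i := by
  have : (1:ℝ) ≤ m := by exact_mod_cast hm
  unfold wv; split_ifs <;> nlinarith
lemma wv_le (hβ : 0 < β) (i : Fin (n+1)) : wv β m n i ≤ (1 + β) * m := by
  unfold wv; split_ifs <;> linarith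

lemma xv_lt (hm : 1 ≤ m) {t : ℕ} {i : Fin (n+1)} (h : i.val < t / m) : xv β m n t i = wv β m n i := by
  unfold xv wv; rw [nv_lt hm h]
lemma xv_gt (hm : 1 ≤ m) {t : ℕ} {i : Fin (n+1)} (h : t / m < i.val) : xv β m n t i = 0 := by
  unfold xv; rw [nv_gt hm h, if_neg (Nat.ne_of_gt (lt_of_le_of_lt (Nat.zero_le _) h))]; ring
lemma xv_eq (hm : 1 ≤ m) {t : ℕ} {i : Fin (n+1)} (h : i.val = t / m) :
    xv β m n t i = wv β m n i - (1 + β) * (m - ((t % m : ℕ):ℝ)) := by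
  unfold xv wv; rw [h, nv_eq hm]; ring

lemma IV.good (hβ : 0 < β) (hm : 1 ≤ m) {t : ℕ} (ht : 1 ≤ t) (htn : t ≤ n * m) {s : St n} (h : IV m n t s) :
    Good (m:ℝ) ((1 + β) * m) ((1 + β) * (m - ((t % m : ℕ):ℝ))) (Lt β t) (cb m n t) (wv β m n) s.Z (sW β m n s)
      (Xs β m n t s) s.M := by
  have hcv := cb_val hm htn
  have hmod : ((t % m : ℕ):ℝ) ≤ m := by exact_mod_cast (Nat.mod_lt t (by omega)).le
  have hmod0 : (0:ℝ) ≤ ((t % m : ℕ):ℝ) := by positivity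
  have ht' : (1:ℝ) ≤ t := by exact_mod_cast ht
  constructor
  · exact_mod_cast hm
  · positivity
  · exact h.Znn
  · exact h.Mnn
  · exact h.Ms
  · exact h.Md
  · exact h.Mle
  · exact h.Mrow.trans hmod
  · exact h.Zc.trans hmod
  · exact wv_nonneg hβ hm
  · exact wv_le hβ
  · intro i; rfl
  · exact Lt_pos hβ ht
  · intro i; exact add_nonneg (h.Znn i) (xv_nonneg hβ hm ht i)
  · unfold Xs; rw [Finset.sum_add_distrib, h.Zsum, sum_xv hm htn]; unfold Lt; ring
  · rw [h.Zsum]; unfold Lt; nlinarith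
  · unfold Xs sW; rw [xv_eq hm hcv]; ring
  · have := sub_nonneg.mpr hmod; positivity
  · nlinarith
  · intro i hi
    rcases lt_or_gt_of_ne hi with h1 | h1
    · left; unfold Xs sW; rw [xv_lt hm (by rw [← hcv]; exact h1)]; ring
    · right
      refine ⟨?_, h.fZ i h1, h.fM i h1⟩
      unfold Xs; rw [h.fZ i h1, xv_gt hm (by rw [← hcv]; exact h1)]; simp

lemma mod_succ (hm : 1 ≤ m) {t : ℕ} (hz : (t + 1) % m ≠ 0) : (t + 1) % m = t % m + 1 ∧ (t + 1) / m = t / m := by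
  have h1 := Nat.div_add_mod t m
  have h2 := Nat.mod_lt t (show 0 < m by omega)
  rcases Nat.lt_or_ge (t % m + 1) m with h | h
  · constructor
    · rw [← h1, add_assoc, Nat.mul_add_mod, Nat.mod_eq_of_lt h]; simp [Nat.mul_add_mod]
    · conv_lhs => rw [← h1, add_assoc]
      rw [Nat.mul_add_div (by omega), Nat.div_eq_of_lt h]; simp
  · exfalso; apply hz
    have : t + 1 = m * (t / m) + m := by omega
    rw [this]; simp

lemma div_succ0 (hm : 1 ≤ m) {t : ℕ} (hz : (t + 1) % m = 0) : (t + 1) / m = t / m + 1 := by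
  have h1 := Nat.div_add_mod t m
  have h2 := Nat.mod_lt t (show 0 < m by omega)
  rw [Nat.succ_div, if_pos (Nat.dvd_of_mod_eq_zero hz)]

lemma cb_succ (hm : 1 ≤ m) {t : ℕ} (hz : (t + 1) % m ≠ 0) : cb m n (t+1) = cb m n t := by
  unfold cb; rw [(mod_succ hm hz).2]

lemma IV.step (hm : 1 ≤ m) {t : ℕ} (ht : 1 ≤ t) (htn : t < n * m) {s : St n} (h : IV m n t s)
    {a : Fin (n+1)} (ha : Xs β m n t s a ≠ 0) : IV m n (t+1) (stp m n t s a) := by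
  have hcv := cb_val hm htn.le
  have hcv' := cb_val hm (show t + 1 ≤ n * m by omega)
  have hac : a ≤ cb m n t := by
    by_contra hc
    rw [not_le] at hc
    apply ha
    unfold Xs; rw [h.fZ a hc, xv_gt hm (by rw [← hcv]; exact hc)]; simp
  have hle : cb m n t ≤ cb m n (t+1) := by
    rw [Fin.le_def, hcv, hcv']; exact Nat.div_le_div_right (by omega)
  have hr : ∀ j, s.M (cb m n t) j ≤ ((t % m : ℕ):ℝ) := fun j =>
    (Finset.single_le_sum (fun j _ => h.Mnn (cb m n t) j) (Finset.mem_univ j)).trans h.Mrow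
  have hmod : ((t % m : ℕ):ℝ) + 1 ≤ m := by exact_mod_cast (Nat.mod_lt t (by omega))
  constructor
  · intro i; exact add_nonneg (h.Znn i) (ind_nonneg _ _)
  · intro i j
    simp only [stp, stepM]
    refine add_nonneg (h.Mnn i j) ?_
    split_ifs
    · exact le_rfl
    · have := ind_nonneg a i; have := ind_nonneg a j
      have := ind_nonneg (cb m n t) i; have := ind_nonneg (cb m n t) j
      positivity
  · intro i j
    simp only [stp, stepM]; rw [h.Ms i j]; split_ifs <;> ring
  · intro i
    simp only [stp, stepM]; rw [h.Md i]
    by_cases hc : a = cb m n t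
    · simp [hc]
    · simp only [if_neg hc, ind]
      split_ifs <;> simp_all
  · intro i j
    simp only [stp, stepM]
    by_cases hc : a = cb m n t
    · simp only [if_pos hc, add_zero]; exact h.Mle i j
    · simp only [if_neg hc]
      by_cases h1 : i = a ∧ j = cb m n t
      · obtain ⟨rfl, rfl⟩ := h1
        rw [ind_self, ind_self, ind_ne hc, h.Ms]
        linarith [hr i]
      · by_cases h2 : i = cb m n t ∧ j = a
        · obtain ⟨rfl, rfl⟩ := h2
          rw [ind_self, ind_self, ind_ne hc]
          linarith [hr j]
        · have e : ind a i * ind (cb m n t) j + ind (cb m n t) i * ind a j = 0 := by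
            unfold ind; split_ifs <;> simp_all
          rw [e, add_zero]; exact h.Mle i j
  · intro i hi
    have h1 : cb m n t < i := lt_of_le_of_lt hle hi
    simp only [stp, stepZ]
    rw [h.fZ i h1, ind_ne (ne_of_gt (lt_of_le_of_lt hac h1))]; simp
  · intro i hi j
    have h1 : cb m n t < i := lt_of_le_of_lt hle hi
    simp only [stp, stepM]
    rw [h.fM i h1, ind_ne (ne_of_gt (lt_of_le_of_lt hac h1)), ind_ne (ne_of_gt h1)]; simp
  · by_cases hz : (t + 1) % m = 0
    · have h1 : cb m n t < cb m n (t+1) := by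
        rw [Fin.lt_def, hcv, hcv', div_succ0 hm hz]; omega
      simp only [stp, stepZ]
      rw [h.fZ _ h1, ind_ne (ne_of_gt (lt_of_le_of_lt hac h1))]; simp
    · rw [cb_succ hm hz, (mod_succ hm hz).1]
      simp only [stp, stepZ]
      have h1 := h.Zc
      have : ind a (cb m n t) ≤ 1 := by unfold ind; split_ifs <;> norm_num
      push_cast; linarith
  · by_cases hz : (t + 1) % m = 0
    · have h1 : cb m n t < cb m n (t+1) := by
        rw [Fin.lt_def, hcv, hcv', div_succ0 hm hz]; omega
      simp only [stp, stepM]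
      simp only [h.fM _ h1, ind_ne (ne_of_gt (lt_of_le_of_lt hac h1)), ind_ne (ne_of_gt h1)]; simp
    · rw [cb_succ hm hz, (mod_succ hm hz).1]
      simp only [stp, stepM, Finset.sum_add_distrib]
      have h1 := h.Mrow
      have : ∑ x, (if a = cb m n t then 0 else ind a (cb m n t) * ind (cb m n t) x + ind (cb m n t) (cb m n t) * ind a x) ≤ 1 := by
        by_cases hc : a = cb m n t
        · simp [hc]
        · simp only [if_neg hc, ind_ne (Ne.symm hc), ind_self, zero_mul, one_mul, zero_add]
          simp [ind]
      push_cast; linarith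
  · simp only [stp, stepZ, Finset.sum_add_distrib]
    rw [h.Zsum]; simp [ind]

lemma IV.init (hm : 1 ≤ m) : IV m n 1 (s0 n) := by
  constructor <;> intros <;> simp [s0]

lemma EE_mono (hβ : 0 < β) (hm : 1 ≤ m) : ∀ k, k + 1 ≤ n * m → ∀ (F G : St n → ℝ), (∀ s, IV m n (k+1) s → F s ≤ G s) →
    EE β m n (k+1) F ≤ EE β m n (k+1) G := by
  intro k
  induction k with
  | zero => intro _ F G h; exact h _ (IV.init hm)
  | succ k ih =>
    intro hk F G h
    rw [EE_succ (t := k + 1) (by omega), EE_succ (t := k + 1) (by omega)]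
    refine ih (by omega) _ _ fun s hs => ?_
    refine Finset.sum_le_sum fun a _ => ?_
    by_cases ha : Xs β m n (k+1) s a = 0
    · rw [ha]; simp
    · have hg := hs.good hβ hm (by omega) (by omega)
      exact mul_le_mul_of_nonneg_left (h _ (hs.step hm (by omega) (by omega) ha)) (div_nonneg (hg.Xnn a) hg.Lpos.le)

lemma EE_le (hβ : 0 < β) (hm : 1 ≤ m) {t : ℕ} (ht : 1 ≤ t) (htn : t ≤ n * m) {F G : St n → ℝ}
    (h : ∀ s, IV m n t s → F s ≤ G s) : EE β m n t F ≤ EE β m n t G := by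
  obtain ⟨k, rfl⟩ : ∃ k, t = k + 1 := ⟨t - 1, by omega⟩
  exact EE_mono hβ hm k htn F G h

lemma EE_congr (hβ : 0 < β) (hm : 1 ≤ m) {t : ℕ} (ht : 1 ≤ t) (htn : t ≤ n * m) {F G : St n → ℝ}
    (h : ∀ s, IV m n t s → F s = G s) : EE β m n t F = EE β m n t G :=
  le_antisymm (EE_le hβ hm ht htn fun s hs => (h s hs).le) (EE_le hβ hm ht htn fun s hs => (h s hs).ge)

lemma EE_const (hβ : 0 < β) (hm : 1 ≤ m) {t : ℕ} (ht : 1 ≤ t) (htn : t ≤ n * m) (r : ℝ) :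
    EE β m n t (fun _ => r) = r := by
  induction t, ht using Nat.le_induction with
  | base => rfl
  | succ t ht ih =>
    rw [EE_succ ht, EE_congr hβ hm ht (by omega) (G := fun _ => r) fun s hs => (hs.good hβ hm ht (by omega)).const r]
    exact ih (by omega)

lemma EE_nonneg (hβ : 0 < β) (hm : 1 ≤ m) {t : ℕ} (ht : 1 ≤ t) (htn : t ≤ n * m) {F : St n → ℝ}
    (h : ∀ s, IV m n t s → 0 ≤ F s) : 0 ≤ EE β m n t F := by
  have := EE_le hβ hm ht htn h
  rwa [EE_const hβ hm ht htn] at this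

lemma EE_sub (t : ℕ) (F G : St n → ℝ) : EE β m n t (fun s => F s - G s) = EE β m n t F - EE β m n t G := by
  have h1 := EE_add (β := β) (m := m) t F (fun s => (-1) * G s)
  rw [EE_mul] at h1
  have : (fun s => F s - G s) = fun s => F s + (-1) * G s := by funext s; ring
  rw [this, h1]; ring

lemma EE_div (t : ℕ) (F : St n → ℝ) (r : ℝ) : EE β m n t (fun s => F s / r) = EE β m n t F / r := by
  have : (fun s => F s / r) = fun s => r⁻¹ * F s := by funext s; ring
  rw [this, EE_mul]; ring

lemma EE_abs (hβ : 0 < β) (hm : 1 ≤ m) {t : ℕ} (ht : 1 ≤ t) (htn : t ≤ n * m) (F : St n → ℝ) :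
    |EE β m n t F| ≤ EE β m n t (fun s => |F s|) := by
  rw [abs_le]; constructor
  · have h1 : EE β m n t (fun s => (-1) * |F s|) ≤ EE β m n t F := EE_le hβ hm ht htn fun s _ => by
      have := neg_abs_le (F s); linarith
    rw [EE_mul] at h1; linarith
  · exact EE_le hβ hm ht htn fun s _ => le_abs_self _

/-- one-step inequality -/
lemma EE_succ_le (hβ : 0 < β) (hm : 1 ≤ m) {t : ℕ} (ht : 1 ≤ t) (htn : t < n * m) {F G : St n → ℝ}
    (h : ∀ s, IV m n t s → avg (Xs β m n t s) (Lt β t) (fun a => F (stp m n t s a)) ≤ G s) :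
    EE β m n (t+1) F ≤ EE β m n t G := by
  rw [EE_succ ht]; exact EE_le hβ hm ht htn.le h

lemma EE_succ_eq (hβ : 0 < β) (hm : 1 ≤ m) {t : ℕ} (ht : 1 ≤ t) (htn : t < n * m) {F G : St n → ℝ}
    (h : ∀ s, IV m n t s → avg (Xs β m n t s) (Lt β t) (fun a => F (stp m n t s a)) = G s) :
    EE β m n (t+1) F = EE β m n t G := by
  rw [EE_succ ht]; exact EE_congr hβ hm ht htn.le h

lemma sW_stp (t : ℕ) (s : St n) (a : Fin (n+1)) : sW β m n (stp m n t s a) = stepZ (sW β m n s) a := by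
  funext i; simp only [sW, stp, stepZ]; ring

lemma IV.row0 {t : ℕ} {s : St n} (h : IV m n t s) (hz : t % m = 0) (j : Fin (n+1)) : s.M (cb m n t) j = 0 := by
  have h1 := h.Mrow
  rw [hz, Nat.cast_zero] at h1
  have := Finset.single_le_sum (fun j _ => h.Mnn (cb m n t) j) (Finset.mem_univ j)
  exact le_antisymm (this.trans h1) (h.Mnn _ _)

lemma sum_wx (hβ : 0 < β) (hm : 1 ≤ m) {t : ℕ} (ht : 1 ≤ t) (htn : t ≤ n * m) (s : St n) :
    |(∑ i, wv β m n i * (Xs β m n t s i - s.Z i)) - m * (1 + β) ^ 2 * t| ≤ 2 * (1 + β) * m := by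
  have m1 : (1:ℝ) ≤ m := by exact_mod_cast hm
  have e : ∑ i, wv β m n i * (Xs β m n t s i - s.Z i) = (1 + β) * m * ((1 + β) * t - 1) - xv β m n t 0 := by
    have : ∀ i : Fin (n+1), wv β m n i * (Xs β m n t s i - s.Z i) = (1 + β) * m * xv β m n t i - (if i = 0 then 1 else 0) * xv β m n t i := by
      intro i; unfold wv Xs; simp only [Fin.ext_iff, Fin.val_zero]; ring
    simp only [this, Finset.sum_sub_distrib, ← Finset.mul_sum, sum_xv hm htn]
    simp
  rw [e]
  have h1 := xv_nonneg (n := n) hβ hm ht 0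
  have h2 : xv β m n t 0 ≤ (1 + β) * m := by
    unfold xv; have := nv_le m t (0 : Fin (n+1)).val
    split_ifs <;> nlinarith
  have h3 : 0 ≤ (1 + β) * m := by positivity
  rw [abs_le]; constructor <;> nlinarith
end chain


section mom
noncomputable def rh (β : ℝ) : ℝ := 1 + 2 / (2 + β)
noncomputable def mu (β : ℝ) : ℝ := min 1 β
noncomputable def sg (β : ℝ) (m : ℕ) : ℝ := ((2 + β) + 2 * (m * (1 + β) ^ 2)) / β
noncomputable def kp (β : ℝ) (m : ℕ) : ℝ := m * (1 + β) ^ 2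
noncomputable def Ce (β : ℝ) (m : ℕ) : ℝ := (1 + β) * m * m + 2 * (1 + β) * m

noncomputable def fT {n : ℕ} (s : St n) : ℝ := ∑ i, s.Z i ^ 3
noncomputable def fS (β : ℝ) (m n : ℕ) (s : St n) : ℝ := ∑ i, (sW β m n s i ^ 2 - wv β m n i ^ 2)
noncomputable def fG (β : ℝ) (m n t : ℕ) (s : St n) : ℝ := fS β m n s - sg β m * t
noncomputable def fP (β : ℝ) (m n : ℕ) (s : St n) : ℝ := PP s.M (sW β m n s)
noncomputable def fR (β : ℝ) (m n : ℕ) (s : St n) : ℝ := RR s.M (sW β m n s)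
noncomputable def fV (β : ℝ) (m n t : ℕ) (s : St n) : ℝ := VV s.M (sW β m n s) (cb m n t)
noncomputable def fy (β : ℝ) (m n t : ℕ) (s : St n) : ℝ := yy s.M (sW β m n s) (cb m n t)
noncomputable def fN {n : ℕ} (s : St n) : ℝ := NN s.M
noncomputable def fA (β : ℝ) (m n t : ℕ) (s : St n) : ℝ := avg (Xs β m n t s) (Lt β t) (sW β m n s)
noncomputable def fA2 (β : ℝ) (m n t : ℕ) (s : St n) : ℝ :=
  avg (Xs β m n t s) (Lt β t) (fun a => (1 + sW β m n s a) ^ 2)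

variable {β : ℝ} {m : ℕ}

lemma rh_gt (hβ : 0 < β) : 1 < rh β := by unfold rh; have : 0 < 2 / (2 + β) := by positivity
                                          linarith
lemma rh_lt (hβ : 0 < β) : rh β < 2 := by
  unfold rh; have : 2 / (2 + β) < 1 := by rw [div_lt_one (by positivity)]; linarith
  linarith
lemma mu_pos (hβ : 0 < β) : 0 < mu β := lt_min one_pos hβ
lemma sg_pos (hβ : 0 < β) : 0 < sg β m := by unfold sg; positivity
lemma kp_nn (hβ : 0 < β) : 0 ≤ kp β m := by unfold kp; positivity
lemma Ce_nn (hβ : 0 < β) : 0 ≤ Ce β m := by unfold Ce; positivity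
lemma sg_eq (hβ : 0 < β) : 2 * (sg β m + kp β m) = (sg β m - 1) * (2 + β) := by
  unfold sg kp; field_simp; ring

lemma one_le_tr {t : ℕ} (ht : 1 ≤ t) {θ : ℝ} (h : 0 ≤ θ) : (1:ℝ) ≤ (t:ℝ) ^ θ :=
  Real.one_le_rpow (by exact_mod_cast ht) h
lemma tr_mono {t : ℕ} (ht : 1 ≤ t) {θ η : ℝ} (h : θ ≤ η) : (t:ℝ) ^ θ ≤ (t:ℝ) ^ η :=
  Real.rpow_le_rpow_of_exponent_le (by exact_mod_cast ht) h
lemma tr_nn (t : ℕ) (θ : ℝ) : 0 ≤ (t:ℝ) ^ θ := by positivity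

lemma invL (hβ : 0 < β) {t : ℕ} (ht : 1 ≤ t) : 1 / Lt β t ≤ 1 / mu β * (t:ℝ) ^ (-1 : ℝ) := by
  have t0 : (0:ℝ) < t := by exact_mod_cast ht
  have m0 := mu_pos hβ
  rw [Real.rpow_neg_one]
  have := one_div_le_one_div_of_le (by positivity) (Lt_ge hβ ht)
  refine this.trans (le_of_eq ?_)
  unfold mu at *; field_simp

lemma invL' (hβ : 0 < β) {t : ℕ} (ht : 1 ≤ t) : 1 / Lt β t ≤ 1 / mu β := by
  refine (invL hβ ht).trans ?_
  have : (t:ℝ) ^ (-1:ℝ) ≤ 1 := Real.rpow_le_one_of_one_le_of_nonpos (by exact_mod_cast ht) (by norm_num)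
  have m0 : 0 ≤ 1 / mu β := by have := mu_pos hβ; positivity
  nlinarith

lemma tL (hβ : 0 < β) {t : ℕ} (ht : 1 ≤ t) : (t:ℝ) / Lt β t ≤ 1 / mu β := by
  rw [div_le_div_iff₀ (Lt_pos hβ ht) (mu_pos hβ)]
  have := Lt_ge hβ ht
  unfold mu; linarith

lemma divL (hβ : 0 < β) {t : ℕ} (ht : 1 ≤ t) {x K θ : ℝ} (hK : 0 ≤ K) (hx : x ≤ K * (t:ℝ) ^ θ) :
    x / Lt β t ≤ K / mu β * (t:ℝ) ^ (θ - 1) := by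
  have t0 : (0:ℝ) < t := by exact_mod_cast ht
  have L0 := Lt_pos hβ ht
  have h1 : x / Lt β t ≤ K * (t:ℝ) ^ θ * (1 / Lt β t) := by
    rw [mul_one_div]; exact div_le_div_of_nonneg_right hx L0.le
  refine h1.trans ?_
  have h2 := mul_le_mul_of_nonneg_left (invL hβ ht) (show 0 ≤ K * (t:ℝ) ^ θ by positivity)
  refine h2.trans (le_of_eq ?_)
  rw [sub_eq_add_neg, Real.rpow_add t0]; ring

/-- (b) -/
lemma mT (hβ : 0 < β) (hm : 1 ≤ m) : ∃ K : ℝ, 0 ≤ K ∧ ∀ n t : ℕ, 1 ≤ t → t ≤ n * m →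
    EE β m n t (fun s => fT s) ≤ K * (t:ℝ) ^ rh β := by
  set w0 := (1 + β) * (m:ℝ) with hw0
  set C := ((3 * w0 + 3) ^ 2 / 4 + 3 * w0 + 1) with hC
  have w0n : 0 ≤ w0 := by positivity
  have C0 : 0 ≤ C := by positivity
  obtain ⟨K, hK, h⟩ := growth hβ (q := 4) (C := C) (ρ := rh β) 0 (by norm_num) C0 (by linarith [rh_gt hβ]) (by
    unfold rh; rw [div_lt_iff₀ (by positivity)]; field_simp; linarith)
  refine ⟨K, hK, fun n => h (n * m) (fun t => EE β m n t (fun s => fT s)) ?_ ?_⟩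
  · rw [EE_one]; simp [fT, s0]
  · intro t ht htn
    have h1 : EE β m n (t+1) (fun s => fT s) ≤ EE β m n t (fun s => (1 + 4 / Lt β t) * fT s + C) :=
      EE_succ_le hβ hm ht htn fun s hs => (hs.good hβ hm ht htn.le).stepT
    rw [EE_add, EE_mul, EE_const hβ hm ht htn.le] at h1
    have hT : 0 ≤ EE β m n t (fun s => fT s) := EE_nonneg hβ hm ht htn.le fun s hs =>
      Finset.sum_nonneg fun i _ => pow_nonneg (hs.Znn i) 3
    have h2 := one_le_tr ht (show 0 ≤ rh β - 1 by linarith [rh_gt hβ])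
    have h3 : 0 ≤ C / Lt β t ^ 2 * EE β m n t (fun s => fT s) := by positivity
    nlinarith

lemma fA2_nn (hβ : 0 < β) (hm : 1 ≤ m) {n t : ℕ} (ht : 1 ≤ t) (htn : t ≤ n * m) {s : St n} (hs : IV m n t s) :
    0 ≤ fA2 β m n t s := by
  have hg := hs.good hβ hm ht htn
  unfold fA2 avg
  refine Finset.sum_nonneg fun a _ => ?_
  have := hg.Xnn a; have := hg.Lpos
  positivity

lemma mA2 (hβ : 0 < β) (hm : 1 ≤ m) : ∃ K : ℝ, 0 ≤ K ∧ ∀ n t : ℕ, 1 ≤ t → t ≤ n * m →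
    EE β m n t (fun s => fA2 β m n t s) ≤ K * (t:ℝ) ^ (rh β - 1) := by
  obtain ⟨K, hK, h⟩ := mT hβ hm
  set w0 := (1 + β) * (m:ℝ) with hw0
  have m0 := mu_pos hβ
  set C := (2 * (1 + w0) ^ 2 + 2 * w0)
  have w0n : 0 ≤ w0 := by positivity
  have C0 : 0 ≤ C := by positivity
  refine ⟨C * (1 + K / mu β), by positivity, fun n t ht htn => ?_⟩
  have h1 : EE β m n t (fun s => fA2 β m n t s) ≤ EE β m n t (fun s => C * (1 + fT s / Lt β t)) :=
    EE_le hβ hm ht htn fun s hs => (hs.good hβ hm ht htn).avgW2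
  rw [EE_mul, EE_add, EE_div, EE_const hβ hm ht htn] at h1
  have h2 := one_le_tr ht (show 0 ≤ rh β - 1 by linarith [rh_gt hβ])
  have h3 := divL hβ ht hK (h n t ht htn)
  nlinarith

lemma Wsq_step {n : ℕ} (t : ℕ) (s : St n) (a : Fin (n+1)) :
    fS β m n (stp m n t s a) = fS β m n s + (2 * sW β m n s a + 1) := by
  unfold fS
  rw [sW_stp]
  have : ∀ i, stepZ (sW β m n s) a i ^ 2 - wv β m n i ^ 2 = (sW β m n s i ^ 2 - wv β m n i ^ 2) + ind a i * (2 * sW β m n s i + 1) := by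
    intro i; unfold stepZ ind; split_ifs <;> ring
  simp only [this, Finset.sum_add_distrib, sum_ind]

lemma fG_step {n : ℕ} (t : ℕ) (s : St n) (a : Fin (n+1)) :
    fG β m n (t+1) (stp m n t s a) = fG β m n t s + (2 * sW β m n s a + 1 - sg β m) := by
  unfold fG; rw [Wsq_step]; push_cast; ring

lemma fA_eq (hβ : 0 < β) (hm : 1 ≤ m) {n t : ℕ} (ht : 1 ≤ t) (htn : t ≤ n * m) {s : St n} (hs : IV m n t s) :
    ∃ e : ℝ, |e| ≤ Ce β m ∧ fA β m n t s = (fG β m n t s + (sg β m + kp β m) * t + e) / Lt β t := by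
  have hg := hs.good hβ hm ht htn
  have h1 := hg.avgW
  have h2 := sum_wx hβ hm ht htn s
  set ω := ∑ i, wv β m n i * (Xs β m n t s i - s.Z i)
  set g := (1 + β) * (m - ((t % m : ℕ):ℝ))
  refine ⟨-(g * s.Z (cb m n t)) + (ω - m * (1 + β) ^ 2 * t), ?_, ?_⟩
  · have h3 : 0 ≤ g * s.Z (cb m n t) := mul_nonneg hg.gnn (hs.Znn _)
    have h4 : g * s.Z (cb m n t) ≤ (1 + β) * m * m := mul_le_mul hg.gle hg.Zc (hs.Znn _) hg.w0nn
    rw [abs_le] at *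
    unfold Ce
    constructor <;> linarith [h2.1, h2.2]
  · unfold fA; rw [h1]; unfold fG fS kp; congr 1; ring

/-- (c) -/
lemma mG2 (hβ : 0 < β) (hm : 1 ≤ m) : ∃ K : ℝ, 0 ≤ K ∧ ∀ n t : ℕ, 1 ≤ t → t ≤ n * m →
    EE β m n t (fun s => fG β m n t s ^ 2) ≤ K * (t:ℝ) ^ rh β := by
  obtain ⟨K, hK, h⟩ := mA2 hβ hm
  set C1 := 2 * |sg β m - 1| + 2 * Ce β m with hC1
  have C10 : 0 ≤ C1 := by have := Ce_nn (m := m) hβ; positivity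
  set C := 1 + C1 ^ 2 + 2 * (1 + sg β m) ^ 2 + 8 * K with hC
  have C0 : 0 ≤ C := by positivity
  obtain ⟨K', hK', h'⟩ := growth hβ (q := 4) (C := C) (ρ := rh β) (sg β m ^ 2) (by norm_num) C0 (by linarith [rh_gt hβ]) (by
    unfold rh; rw [div_lt_iff₀ (by positivity)]; field_simp; linarith)
  refine ⟨K', hK', fun n => h' (n * m) (fun t => EE β m n t (fun s => fG β m n t s ^ 2)) ?_ ?_⟩
  · simp only [EE_one]
    simp [fG, fS, sW, s0]
  · intro t ht htn
    have L0 := Lt_pos hβ ht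
    have h1 : EE β m n (t+1) (fun s => fG β m n (t+1) s ^ 2) ≤
        EE β m n t (fun s => (1 + 4 / Lt β t + 1 / Lt β t ^ 2) * fG β m n t s ^ 2 + (8 * fA2 β m n t s + (C1 ^ 2 + 2 * (1 + sg β m) ^ 2))) := by
      refine EE_succ_le hβ hm ht htn fun s hs => ?_
      simp only [fG_step]
      refine ((hs.good hβ hm ht htn.le).stepG2 _ _).trans ?_
      obtain ⟨e, he, hA⟩ := fA_eq hβ hm ht htn.le hs
      set G := fG β m n t s
      have e1 : 2 * avg (Xs β m n t s) (Lt β t) (sW β m n s) + 1 - sg β m = (2 * G + (2 * (sg β m - 1) + 2 * e)) / Lt β t := by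
        change 2 * fA β m n t s + 1 - sg β m = _
        rw [hA]
        have := sg_eq (m := m) hβ
        rw [eq_div_iff L0.ne']
        have e3 : (2 * ((G + (sg β m + kp β m) * ↑t + e) / Lt β t) + 1 - sg β m) * Lt β t = 2 * (G + (sg β m + kp β m) * ↑t + e) + (1 - sg β m) * Lt β t := by
          field_simp; ring
        rw [e3]; unfold Lt; linear_combination (t:ℝ) * this
      rw [e1]
      set c := (2 * (sg β m - 1) + 2 * e) with hc
      have hcb : |c| ≤ C1 := by
        rw [hc, hC1]; refine (abs_add_le _ _).trans ?_
        rw [abs_mul, abs_mul, abs_two]; linarith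
      have hc2 : c ^ 2 ≤ C1 ^ 2 := sq_le_sq' (by linarith [neg_abs_le c]) (by linarith [le_abs_self c])
      have e2 : 2 * G * ((2 * G + c) / Lt β t) = 4 / Lt β t * G ^ 2 + 2 * (G / Lt β t) * c := by field_simp; ring
      have e3 : 1 / Lt β t ^ 2 * G ^ 2 = (G / Lt β t) ^ 2 := by field_simp
      rw [e2]
      have : fA2 β m n t s = avg (Xs β m n t s) (Lt β t) (fun a => (1 + sW β m n s a) ^ 2) := rfl
      rw [← this]
      nlinarith [sq_nonneg (G / Lt β t - c)]
    rw [EE_add, EE_mul, EE_add, EE_mul, EE_const hβ hm ht htn.le] at h1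
    have hT : 0 ≤ EE β m n t (fun s => fG β m n t s ^ 2) := EE_nonneg hβ hm ht htn.le fun s hs => sq_nonneg _
    have h2 := one_le_tr ht (show 0 ≤ rh β - 1 by linarith [rh_gt hβ])
    have h3 := h n t ht htn.le
    have h4 : 1 / Lt β t ^ 2 * EE β m n t (fun s => fG β m n t s ^ 2) ≤ C / Lt β t ^ 2 * EE β m n t (fun s => fG β m n t s ^ 2) := by
      refine mul_le_mul_of_nonneg_right (div_le_div_of_nonneg_right ?_ (by positivity)) hT
      rw [hC]; nlinarith [sq_nonneg C1, sq_nonneg (1 + sg β m)]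
    have h5 : (C1 ^ 2 + 2 * (1 + sg β m) ^ 2) * 1 ≤ (C1 ^ 2 + 2 * (1 + sg β m) ^ 2) * (t:ℝ) ^ (rh β - 1) :=
      mul_le_mul_of_nonneg_left h2 (by positivity)
    have h6 := tr_nn t (rh β - 1)
    have h7 : C * (t:ℝ) ^ (rh β - 1) = (t:ℝ) ^ (rh β - 1) + (C1 ^ 2 + 2 * (1 + sg β m) ^ 2) * (t:ℝ) ^ (rh β - 1) + 8 * (K * (t:ℝ) ^ (rh β - 1)) := by
      rw [hC]; ring
    linarith

lemma mGabs (hβ : 0 < β) (hm : 1 ≤ m) : ∃ K : ℝ, 0 ≤ K ∧ ∀ n t : ℕ, 1 ≤ t → t ≤ n * m →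
    EE β m n t (fun s => |fG β m n t s|) ≤ K * (t:ℝ) ^ (rh β / 2) := by
  obtain ⟨K, hK, h⟩ := mG2 hβ hm
  refine ⟨K + 1, by positivity, fun n t ht htn => ?_⟩
  have t0 : (0:ℝ) < t := by exact_mod_cast ht
  set x := (t:ℝ) ^ (rh β / 2) with hx
  have x0 : 0 < x := by positivity
  have hxx : (t:ℝ) ^ rh β = x * x := by rw [hx, ← Real.rpow_add t0]; ring_nf
  have h1 : EE β m n t (fun s => |fG β m n t s|) ≤ EE β m n t (fun s => x⁻¹ * fG β m n t s ^ 2 + x) := by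
    refine EE_le hβ hm ht htn fun s hs => ?_
    have : |fG β m n t s| * x ≤ fG β m n t s ^ 2 + x * x := by
      rw [← sq_abs]; nlinarith [sq_nonneg (|fG β m n t s| - x), sq_nonneg (|fG β m n t s|), sq_nonneg x]
    have h2 : |fG β m n t s| = x⁻¹ * (|fG β m n t s| * x) := by field_simp
    have h3 : x⁻¹ * fG β m n t s ^ 2 + x = x⁻¹ * (fG β m n t s ^ 2 + x * x) := by field_simp
    rw [h2, h3]; exact mul_le_mul_of_nonneg_left this (by positivity)
  rw [EE_add, EE_mul, EE_const hβ hm ht htn] at h1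
  have h2 := h n t ht htn
  rw [hxx] at h2
  have h3 := mul_le_mul_of_nonneg_left h2 (inv_nonneg.mpr x0.le)
  have h4 : x⁻¹ * (K * (x * x)) = K * x := by field_simp
  linarith

lemma fy_nn (hβ : 0 < β) (hm : 1 ≤ m) {n t : ℕ} (ht : 1 ≤ t) (htn : t ≤ n * m) {s : St n} (hs : IV m n t s) :
    0 ≤ fy β m n t s := (hs.good hβ hm ht htn).ynn _

/-- (d) -/
lemma my2 (hβ : 0 < β) (hm : 2 ≤ m) : ∃ K : ℝ, 0 ≤ K ∧ ∀ n t : ℕ, 1 ≤ t → t ≤ n * m →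
    EE β m n t (fun s => fy β m n t s ^ 2) ≤ K * (t:ℝ) ^ (rh β - 1) := by
  have hm1 : 1 ≤ m := by omega
  obtain ⟨K, hK, h⟩ := mA2 hβ hm1
  refine ⟨(2 * 2 + 2) ^ m * (2 * (m + 1) ^ 2 * K), by positivity, fun n t ht htn => ?_⟩
  rw [mul_assoc]
  refine block_bound hm (A := 2) (by norm_num) (n * m) (fun t => EE β m n t (fun s => fy β m n t s ^ 2))
    (fun t => 2 * (m + 1) ^ 2 * K * (t:ℝ) ^ (rh β - 1)) (fun t ht => by positivity) ?_ ?_ ?_ ?_ t ht htn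
  · intro t ht _
    have := mul_le_mul_of_nonneg_left (rpow_half (show -1 ≤ rh β - 1 by linarith [rh_gt hβ]) ht) (show 0 ≤ 2 * ((m:ℝ) + 1) ^ 2 * K by positivity)
    linarith
  · simp only [EE_one]; simp [fy, yy, s0]; positivity
  · intro t ht htn hz
    refine le_trans (le_of_eq ?_) (show (0:ℝ) ≤ _ by positivity)
    rw [EE_congr hβ hm1 ht htn (G := fun _ => 0), EE_const hβ hm1 ht htn]
    intro s hs; simp [fy, yy, hs.row0 hz]
  · intro t ht htn hz
    have h1 : EE β m n (t+1) (fun s => fy β m n (t+1) s ^ 2) ≤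
        EE β m n t (fun s => 2 * fy β m n t s ^ 2 + 2 * (m + 1) ^ 2 * fA2 β m n t s) := by
      refine EE_succ_le hβ hm1 ht htn fun s hs => ?_
      have := (hs.good hβ hm1 ht htn.le).stepy2
      simp only [fy, cb_succ hm1 hz, sW_stp]
      exact this
    rw [EE_add, EE_mul, EE_mul] at h1
    have := mul_le_mul_of_nonneg_left (h n t ht htn.le) (show 0 ≤ 2 * ((m:ℝ) + 1) ^ 2 by positivity)
    linarith
end mom


section momb
variable {β : ℝ} {m : ℕ}

noncomputable def pb (β : ℝ) (m : ℕ) : ℝ := 2 * ((1 + β) * m) * (sg β m + kp β m + (2 + β)) / β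
noncomputable def Bd (β : ℝ) (m : ℕ) : ℝ := (sg β m + kp β m + Ce β m) / mu β + 1
noncomputable def fZ {n : ℕ} (m t : ℕ) (s : St n) : ℝ := s.Z (cb m n t)

lemma inv_t {t : ℕ} (ht : 1 ≤ t) {θ : ℝ} (h : -1 ≤ θ) : 1 / (t:ℝ) ≤ (t:ℝ) ^ θ := by
  rw [one_div, ← Real.rpow_neg_one]; exact tr_mono ht h

lemma invLθ (hβ : 0 < β) {t : ℕ} (ht : 1 ≤ t) {θ : ℝ} (h : -1 ≤ θ) : 1 / Lt β t ≤ 1 / mu β * (t:ℝ) ^ θ := by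
  refine (invL hβ ht).trans (mul_le_mul_of_nonneg_left (tr_mono ht h) ?_)
  have := mu_pos hβ; positivity

lemma mZ (hβ : 0 < β) (hm : 2 ≤ m) : ∃ K : ℝ, 0 ≤ K ∧ ∀ n t : ℕ, 1 ≤ t → t ≤ n * m →
    EE β m n t (fun s => fZ m t s) ≤ K * (t:ℝ) ^ (rh β / 2 - 1) := by
  have hm1 : 1 ≤ m := by omega
  have m0 := mu_pos hβ
  have hθ : -1 ≤ rh β / 2 - 1 := by linarith [rh_gt hβ]
  set C := (1 + β) * (m:ℝ) * (1 / mu β) with hC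
  have C0 : 0 ≤ C := by positivity
  set A := 1 + 1 / mu β with hA
  have A0 : 0 ≤ A := by positivity
  refine ⟨(2 * A + 2) ^ m * C, by positivity, fun n t ht htn => ?_⟩
  rw [mul_assoc]
  refine block_bound hm A0 (n * m) (fun t => EE β m n t (fun s => fZ m t s))
    (fun t => C * (t:ℝ) ^ (rh β / 2 - 1)) (fun t ht => by positivity) ?_ ?_ ?_ ?_ t ht htn
  · intro t ht _
    have := mul_le_mul_of_nonneg_left (rpow_half hθ ht) C0
    linarith
  · simp only [EE_one]; simp [fZ, s0]; positivity
  · intro t ht htn hz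
    refine le_trans ?_ (show (0:ℝ) ≤ _ by positivity)
    have := EE_le hβ hm1 ht htn (F := fun s => fZ m t s) (G := fun _ => 0) (fun s hs => by
      have := hs.Zc; rw [hz] at this; simpa [fZ] using this)
    rwa [EE_const hβ hm1 ht htn] at this
  · intro t ht htn hz
    have h1 : EE β m n (t+1) (fun s => fZ m (t+1) s) ≤
        EE β m n t (fun s => A * fZ m t s + C * (t:ℝ) ^ (rh β / 2 - 1)) := by
      refine EE_succ_le hβ hm1 ht htn fun s hs => ?_
      have hg := hs.good hβ hm1 ht htn.le
      simp only [fZ, cb_succ hm1 hz, stp, stepZ]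
      rw [avg_add, hg.const]
      have e : avg (Xs β m n t s) (Lt β t) (fun a => ind a (cb m n t)) = Xs β m n t s (cb m n t) * (1 / Lt β t) := by
        simp [avg, ind]; ring
      rw [e]
      have h2 : Xs β m n t s (cb m n t) ≤ (1 + β) * m + s.Z (cb m n t) := (hg.Xle _).trans (hg.Wle _)
      have L0 := hg.Lpos
      have h3 := mul_le_mul_of_nonneg_right h2 (show 0 ≤ 1 / Lt β t by positivity)
      have h4 := mul_le_mul_of_nonneg_left (invL' hβ ht) (hs.Znn (cb m n t))
      have h5 := mul_le_mul_of_nonneg_left (invLθ hβ ht hθ) (show 0 ≤ (1 + β) * (m:ℝ) by positivity)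
      rw [hA, hC]; nlinarith
    rw [EE_add, EE_mul, EE_const hβ hm1 ht htn.le] at h1
    exact h1

lemma fA_abs (hβ : 0 < β) (hm : 1 ≤ m) {n t : ℕ} (ht : 1 ≤ t) (htn : t ≤ n * m) {s : St n} (hs : IV m n t s) :
    |fA β m n t s + 1| ≤ |fG β m n t s| / Lt β t + Bd β m := by
  obtain ⟨e, he, h⟩ := fA_eq hβ hm ht htn hs
  have L0 := Lt_pos hβ ht
  have sk : 0 ≤ sg β m + kp β m := by have := sg_pos (m := m) hβ; have := kp_nn (m := m) hβ; linarith
  have e1 : fA β m n t s + 1 = fG β m n t s / Lt β t + ((sg β m + kp β m) * (t / Lt β t) + e * (1 / Lt β t) + 1) := by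
    rw [h]; ring
  rw [e1]
  refine (abs_add_le _ _).trans ?_
  rw [abs_div, abs_of_pos L0]
  have h1 := mul_le_mul_of_nonneg_left (tL hβ ht) sk
  have p1 : 0 ≤ (t:ℝ) / Lt β t := by positivity
  have p2 : 0 ≤ 1 / Lt β t := by positivity
  have h2 : |e * (1 / Lt β t)| ≤ Ce β m * (1 / mu β) := by
    rw [abs_mul, abs_of_nonneg p2]; exact mul_le_mul he (invL' hβ ht) p2 (Ce_nn hβ)
  have h3 : |(sg β m + kp β m) * (t / Lt β t) + e * (1 / Lt β t) + 1| ≤ (sg β m + kp β m) * (t / Lt β t) + |e * (1 / Lt β t)| + 1 := by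
    refine (abs_add_le _ _).trans ?_
    refine add_le_add ((abs_add_le _ _).trans ?_) (by simp)
    rw [abs_of_nonneg (show 0 ≤ (sg β m + kp β m) * (t / Lt β t) by positivity)]
  have h4 : Bd β m = (sg β m + kp β m) * (1 / mu β) + Ce β m * (1 / mu β) + 1 := by unfold Bd; ring
  rw [h4]; linarith

lemma Bd_nn (hβ : 0 < β) : 0 ≤ Bd β m := by
  have := sg_pos (m := m) hβ; have := kp_nn (m := m) hβ; have := Ce_nn (m := m) hβ; have := mu_pos hβ
  unfold Bd; positivity

lemma P_path_arith {w0 c2 c1 m B x1 x2 x3 x4 x5 : ℝ} (w0n : 0 ≤ w0) (h2 : 0 ≤ c2) (h1 : 0 ≤ c1) (m0 : 0 ≤ m)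
    (B0 : 0 ≤ B) (p1 : 0 ≤ x1) (p2 : 0 ≤ x2) (p3 : 0 ≤ x3) (p4 : 0 ≤ x4) (p5 : 0 ≤ x5) :
    2 * w0 * x2 + (2 * w0 * x1 + 2 * w0 * c2 * x4) + (4 * m * x1 + 2 * c1 * x3 + 2 * c1 * m * x5) + 2 * B ^ 2 * (B + 1) * x4 ≤
    (2 * w0 + 2 * w0 + 2 * w0 * c2 + 4 * m + 2 * c1 + 2 * c1 * m + 2 * B ^ 2 * (B + 1)) * (x1 + x2 + x3 + x4 + x5) := by
  have r0 : 2 * w0 * x2 ≤ 2 * w0 * (x1 + x2 + x3 + x4 + x5) := mul_le_mul_of_nonneg_left (by linarith) (by positivity)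
  have r1 : 2 * w0 * x1 ≤ 2 * w0 * (x1 + x2 + x3 + x4 + x5) := mul_le_mul_of_nonneg_left (by linarith) (by positivity)
  have r2 : 2 * w0 * c2 * x4 ≤ 2 * w0 * c2 * (x1 + x2 + x3 + x4 + x5) := mul_le_mul_of_nonneg_left (by linarith) (by positivity)
  have r3 : 4 * m * x1 ≤ 4 * m * (x1 + x2 + x3 + x4 + x5) := mul_le_mul_of_nonneg_left (by linarith) (by positivity)
  have r4 : 2 * c1 * x3 ≤ 2 * c1 * (x1 + x2 + x3 + x4 + x5) := mul_le_mul_of_nonneg_left (by linarith) (by positivity)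
  have r5 : 2 * c1 * m * x5 ≤ 2 * c1 * m * (x1 + x2 + x3 + x4 + x5) := mul_le_mul_of_nonneg_left (by linarith) (by positivity)
  have r6 : 2 * B ^ 2 * (B + 1) * x4 ≤ 2 * B ^ 2 * (B + 1) * (x1 + x2 + x3 + x4 + x5) := mul_le_mul_of_nonneg_left (by linarith) (by positivity)
  linarith

lemma P_path (hβ : 0 < β) (hm : 1 ≤ m) : ∃ C : ℝ, 0 ≤ C ∧ ∀ n t : ℕ, 1 ≤ t → t ≤ n * m → ∀ s : St n, IV m n t s →
    |avg (Xs β m n t s) (Lt β t) (fun a => fP β m n (stp m n t s a)) -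
      ((1 + 2 / Lt β t) * fP β m n s + 2 * ((1 + β) * m) * ((sg β m + kp β m) * t + Lt β t) / Lt β t)| ≤
    C * (|fG β m n t s| / Lt β t + fy β m n t s / Lt β t + fZ m t s + 1 / Lt β t + 1 / t) := by
  set w0 := (1 + β) * (m:ℝ) with hw0
  set B := w0 + m with hB
  have w0n : 0 ≤ w0 := by positivity
  have hBd := Bd_nn (m := m) hβ
  have hCe := Ce_nn (m := m) hβ
  have B0 : 0 ≤ B := by positivity
  refine ⟨2 * w0 + 2 * w0 + 2 * w0 * Ce β m + 4 * m + 2 * Bd β m + 2 * Bd β m * m + 2 * B ^ 2 * (B + 1), by positivity, ?_⟩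
  intro n t ht htn s hs
  have hg := hs.good hβ hm ht htn
  have hst := hg.stepP
  have L0 := hg.Lpos
  have t0 : (0:ℝ) < t := by exact_mod_cast ht
  have hf : (fun a => fP β m n (stp m n t s a)) = fun a => PP (stepM s.M (cb m n t) a) (stepZ (sW β m n s) a) := by
    funext a; unfold fP; rw [sW_stp]; rfl
  rw [hf, hst]; unfold fP
  have hfa : avg (Xs β m n t s) (Lt β t) (sW β m n s) = fA β m n t s := rfl
  rw [hfa]
  have h1 := fA_abs hβ hm ht htn hs
  obtain ⟨e, he, h⟩ := fA_eq hβ hm ht htn hs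
  have hy := fy_nn hβ hm ht htn hs
  change _ ≤ _ at hy
  have hyd : yy s.M (sW β m n s) (cb m n t) = fy β m n t s := rfl
  rw [hyd]
  set y := fy β m n t s
  set G := fG β m n t s
  set a := fA β m n t s
  set g := (1 + β) * ((m:ℝ) - ((t % m : ℕ):ℝ))
  set Wc := sW β m n s (cb m n t) with hWc
  set Xc := Xs β m n t s (cb m n t)
  have z0 : 0 ≤ fZ m t s := hs.Znn _
  have zm : fZ m t s ≤ m := hg.Zc
  have hd : |Wc - w0| ≤ fZ m t s + m * (1 / t) := by
    have : Wc - w0 = fZ m t s - (if (cb m n t).val = 0 then 1 else 0) := by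
      rw [hWc]; unfold sW wv fZ; ring
    rw [this, cb_val hm htn]
    refine (abs_sub _ _).trans ?_
    rw [abs_of_nonneg z0]
    gcongr
    split_ifs with hq
    · have : t < m := by
        rcases Nat.div_eq_zero_iff.mp hq with h | h
        · omega
        · exact h
      have : (t:ℝ) ≤ m := by exact_mod_cast this.le
      rw [abs_one, mul_one_div, le_div_iff₀ t0]; linarith
    · rw [abs_zero]; positivity
  have it1 : 1 / (t:ℝ) ≤ 1 := by rw [div_le_one t0]; exact_mod_cast ht
  have it0 : 0 ≤ 1 / (t:ℝ) := by positivity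
  have m0 : (0:ℝ) ≤ m := by positivity
  have hd2 : |Wc - w0| ≤ 2 * m := by nlinarith
  have il0 : 0 ≤ 1 / Lt β t := by positivity
  have G0 : 0 ≤ |G| / Lt β t := by positivity
  have y0 : 0 ≤ y / Lt β t := by positivity
  have b1 : |2 * g * (y / Lt β t)| ≤ 2 * w0 * (y / Lt β t) := by
    rw [abs_of_nonneg (by have := hg.gnn; positivity)]
    exact mul_le_mul_of_nonneg_right (by linarith [hg.gle]) y0
  have b2 : |2 * w0 * ((G + e) / Lt β t)| ≤ 2 * w0 * (|G| / Lt β t) + 2 * w0 * Ce β m * (1 / Lt β t) := by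
    rw [abs_mul, abs_of_nonneg (show 0 ≤ 2 * w0 by positivity), abs_div, abs_of_pos L0]
    have : |G + e| / Lt β t ≤ |G| / Lt β t + Ce β m * (1 / Lt β t) := by
      rw [mul_one_div, ← add_div]
      exact div_le_div_of_nonneg_right ((abs_add_le _ _).trans (by linarith)) L0.le
    have := mul_le_mul_of_nonneg_left this (show 0 ≤ 2 * w0 by positivity)
    linarith
  have b3 : |2 * ((Wc - w0) * (a + 1))| ≤ 4 * m * (|G| / Lt β t) + 2 * Bd β m * fZ m t s + 2 * Bd β m * m * (1 / t) := by
    rw [abs_mul, abs_two, abs_mul]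
    have q1 := mul_le_mul_of_nonneg_left h1 (abs_nonneg (Wc - w0))
    have q2 := mul_le_mul_of_nonneg_right hd2 G0
    have q3 := mul_le_mul_of_nonneg_right hd hBd
    nlinarith
  have b4 : |2 * Wc * (Xc * (Wc + 1)) * (1 / Lt β t)| ≤ 2 * B ^ 2 * (B + 1) * (1 / Lt β t) := by
    have w1 : 0 ≤ Wc := hg.Wnn _
    have w2 : Wc ≤ B := hg.Wc
    have x1 : 0 ≤ Xc := hg.Xnn _
    have x2 : Xc ≤ B := (hg.Xle _).trans w2
    rw [abs_of_nonneg (by positivity)]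
    refine mul_le_mul_of_nonneg_right ?_ il0
    have := mul_le_mul w2 (mul_le_mul x2 (show Wc + 1 ≤ B + 1 by linarith) (by positivity) B0) (by positivity) B0
    nlinarith
  have key : (1 + 2 / Lt β t) * PP s.M (sW β m n s) - 2 * g * y / Lt β t + 2 * Wc * (a + 1) - 2 * Wc * (Xc * (Wc + 1)) / Lt β t -
      ((1 + 2 / Lt β t) * PP s.M (sW β m n s) + 2 * w0 * ((sg β m + kp β m) * ↑t + Lt β t) / Lt β t)
      = - (2 * g * (y / Lt β t)) + 2 * w0 * ((G + e) / Lt β t) + 2 * ((Wc - w0) * (a + 1)) - 2 * Wc * (Xc * (Wc + 1)) * (1 / Lt β t) := by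
    have : 2 * w0 * ((G + e) / Lt β t) = 2 * w0 * (a + 1) - 2 * w0 * ((sg β m + kp β m) * ↑t + Lt β t) / Lt β t := by
      rw [h]; field_simp; ring
    rw [this]; ring
  rw [key]
  refine (abs_sub _ _).trans ?_
  refine (add_le_add ((abs_add_le _ _).trans (add_le_add ((abs_add_le _ _).trans (add_le_add (abs_neg _).le le_rfl)) le_rfl)) le_rfl).trans ?_
  refine (add_le_add (add_le_add (add_le_add b1 b2) b3) b4).trans ?_
  exact P_path_arith w0n hCe hBd m0 B0 G0 y0 z0 il0 it0

/-- first moment of y_c -/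
lemma my (hβ : 0 < β) (hm : 2 ≤ m) : ∃ K : ℝ, 0 ≤ K ∧ ∀ n t : ℕ, 1 ≤ t → t ≤ n * m →
    EE β m n t (fun s => fy β m n t s) / Lt β t ≤ K * (t:ℝ) ^ (rh β / 2 - 1) := by
  have hm1 : 1 ≤ m := by omega
  obtain ⟨K, hK, h⟩ := my2 hβ hm
  have m0 := mu_pos hβ
  refine ⟨(1 + K) / mu β, by positivity, fun n t ht htn => ?_⟩
  have h1 : EE β m n t (fun s => fy β m n t s) ≤ EE β m n t (fun s => 1 + fy β m n t s ^ 2) :=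
    EE_le hβ hm1 ht htn fun s hs => by nlinarith [sq_nonneg (fy β m n t s - 1)]
  rw [EE_add, EE_const hβ hm1 ht htn] at h1
  have h2 := one_le_tr ht (show 0 ≤ rh β - 1 by linarith [rh_gt hβ])
  have h3 : EE β m n t (fun s => fy β m n t s) ≤ (1 + K) * (t:ℝ) ^ (rh β - 1) := by
    have := h n t ht htn; nlinarith
  refine (divL hβ ht (by positivity) h3).trans (mul_le_mul_of_nonneg_left (tr_mono ht ?_) (by positivity))
  linarith [rh_lt hβ]

/-- (e) -/
lemma mP (hβ : 0 < β) (hm : 2 ≤ m) : ∃ K : ℝ, 0 ≤ K ∧ ∀ n t : ℕ, 1 ≤ t → t ≤ n * m →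
    |EE β m n t (fun s => fP β m n s) - pb β m * t| ≤ K * (t:ℝ) ^ (rh β / 2) := by
  have hm1 : 1 ≤ m := by omega
  have m0 := mu_pos hβ
  obtain ⟨C, hC, hpath⟩ := P_path hβ hm1
  obtain ⟨Ky, hKy, hy⟩ := my hβ hm
  obtain ⟨Kz, hKz, hz⟩ := mZ hβ hm
  obtain ⟨Kg, hKg, hg⟩ := mGabs hβ hm1
  have hθ : -1 ≤ rh β / 2 - 1 := by linarith [rh_gt hβ]
  set w0 := (1 + β) * (m:ℝ) with hw0
  have w0n : 0 ≤ w0 := by positivity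
  have pb0 : 0 ≤ pb β m := by
    have := sg_pos (m := m) hβ; have := kp_nn (m := m) hβ
    unfold pb; positivity
  set D := C * (Kg / mu β + Ky + Kz + 1 / mu β + 1) + (2 * pb β m + 4 * w0) * (1 / mu β) with hD
  have D0 : 0 ≤ D := by positivity
  obtain ⟨K, hK, h⟩ := growth hβ (q := 2) (C := D) (ρ := rh β / 2) (pb β m) (by norm_num) D0 (by linarith [rh_gt hβ]) (by
    unfold rh; rw [div_lt_iff₀ (by positivity)]; field_simp; linarith)
  refine ⟨K, hK, fun n => h (n * m) (fun t => |EE β m n t (fun s => fP β m n s) - pb β m * t|) ?_ ?_⟩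
  · simp only [EE_one]
    simp [fP, PP, yy, s0, abs_of_nonneg pb0]
  · intro t ht htn
    have L0 := Lt_pos hβ ht
    set H := fun s : St n => (1 + 2 / Lt β t) * fP β m n s + 2 * w0 * ((sg β m + kp β m) * t + Lt β t) / Lt β t with hH
    have e1 : EE β m n t H = (1 + 2 / Lt β t) * EE β m n t (fun s => fP β m n s) + 2 * w0 * ((sg β m + kp β m) * t + Lt β t) / Lt β t := by
      rw [hH, EE_add, EE_mul, EE_const hβ hm1 ht htn.le]
    have h1 : |EE β m n (t+1) (fun s => fP β m n s) - EE β m n t H| ≤ D * (t:ℝ) ^ (rh β / 2 - 1) - (2 * pb β m + 4 * w0) * (1 / mu β) * (t:ℝ) ^ (rh β / 2 - 1) := by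
      rw [EE_succ ht, ← EE_sub]
      refine (EE_abs hβ hm1 ht htn.le _).trans ?_
      refine (EE_le hβ hm1 ht htn.le (fun s hs => hpath n t ht htn.le s hs)).trans ?_
      rw [EE_mul, EE_add, EE_add, EE_add, EE_add, EE_div, EE_div, EE_const hβ hm1 ht htn.le, EE_const hβ hm1 ht htn.le]
      have a1 := divL hβ ht hKg (hg n t ht htn.le)
      have a2 := hy n t ht htn.le
      have a3 := hz n t ht htn.le
      have a4 := invLθ hβ ht hθ
      have a5 := inv_t ht hθ
      have a6 := mul_le_mul_of_nonneg_left (add_le_add (add_le_add (add_le_add (add_le_add a1 a2) a3) a4) a5) hC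
      refine a6.trans (le_of_eq ?_)
      rw [hD]; ring
    have e2 : EE β m n t H - pb β m * ((t+1:ℕ):ℝ) = (1 + 2 / Lt β t) * (EE β m n t (fun s => fP β m n s) - pb β m * t) + (2 * pb β m - 4 * w0) * (1 / Lt β t) := by
      rw [e1]
      have hpb : pb β m * β = 2 * w0 * (sg β m + kp β m + (2 + β)) := by
        unfold pb; rw [hw0]; field_simp
      have : 2 * w0 * ((sg β m + kp β m) * t + Lt β t) / Lt β t - pb β m * ((t+1:ℕ):ℝ) = (- (1 + 2 / Lt β t)) * (pb β m * t) + (2 * pb β m - 4 * w0) * (1 / Lt β t) := by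
        push_cast
        field_simp
        unfold Lt
        linear_combination (-(t:ℝ)) * hpb
      linear_combination this
    have e3 : EE β m n (t+1) (fun s => fP β m n s) - pb β m * ((t+1:ℕ):ℝ) = (EE β m n (t+1) (fun s => fP β m n s) - EE β m n t H) + (EE β m n t H - pb β m * ((t+1:ℕ):ℝ)) := by ring
    rw [e3]
    refine (abs_add_le _ _).trans ?_
    rw [e2]
    set u := EE β m n t (fun s => fP β m n s) - pb β m * t
    have h2 : |(1 + 2 / Lt β t) * u + (2 * pb β m - 4 * w0) * (1 / Lt β t)| ≤ (1 + 2 / Lt β t) * |u| + (2 * pb β m + 4 * w0) * (1 / mu β) * (t:ℝ) ^ (rh β / 2 - 1) := by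
      refine (abs_add_le _ _).trans ?_
      rw [abs_mul, abs_mul, abs_of_nonneg (show 0 ≤ 1 + 2 / Lt β t by positivity), abs_of_nonneg (show 0 ≤ 1 / Lt β t by positivity), mul_assoc]
      have : |2 * pb β m - 4 * w0| ≤ 2 * pb β m + 4 * w0 := by rw [abs_le]; constructor <;> linarith
      have := mul_le_mul this (invLθ hβ ht hθ) (by positivity) (by positivity)
      linarith
    have h3 : 0 ≤ D / Lt β t ^ 2 * |u| := by positivity
    nlinarith
end momb


section momc
variable {β : ℝ} {m : ℕ}

noncomputable def qb (β : ℝ) (m : ℕ) : ℝ := pb β m / (2 + β)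

lemma qb_nn (hβ : 0 < β) : 0 ≤ qb β m := by
  have := sg_pos (m := m) hβ; have := kp_nn (m := m) hβ
  unfold qb pb; positivity

lemma fV_zero {n t : ℕ} {s : St n} (hs : IV m n t s) (hz : t % m = 0) : fV β m n t s = 0 := by
  simp [fV, VV, hs.row0 hz]

/-- (f) -/
lemma mV (hβ : 0 < β) (hm : 2 ≤ m) : ∃ K : ℝ, 0 ≤ K ∧ ∀ n t : ℕ, 1 ≤ t → t ≤ n * m →
    |EE β m n t (fun s => fV β m n t s) - ((t % m : ℕ):ℝ) * qb β m| ≤ K * (t:ℝ) ^ (rh β / 2 - 1) := by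
  have hm1 : 1 ≤ m := by omega
  have m0 := mu_pos hβ
  have hθ : -1 ≤ rh β / 2 - 1 := by linarith [rh_gt hβ]
  obtain ⟨Ky, hKy, hy⟩ := my hβ hm
  obtain ⟨Kp, hKp, hp⟩ := mP hβ hm
  have q0 := qb_nn (m := m) hβ
  set q := qb β m with hq
  set B := (1 + β) * (m:ℝ) + m with hB
  have B0 : 0 ≤ B := by positivity
  set A := 1 + 1 / mu β with hA
  have A0 : 0 ≤ A := by positivity
  set C := q + (m * q + 2 * q) * (1 / mu β) + Kp / mu β + 2 * B * Ky with hC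
  have C0 : 0 ≤ C := by positivity
  refine ⟨(2 * A + 2) ^ m * C, by positivity, fun n t ht htn => ?_⟩
  rw [mul_assoc]
  refine block_bound hm A0 (n * m) (fun t => |EE β m n t (fun s => fV β m n t s) - ((t % m : ℕ):ℝ) * q|)
    (fun t => C * (t:ℝ) ^ (rh β / 2 - 1)) (fun t ht => by positivity) ?_ ?_ ?_ ?_ t ht htn
  · intro t ht _
    have := mul_le_mul_of_nonneg_left (rpow_half hθ ht) C0
    linarith
  · simp only [EE_one]
    have : 1 % m = 1 := Nat.mod_eq_of_lt (by omega)
    simp [fV, VV, yy, s0, this, abs_of_nonneg q0]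
    have h1 : 0 ≤ (m * q + 2 * q) * (1 / mu β) + Kp / mu β + 2 * B * Ky := by positivity
    rw [hC]; linarith
  · intro t ht htn hz
    refine le_trans (le_of_eq ?_) (show (0:ℝ) ≤ _ by positivity)
    rw [EE_congr hβ hm1 ht htn (G := fun _ => 0) (fun s hs => fV_zero hs hz), EE_const hβ hm1 ht htn, hz]
    simp
  · intro t ht htn hz
    have L0 := Lt_pos hβ ht
    have h1 : EE β m n (t+1) (fun s => fV β m n (t+1) s) =
        EE β m n t (fun s => (1 + 1 / Lt β t) * fV β m n t s + fP β m n s / Lt β t - (2 * sW β m n s (cb m n t) * fy β m n t s) / Lt β t) := by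
      refine EE_succ_eq hβ hm1 ht htn fun s hs => ?_
      have := (hs.good hβ hm1 ht htn.le).stepV
      simp only [fV, fP, fy, cb_succ hm1 hz, sW_stp]
      refine this.trans ?_
      ring
    rw [EE_sub, EE_add, EE_mul, EE_div, EE_div] at h1
    have hw : |EE β m n t (fun s => 2 * sW β m n s (cb m n t) * fy β m n t s) / Lt β t| ≤ 2 * B * Ky * (t:ℝ) ^ (rh β / 2 - 1) := by
      have a1 : 0 ≤ EE β m n t (fun s => 2 * sW β m n s (cb m n t) * fy β m n t s) := EE_nonneg hβ hm1 ht htn.le fun s hs => by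
        have := (hs.good hβ hm1 ht htn.le).Wnn (cb m n t)
        have := fy_nn hβ hm1 ht htn.le hs
        positivity
      have a2 : EE β m n t (fun s => 2 * sW β m n s (cb m n t) * fy β m n t s) ≤ EE β m n t (fun s => 2 * B * fy β m n t s) := EE_le hβ hm1 ht htn.le fun s hs => by
        have := (hs.good hβ hm1 ht htn.le).Wc
        have := fy_nn hβ hm1 ht htn.le hs
        exact mul_le_mul_of_nonneg_right (by linarith) this
      rw [EE_mul] at a2
      rw [abs_of_nonneg (by positivity)]
      refine (div_le_div_of_nonneg_right a2 L0.le).trans ?_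
      have := mul_le_mul_of_nonneg_left (hy n t ht htn.le) (show 0 ≤ 2 * B by positivity)
      rw [mul_div_assoc]; linarith
    rw [h1, (mod_succ hm1 hz).1]
    set V := EE β m n t (fun s => fV β m n t s)
    set P := EE β m n t (fun s => fP β m n s)
    set Y := EE β m n t (fun s => 2 * sW β m n s (cb m n t) * fy β m n t s) / Lt β t
    have hP := hp n t ht htn.le
    have hP2 : |(P - pb β m * t) / Lt β t| ≤ Kp / mu β * (t:ℝ) ^ (rh β / 2 - 1) := by
      rw [abs_div, abs_of_pos L0]; exact divL hβ ht hKp hP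
    set k := ((t % m : ℕ):ℝ) with hk
    have km : k ≤ m := by rw [hk]; exact_mod_cast (Nat.mod_lt t (by omega)).le
    have k0 : 0 ≤ k := by positivity
    have e1 : (1 + 1 / Lt β t) * V + P / Lt β t - Y - ((t % m + 1 : ℕ):ℝ) * q = (1 + 1 / Lt β t) * (V - k * q) + (k * q + 2 * q) * (1 / Lt β t) + (P - pb β m * t) / Lt β t - Y := by
      have hqb : pb β m = q * (2 + β) := by rw [hq]; unfold qb; field_simp
      have : pb β m * t = q * Lt β t + 2 * q := by rw [hqb]; unfold Lt; ring
      rw [this]; push_cast; field_simp; ring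
    rw [e1]
    refine (abs_sub _ _).trans ?_
    refine (add_le_add ((abs_add_le _ _).trans (add_le_add (abs_add_le _ _) le_rfl)) le_rfl).trans ?_
    have b1 : |(1 + 1 / Lt β t) * (V - k * q)| ≤ A * |V - k * q| := by
      rw [abs_mul, abs_of_nonneg (show 0 ≤ 1 + 1 / Lt β t by positivity)]
      exact mul_le_mul_of_nonneg_right (by rw [hA]; linarith [invL' hβ ht]) (abs_nonneg _)
    have b2 : |(k * q + 2 * q) * (1 / Lt β t)| ≤ (m * q + 2 * q) * (1 / mu β) * (t:ℝ) ^ (rh β / 2 - 1) := by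
      rw [abs_of_nonneg (by positivity), mul_assoc]
      exact mul_le_mul (by nlinarith) (invLθ hβ ht hθ) (by positivity) (by positivity)
    have b3 : 0 ≤ q * (t:ℝ) ^ (rh β / 2 - 1) := by positivity
    have e2 : C * (t:ℝ) ^ (rh β / 2 - 1) = q * (t:ℝ) ^ (rh β / 2 - 1) + (m * q + 2 * q) * (1 / mu β) * (t:ℝ) ^ (rh β / 2 - 1) + Kp / mu β * (t:ℝ) ^ (rh β / 2 - 1) + 2 * B * Ky * (t:ℝ) ^ (rh β / 2 - 1) := by
      rw [hC]; ring
    linarith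

lemma EN_sum (hβ : 0 < β) (hm : 1 ≤ m) {n t : ℕ} (ht : 1 ≤ t) (htn : t ≤ n * m) :
    EE β m n t (fun s => fN s) = ∑ j ∈ Finset.Ico 1 t, EE β m n j (fun s => fV β m n j s) / Lt β j := by
  induction t, ht using Nat.le_induction with
  | base => simp [EE_one, fN, NN, s0]
  | succ t ht ih =>
    rw [Finset.sum_Ico_succ_top ht, ← ih (by omega), ← EE_div, ← EE_add]
    exact EE_succ_eq hβ hm ht (by omega) fun s hs => (hs.good hβ hm ht (by omega)).stepN

/-- (g) -/
lemma mN (hβ : 0 < β) (hm : 2 ≤ m) : ∃ C : ℝ, 0 ≤ C ∧ ∀ n : ℕ, 1 ≤ n →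
    |EE β m n (n * m) (fun s => fN s) - qb β m / (2 + β) * (((m:ℝ) - 1) / 2) * Real.log n| ≤ C := by
  have hm1 : 1 ≤ m := by omega
  have m0 := mu_pos hβ
  obtain ⟨K, hK, h⟩ := mV hβ hm
  obtain ⟨C1, hC1, h1⟩ := pseries (show rh β / 2 - 1 - 1 < -1 by linarith [rh_lt hβ])
  obtain ⟨C2, hC2, h2⟩ := pseries (show (-2:ℝ) < -1 by norm_num)
  obtain ⟨C3, hC3, h3⟩ := modsum hm
  have q0 := qb_nn (m := m) hβ
  set q := qb β m with hq
  set r := q / (2 + β) with hr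
  have r0 : 0 ≤ r := by positivity
  refine ⟨K / mu β * C1 + 2 * m * r * (1 / mu β) * C2 + r * C3, by positivity, fun n hn => ?_⟩
  have hnm : 1 ≤ n * m := Nat.mul_pos hn hm1
  rw [EN_sum hβ hm1 hnm le_rfl]
  have a1 : |∑ j ∈ Finset.Ico 1 (n * m), EE β m n j (fun s => fV β m n j s) / Lt β j - ∑ j ∈ Finset.Ico 1 (n * m), ((j % m : ℕ):ℝ) * q / Lt β j| ≤ K / mu β * C1 := by
    rw [← Finset.sum_sub_distrib]
    refine (Finset.abs_sum_le_sum_abs _ _).trans ?_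
    refine le_trans ?_ (mul_le_mul_of_nonneg_left (h1 (n * m)) (show 0 ≤ K / mu β by positivity))
    rw [Finset.mul_sum]
    refine Finset.sum_le_sum fun j hj => ?_
    obtain ⟨j1, j2⟩ := Finset.mem_Ico.mp hj
    rw [← sub_div, abs_div, abs_of_pos (Lt_pos hβ j1)]
    exact divL hβ j1 hK (h n j j1 j2.le)
  have a2 : |∑ j ∈ Finset.Ico 1 (n * m), ((j % m : ℕ):ℝ) * q / Lt β j - r * ∑ j ∈ Finset.Ico 1 (n * m), ((j % m : ℕ):ℝ) / j| ≤ 2 * m * r * (1 / mu β) * C2 := by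
    rw [Finset.mul_sum, ← Finset.sum_sub_distrib]
    refine (Finset.abs_sum_le_sum_abs _ _).trans ?_
    refine le_trans ?_ (mul_le_mul_of_nonneg_left (h2 (n * m)) (show 0 ≤ 2 * m * r * (1 / mu β) by positivity))
    rw [Finset.mul_sum]
    refine Finset.sum_le_sum fun j hj => ?_
    obtain ⟨j1, j2⟩ := Finset.mem_Ico.mp hj
    have j0 : (0:ℝ) < j := by exact_mod_cast j1
    have L0 := Lt_pos hβ j1
    have e : ((j % m : ℕ):ℝ) * q / Lt β j - r * (((j % m : ℕ):ℝ) / j) = 2 * ((j % m : ℕ):ℝ) * r * (1 / Lt β j) * (j:ℝ) ^ (-1:ℝ) := by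
      have : q = r * (2 + β) := by rw [hr]; field_simp
      rw [this, Real.rpow_neg_one]; field_simp; unfold Lt; ring
    rw [e, abs_of_nonneg (by positivity)]
    have km : ((j % m : ℕ):ℝ) ≤ m := by exact_mod_cast (Nat.mod_lt j (by omega)).le
    have e2 : (j:ℝ) ^ (-2:ℝ) = (j:ℝ) ^ (-1:ℝ) * (j:ℝ) ^ (-1:ℝ) := by rw [← Real.rpow_add j0]; norm_num
    rw [e2]
    have p := tr_nn j (-1)
    calc 2 * ((j % m : ℕ):ℝ) * r * (1 / Lt β j) * (j:ℝ) ^ (-1:ℝ) ≤ 2 * m * r * (1 / mu β * (j:ℝ) ^ (-1:ℝ)) * (j:ℝ) ^ (-1:ℝ) := by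
          gcongr
          exact invL hβ j1
      _ = _ := by ring
  have a3 := mul_le_mul_of_nonneg_left (h3 n hn) r0
  have e3 : r * |∑ t ∈ Finset.Ico 1 (n * m), ((t % m : ℕ):ℝ) / t - ((m:ℝ) - 1) / 2 * Real.log n| = |r * ∑ t ∈ Finset.Ico 1 (n * m), ((t % m : ℕ):ℝ) / t - r * (((m:ℝ) - 1) / 2) * Real.log n| := by
    rw [← abs_of_nonneg r0, ← abs_mul, abs_of_nonneg r0]; congr 1; ring
  rw [e3] at a3
  rw [abs_le] at *
  constructor <;> linarith [a1.1, a1.2, a2.1, a2.2, a3.1, a3.2]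
end momc


section momd
variable {β : ℝ} {m : ℕ}

/-- (h) -/
lemma mR (hβ : 0 < β) (hm : 2 ≤ m) : ∃ K : ℝ, 0 ≤ K ∧ ∀ n t : ℕ, 1 ≤ t → t ≤ n * m →
    EE β m n t (fun s => fR β m n s) ≤ K * (t:ℝ) ^ rh β := by
  have hm1 : 1 ≤ m := by omega
  obtain ⟨K1, hK1, h1⟩ := mA2 hβ hm1
  obtain ⟨K2, hK2, h2⟩ := my2 hβ hm
  set w0 := (1 + β) * (m:ℝ) with hw0
  have w0n : 0 ≤ w0 := by positivity
  set D := (((m:ℝ) + 2 * (w0 + m)) ^ 2 / 4 + (w0 + m) ^ 2 + 2 * (w0 + m + 1) * (m + 1) ^ 2) with hD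
  have D0 : 0 ≤ D := by positivity
  set C := D * K1 + (w0 + m + 1) * K2 with hC
  have C0 : 0 ≤ C := by positivity
  obtain ⟨K, hK, h⟩ := growth hβ (q := 4) (C := C) (ρ := rh β) 0 (by norm_num) C0 (by linarith [rh_gt hβ]) (by
    unfold rh; rw [div_lt_iff₀ (by positivity)]; field_simp; linarith)
  refine ⟨K, hK, fun n => h (n * m) (fun t => EE β m n t (fun s => fR β m n s)) ?_ ?_⟩
  · rw [EE_one]; simp [fR, RR, yy, s0]
  · intro t ht htn
    have a1 : EE β m n (t+1) (fun s => fR β m n s) ≤ EE β m n t (fun s => (1 + 4 / Lt β t) * fR β m n s + D * fA2 β m n t s + (w0 + m + 1) * fy β m n t s ^ 2) := by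
      refine EE_succ_le hβ hm1 ht htn fun s hs => ?_
      simp only [fR, sW_stp]
      exact (hs.good hβ hm1 ht htn.le).stepR
    rw [EE_add, EE_add, EE_mul, EE_mul, EE_mul] at a1
    have hT : 0 ≤ EE β m n t (fun s => fR β m n s) := EE_nonneg hβ hm1 ht htn.le fun s hs =>
      (hs.good hβ hm1 ht htn.le).Rnn
    have a2 := mul_le_mul_of_nonneg_left (h1 n t ht htn.le) D0
    have a3 := mul_le_mul_of_nonneg_left (h2 n t ht htn.le) (show 0 ≤ w0 + m + 1 by positivity)
    have a4 : 0 ≤ C / Lt β t ^ 2 * EE β m n t (fun s => fR β m n s) := by positivity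
    have e : C * (t:ℝ) ^ (rh β - 1) = D * (K1 * (t:ℝ) ^ (rh β - 1)) + (w0 + m + 1) * (K2 * (t:ℝ) ^ (rh β - 1)) := by rw [hC]; ring
    linarith

/-- (i) -/
lemma mP2 (hβ : 0 < β) (hm : 2 ≤ m) : ∃ K : ℝ, 0 ≤ K ∧ ∀ n t : ℕ, 1 ≤ t → t ≤ n * m →
    EE β m n t (fun s => fP β m n s ^ 2) ≤ K * (t:ℝ) ^ (2:ℝ) := by
  have hm1 : 1 ≤ m := by omega
  have m0 := mu_pos hβ
  obtain ⟨K1, hK1, h1⟩ := mA2 hβ hm1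
  obtain ⟨K2, hK2, h2⟩ := mG2 hβ hm1
  obtain ⟨K3, hK3, h3⟩ := mR hβ hm
  set w0 := (1 + β) * (m:ℝ) with hw0
  have w0n : 0 ≤ w0 := by positivity
  set D := 4 * (w0 + m) ^ 2 / β with hD
  set B := Bd β m with hB
  have B0 : 0 ≤ B := Bd_nn hβ
  have D0 : 0 ≤ D := by positivity
  set E := 8 * (w0 + m) ^ 2 with hE
  have E0 : 0 ≤ E := by positivity
  set C := 2 * D * (K2 / mu β) + 2 * D * B ^ 2 * (2 + β) + 8 * (K3 / mu β) + E * K1 with hC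
  have C0 : 0 ≤ C := by positivity
  obtain ⟨K, hK, h⟩ := growth hβ (q := 4 + β) (C := C) (ρ := 2) 0 (by linarith) C0 (by norm_num) (by
    rw [div_lt_iff₀ (by positivity)]; linarith)
  refine ⟨K, hK, fun n => h (n * m) (fun t => EE β m n t (fun s => fP β m n s ^ 2)) ?_ ?_⟩
  · rw [EE_one]; simp [fP, PP, yy, s0]
  · intro t ht htn
    have L0 := Lt_pos hβ ht
    have a1 : EE β m n (t+1) (fun s => fP β m n s ^ 2) ≤ EE β m n t (fun s => (1 + (4 + β) / Lt β t) * fP β m n s ^ 2 + 2 * D * (fG β m n t s ^ 2 / Lt β t) + 2 * D * B ^ 2 * Lt β t + 8 * (fR β m n s / Lt β t) + E * fA2 β m n t s) := by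
      refine EE_succ_le hβ hm1 ht htn fun s hs => ?_
      simp only [fP, sW_stp]
      refine ((hs.good hβ hm1 ht htn.le).stepP2 hβ).trans ?_
      have b1 := fA_abs hβ hm1 ht htn.le hs
      change |avg (Xs β m n t s) (Lt β t) (sW β m n s) + 1| ≤ _ at b1
      have b2 : (avg (Xs β m n t s) (Lt β t) (sW β m n s) + 1) ^ 2 ≤ 2 * (|fG β m n t s| / Lt β t) ^ 2 + 2 * B ^ 2 := by
        rw [← sq_abs]
        refine (pow_le_pow_left₀ (abs_nonneg _) b1 2).trans ?_
        nlinarith [sq_nonneg (|fG β m n t s| / Lt β t - B)]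
      have b3 : Lt β t * (avg (Xs β m n t s) (Lt β t) (sW β m n s) + 1) ^ 2 ≤ 2 * (fG β m n t s ^ 2 / Lt β t) + 2 * B ^ 2 * Lt β t := by
        refine (mul_le_mul_of_nonneg_left b2 L0.le).trans (le_of_eq ?_)
        rw [div_pow, sq_abs]; field_simp
      have b4 := mul_le_mul_of_nonneg_left b3 D0
      change _ + _ + 8 * (fR β m n s / Lt β t) + E * fA2 β m n t s ≤ _
      linarith
    rw [EE_add, EE_add, EE_add, EE_add, EE_mul, EE_mul, EE_div, EE_const hβ hm1 ht htn.le, EE_mul, EE_div, EE_mul] at a1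
    have hT : 0 ≤ EE β m n t (fun s => fP β m n s ^ 2) := EE_nonneg hβ hm1 ht htn.le fun s hs => sq_nonneg _
    have c1 : (t:ℝ) ^ (rh β - 1) ≤ (t:ℝ) ^ ((2:ℝ) - 1) := tr_mono ht (by linarith [rh_lt hβ])
    have a2 := divL hβ ht hK2 (h2 n t ht htn.le)
    have a3 := divL hβ ht hK3 (h3 n t ht htn.le)
    have a4 := h1 n t ht htn.le
    have a5 : Lt β t ≤ (2 + β) * (t:ℝ) ^ ((2:ℝ) - 1) := by
      norm_num; unfold Lt; linarith
    have a6 : 0 ≤ C / Lt β t ^ 2 * EE β m n t (fun s => fP β m n s ^ 2) := by positivity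
    set τ := (t:ℝ) ^ ((2:ℝ) - 1)
    set θ := (t:ℝ) ^ (rh β - 1)
    have a2' := mul_le_mul_of_nonneg_left (a2.trans (mul_le_mul_of_nonneg_left c1 (show 0 ≤ K2 / mu β by positivity))) (show 0 ≤ 2 * D by positivity)
    have a3' := mul_le_mul_of_nonneg_left c1 (show 0 ≤ K3 / mu β by positivity)
    have a4' := mul_le_mul_of_nonneg_left (a4.trans (mul_le_mul_of_nonneg_left c1 hK1)) E0
    have a5' := mul_le_mul_of_nonneg_left a5 (show 0 ≤ 2 * D * B ^ 2 by positivity)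
    have e : C * τ = 2 * D * (K2 / mu β * τ) + 2 * D * B ^ 2 * ((2 + β) * τ) + 8 * (K3 / mu β * τ) + E * (K1 * τ) := by rw [hC]; ring
    linarith

/-- (j) -/
lemma mV2 (hβ : 0 < β) (hm : 2 ≤ m) : ∃ K : ℝ, 0 ≤ K ∧ ∀ n t : ℕ, 1 ≤ t → t ≤ n * m →
    EE β m n t (fun s => fV β m n t s ^ 2) ≤ K * (t:ℝ) ^ (rh β - 1) := by
  have hm1 : 1 ≤ m := by omega
  have m0 := mu_pos hβ
  obtain ⟨K, hK, h⟩ := mR hβ hm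
  set C := 4 * (m:ℝ) ^ 4 + 4 * (K / mu β) with hC
  have C0 : 0 ≤ C := by positivity
  refine ⟨(2 * 2 + 2) ^ m * C, by positivity, fun n t ht htn => ?_⟩
  rw [mul_assoc]
  refine block_bound hm (A := 2) (by norm_num) (n * m) (fun t => EE β m n t (fun s => fV β m n t s ^ 2))
    (fun t => C * (t:ℝ) ^ (rh β - 1)) (fun t ht => by positivity) ?_ ?_ ?_ ?_ t ht htn
  · intro t ht _
    have := mul_le_mul_of_nonneg_left (rpow_half (show -1 ≤ rh β - 1 by linarith [rh_gt hβ]) ht) C0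
    linarith
  · simp only [EE_one]; simp [fV, VV, yy, s0]; positivity
  · intro t ht htn hz
    refine le_trans (le_of_eq ?_) (show (0:ℝ) ≤ _ by positivity)
    rw [EE_congr hβ hm1 ht htn (G := fun _ => 0), EE_const hβ hm1 ht htn]
    intro s hs; simp [fV_zero hs hz]
  · intro t ht htn hz
    have h1 : EE β m n (t+1) (fun s => fV β m n (t+1) s ^ 2) ≤
        EE β m n t (fun s => 2 * fV β m n t s ^ 2 + 4 * (m:ℝ) ^ 4 + 4 * (fR β m n s / Lt β t)) := by
      refine EE_succ_le hβ hm1 ht htn fun s hs => ?_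
      have := (hs.good hβ hm1 ht htn.le).stepV2
      simp only [fV, cb_succ hm1 hz, sW_stp]
      exact this
    rw [EE_add, EE_add, EE_mul, EE_const hβ hm1 ht htn.le, EE_mul, EE_div] at h1
    have a1 := divL hβ ht hK (h n t ht htn.le)
    have a2 := one_le_tr ht (show 0 ≤ rh β - 1 by linarith [rh_gt hβ])
    have a3 := mul_le_mul_of_nonneg_left a2 (show 0 ≤ 4 * (m:ℝ) ^ 4 by positivity)
    have e : C * (t:ℝ) ^ (rh β - 1) = 4 * (m:ℝ) ^ 4 * (t:ℝ) ^ (rh β - 1) + 4 * (K / mu β * (t:ℝ) ^ (rh β - 1)) := by rw [hC]; ring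
    linarith

lemma mN2_mono (hβ : 0 < β) (hm : 1 ≤ m) {n t : ℕ} (ht : 1 ≤ t) (htn : t < n * m) :
    EE β m n t (fun s => fN s ^ 2) ≤ EE β m n (t+1) (fun s => fN s ^ 2) := by
  have h1 : EE β m n (t+1) (fun s => (-1) * fN s ^ 2) ≤ EE β m n t (fun s => (-1) * fN s ^ 2) := by
    refine EE_succ_le hβ hm ht htn fun s hs => ?_
    have hg := hs.good hβ hm ht htn.le
    have := hg.mono (F := fun a => (-1) * fN (stp m n t s a) ^ 2) (G := fun a => (-1) * fN s ^ 2) (fun a => by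
      have hn : fN (stp m n t s a) = fN s + _ := NN_step s.M (cb m n t) a hs.Ms hs.Md
      have h0 : 0 ≤ fN s := hg.NNnn
      have h2 : fN s ≤ fN (stp m n t s a) := by
        rw [hn]; split_ifs
        · simp
        · linarith [hg.dnn a]
      nlinarith)
    rwa [hg.const] at this
  rw [EE_mul, EE_mul] at h1
  linarith

/-- (k) -/
lemma mNV (hβ : 0 < β) (hm : 2 ≤ m) (ε : ℝ) (hε : 0 < ε) : ∃ C : ℝ, 0 ≤ C ∧ ∀ n t : ℕ, 1 ≤ t → t ≤ n * m →
    EE β m n t (fun s => fN s * fV β m n t s) ≤ (2 * (1 + 1 / mu β) + 2) ^ m * (ε * EE β m n t (fun s => fN s ^ 2) + C) := by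
  have hm1 : 1 ≤ m := by omega
  have m0 := mu_pos hβ
  obtain ⟨K1, hK1, h1⟩ := mP2 hβ hm
  obtain ⟨K2, hK2, h2⟩ := mV2 hβ hm
  set C := (1 / (4 * ε) + m ^ 2) * (K1 / mu β ^ 2) + (1 + m ^ 2) * (K2 / mu β) + m ^ 2 * (1 + 1 / mu β) with hC
  have C0 : 0 ≤ C := by positivity
  refine ⟨C, C0, fun n t ht htn => ?_⟩
  have nn : ∀ t, 1 ≤ t → t ≤ n * m → 0 ≤ EE β m n t (fun s => fN s ^ 2) := fun t ht htn =>
    EE_nonneg hβ hm1 ht htn fun s hs => sq_nonneg _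
  set e : ℕ → ℝ := fun t => if t ≤ n * m then EE β m n t (fun s => fN s ^ 2) else 0 with he
  have key := block_bound hm (A := 1 + 1 / mu β) (by positivity) (n * m) (fun t => EE β m n t (fun s => fN s * fV β m n t s))
    (fun t => ε * e t + C) ?_ ?_ ?_ ?_ ?_ t ht htn
  · simpa [he, htn] using key
  · intro t ht
    simp only [he]; split_ifs with q
    · have := nn t ht q; positivity
    · simpa using C0
  · intro t ht htn
    simp only [he, htn.le, show t + 1 ≤ n * m from htn, if_true]
    have := mul_le_mul_of_nonneg_left (mN2_mono hβ hm1 ht htn) hε.le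
    have := mul_nonneg hε.le (nn t ht htn.le)
    linarith
  · simp only [EE_one, he]
    have : (if 1 ≤ n * m then fN (s0 n) ^ 2 else 0) = 0 := by simp [fN, NN, s0]
    rw [this]
    simp [fV, VV, yy, s0]; exact C0
  · intro t ht htn hz
    refine le_trans (le_of_eq ?_) (show (0:ℝ) ≤ _ from ?_)
    · rw [EE_congr hβ hm1 ht htn (G := fun _ => 0), EE_const hβ hm1 ht htn]
      intro s hs; simp [fV_zero hs hz]
    · simp only [he, htn, if_true]; have := nn t ht htn; positivity
  · intro t ht htn hz
    have L0 := Lt_pos hβ ht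
    have a1 : EE β m n (t+1) (fun s => fN s * fV β m n (t+1) s) ≤
        EE β m n t (fun s => (1 + 1 / mu β) * (fN s * fV β m n t s) + ε * fN s ^ 2 + (1 / (4 * ε) + m ^ 2) * (fP β m n s ^ 2 / Lt β t ^ 2) + (1 + m ^ 2) * (fV β m n t s ^ 2 / Lt β t) + m ^ 2 * (1 + 1 / mu β)) := by
      refine EE_succ_le hβ hm1 ht htn fun s hs => ?_
      have hg := hs.good hβ hm1 ht htn.le
      have b := hg.stepNV
      simp only [fV, fP, cb_succ hm1 hz, sW_stp]
      refine b.trans ?_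
      have N0 := hg.NNnn
      have V0 := hg.Vnn
      have P0 := hg.Pnn
      change 0 ≤ fN s at N0
      change _ + fN s * _ / _ + _ + _ ≤ _ + ε * fN s ^ 2 + _ + _ + _
      set V := VV s.M (sW β m n s) (cb m n t)
      set P := PP s.M (sW β m n s)
      have i1 := invL' hβ ht
      have e1 : 1 / Lt β t * (fN s * V) ≤ 1 / mu β * (fN s * V) := mul_le_mul_of_nonneg_right i1 (by positivity)
      have e2 : fN s * P / Lt β t ≤ ε * fN s ^ 2 + 1 / (4 * ε) * (P ^ 2 / Lt β t ^ 2) := by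
        rw [mul_div_assoc, ← div_pow]
        set p := P / Lt β t
        have : ε * fN s ^ 2 + 1 / (4 * ε) * p ^ 2 - fN s * p = (2 * ε * fN s - p) ^ 2 / (4 * ε) := by field_simp; ring
        have : 0 ≤ (2 * ε * fN s - p) ^ 2 / (4 * ε) := by positivity
        linarith
      have e3 : P / Lt β t ≤ 1 + P ^ 2 / Lt β t ^ 2 := by
        rw [← div_pow]; nlinarith [sq_nonneg (P / Lt β t - 1)]
      have e4 : V / Lt β t ≤ 1 / mu β + V ^ 2 / Lt β t := by
        have : V / Lt β t ≤ (1 + V ^ 2) / Lt β t := div_le_div_of_nonneg_right (by nlinarith [sq_nonneg (V-1)]) L0.le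
        rw [add_div] at this; linarith
      have e5 : (m:ℝ) ^ 2 * ((V + P) / Lt β t) ≤ m ^ 2 * (1 + P ^ 2 / Lt β t ^ 2 + (1 / mu β + V ^ 2 / Lt β t)) := by
        rw [add_div]; exact mul_le_mul_of_nonneg_left (by linarith) (by positivity)
      change (1 + 1 / Lt β t) * (fN s * V) + _ + _ + _ ≤ _
      linarith
    rw [EE_add, EE_add, EE_add, EE_add, EE_mul, EE_mul, EE_mul, EE_div, EE_mul, EE_div, EE_const hβ hm1 ht htn.le] at a1
    have c1 : EE β m n t (fun s => fP β m n s ^ 2) / Lt β t ^ 2 ≤ K1 / mu β ^ 2 := by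
      have := h1 n t ht htn.le
      rw [Real.rpow_two] at this
      have q := tL hβ ht
      have q2 : ((t:ℝ) / Lt β t) ^ 2 ≤ (1 / mu β) ^ 2 := pow_le_pow_left₀ (by positivity) q 2
      calc _ ≤ K1 * t ^ 2 / Lt β t ^ 2 := div_le_div_of_nonneg_right this (by positivity)
        _ = K1 * ((t:ℝ) / Lt β t) ^ 2 := by rw [div_pow]; ring
        _ ≤ K1 * (1 / mu β) ^ 2 := mul_le_mul_of_nonneg_left q2 hK1
        _ = _ := by rw [div_pow]; ring
    have c2 : EE β m n t (fun s => fV β m n t s ^ 2) / Lt β t ≤ K2 / mu β := by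
      refine (divL hβ ht hK2 (h2 n t ht htn.le)).trans ?_
      have : (t:ℝ) ^ (rh β - 1 - 1) ≤ 1 := Real.rpow_le_one_of_one_le_of_nonpos (by exact_mod_cast ht) (by linarith [rh_lt hβ])
      have := mul_le_mul_of_nonneg_left this (show 0 ≤ K2 / mu β by positivity)
      linarith
    have d1 := mul_le_mul_of_nonneg_left c1 (show 0 ≤ 1 / (4 * ε) + (m:ℝ) ^ 2 by positivity)
    have d2 := mul_le_mul_of_nonneg_left c2 (show 0 ≤ 1 + (m:ℝ) ^ 2 by positivity)
    simp only [he, htn.le, if_true]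
    linarith

/-- (l) -/
lemma mN2 (hβ : 0 < β) (hm : 2 ≤ m) : ∃ K : ℝ, 0 ≤ K ∧ ∀ n t : ℕ, 1 ≤ t → t ≤ n * m →
    EE β m n t (fun s => fN s ^ 2) ≤ K * (t:ℝ) ^ (2 - rh β) := by
  have hm1 : 1 ≤ m := by omega
  have m0 := mu_pos hβ
  set A := (2 * (1 + 1 / mu β) + 2) ^ m with hA
  have A0 : 0 < A := by positivity
  obtain ⟨C1, hC1, h1⟩ := mNV hβ hm (β / (4 * A)) (by positivity)
  obtain ⟨C2, hC2, h2⟩ := mV hβ hm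
  have q0 := qb_nn (m := m) hβ
  set C := (2 * (A * C1) + m ^ 2 * (m * qb β m + C2)) * (1 / mu β) with hC
  have C0 : 0 ≤ C := by positivity
  obtain ⟨K, hK, h⟩ := growth hβ (q := β / 2) (C := C) (ρ := 2 - rh β) 0 (by positivity) C0 (by linarith [rh_lt hβ]) (by
    unfold rh; rw [div_lt_iff₀ (by positivity)]; field_simp; nlinarith)
  refine ⟨K, hK, fun n => h (n * m) (fun t => EE β m n t (fun s => fN s ^ 2)) ?_ ?_⟩
  · rw [EE_one]; simp [fN, NN, s0]
  · intro t ht htn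
    have L0 := Lt_pos hβ ht
    have a1 : EE β m n (t+1) (fun s => fN s ^ 2) ≤ EE β m n t (fun s => fN s ^ 2 + 2 * (fN s * fV β m n t s) / Lt β t + m ^ 2 * (fV β m n t s / Lt β t)) :=
      EE_succ_le hβ hm1 ht htn fun s hs => (hs.good hβ hm1 ht htn.le).stepN2
    rw [EE_add, EE_add, EE_div, EE_mul, EE_mul, EE_div] at a1
    have hT : 0 ≤ EE β m n t (fun s => fN s ^ 2) := EE_nonneg hβ hm1 ht htn.le fun s hs => sq_nonneg _
    have a2 := h1 n t ht htn.le
    have a3 : EE β m n t (fun s => fV β m n t s) ≤ m * qb β m + C2 := by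
      have b1 := (abs_le.mp (h2 n t ht htn.le)).2
      have b2 : (t:ℝ) ^ (rh β / 2 - 1) ≤ 1 := Real.rpow_le_one_of_one_le_of_nonpos (by exact_mod_cast ht) (by linarith [rh_lt hβ])
      have b3 := mul_le_mul_of_nonneg_left b2 hC2
      have km : ((t % m : ℕ):ℝ) ≤ m := by exact_mod_cast (Nat.mod_lt t (by omega)).le
      have b4 := mul_le_mul_of_nonneg_right km q0
      linarith
    set u := EE β m n t (fun s => fN s ^ 2)
    set w := EE β m n t (fun s => fN s * fV β m n t s)
    set v := EE β m n t (fun s => fV β m n t s)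
    have a4 : 2 * w + m ^ 2 * v ≤ β / 2 * u + (2 * (A * C1) + m ^ 2 * (m * qb β m + C2)) := by
      have := mul_le_mul_of_nonneg_left a3 (show 0 ≤ (m:ℝ) ^ 2 by positivity)
      have e : A * (β / (4 * A) * u + C1) = β / 4 * u + A * C1 := by field_simp
      rw [e] at a2
      linarith
    have a5 := div_le_div_of_nonneg_right a4 L0.le
    have a6 := mul_le_mul_of_nonneg_left (invLθ hβ ht (show -1 ≤ 2 - rh β - 1 by linarith [rh_lt hβ])) (show 0 ≤ (2 * (A * C1) + m ^ 2 * (m * qb β m + C2)) by positivity)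
    have a7 : 0 ≤ C / Lt β t ^ 2 * u := by positivity
    have e1 : (2 * w + m ^ 2 * v) / Lt β t = 2 * w / Lt β t + m ^ 2 * (v / Lt β t) := by ring
    have e2 : (β / 2 * u + (2 * (A * C1) + m ^ 2 * (m * qb β m + C2))) / Lt β t = β / 2 / Lt β t * u + (2 * (A * C1) + m ^ 2 * (m * qb β m + C2)) * (1 / Lt β t) := by ring
    rw [e1, e2] at a5
    have e3 : C * (t:ℝ) ^ (2 - rh β - 1) = (2 * (A * C1) + m ^ 2 * (m * qb β m + C2)) * (1 / mu β * (t:ℝ) ^ (2 - rh β - 1)) := by rw [hC]; ring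
    linarith
end momd


section link

def peq (T : ℕ) (hT : 1 ≤ T) : ParentSeq (T+1) ≃ ParentSeq T × Set.Icc 1 T where
  toFun g := (fun t => g ⟨t.1, t.2.1, t.2.2.trans (Nat.le_succ T)⟩, g ⟨T+1, by simp; omega⟩)
  invFun fv := fun t => if h : t.1 ≤ T then fv.1 ⟨t.1, t.2.1, h⟩ else ⟨fv.2.1, fv.2.2.1, by
    have := fv.2.2.2; omega⟩
  left_inv g := by
    funext t
    obtain ⟨t, ht⟩ := t
    by_cases h : t ≤ T
    · simp [h]
    · have : t = T + 1 := by have := ht.2; omega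
      subst this
      simp
      rfl
  right_inv fv := by
    obtain ⟨f, v⟩ := fv
    refine Prod.ext ?_ ?_
    · funext t
      have : t.1 ≤ T := t.2.2
      simp [this]
    · simp

lemma peq_symm {T : ℕ} (hT : 1 ≤ T) (f : ParentSeq T) (v : Set.Icc 1 T) (t : Set.Icc 2 (T+1)) :
    (((peq T hT).symm (f, v) t : Set.Icc 1 (t.1 - 1)) : ℕ) = if h : t.1 ≤ T then (f ⟨t.1, t.2.1, h⟩ : ℕ) else v.1 := by
  have : (peq T hT).symm (f, v) t = if h : t.1 ≤ T then f ⟨t.1, t.2.1, h⟩ else ⟨v.1, v.2.1, by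
    have := v.2.2; omega⟩ := rfl
  rw [this]; split_ifs <;> rfl

lemma pval_le {T : ℕ} (hT : 1 ≤ T) (f : ParentSeq T) (v : Set.Icc 1 T) {j : ℕ} (hj : j ≤ T) :
    pval ((peq T hT).symm (f, v)) j = pval f j := by
  unfold pval
  by_cases h : 2 ≤ j
  · simp [h, hj, hj.trans (Nat.le_succ T), peq_symm]
  · simp [h]

lemma pval_top {T : ℕ} (hT : 1 ≤ T) (f : ParentSeq T) (v : Set.Icc 1 T) :
    pval ((peq T hT).symm (f, v)) (T+1) = v.1 := by
  unfold pval
  simp [peq_symm, hT]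

lemma pval_mem {T : ℕ} (f : ParentSeq T) {j : ℕ} (h2 : 2 ≤ j) (hj : j ≤ T) : 1 ≤ pval f j ∧ pval f j ≤ j - 1 := by
  unfold pval
  simp only [h2, hj, and_self, dif_pos]
  exact (f ⟨j, h2, hj⟩).2

lemma deg_le {T : ℕ} (hT : 1 ≤ T) (f : ParentSeq T) (v : Set.Icc 1 T) {t : ℕ} (ht : t ≤ T) (i : ℕ) :
    deg ((peq T hT).symm (f, v)) t i = deg f t i := by
  unfold deg
  congr 2
  refine Finset.filter_congr fun j hj => ?_
  rw [pval_le hT f v ((Finset.mem_Icc.mp hj).2.trans ht)]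

lemma moriP_succ {β : ℝ} {T : ℕ} (hT : 1 ≤ T) (f : ParentSeq T) (v : Set.Icc 1 T) :
    moriP β ((peq T hT).symm (f, v)) = moriP β f * (((deg f T v.1 : ℝ) + β) / Lt β T) := by
  unfold moriP
  rw [Finset.prod_Icc_succ_top (by omega)]
  congr 1
  · refine Finset.prod_congr rfl fun t ht => ?_
    have := (Finset.mem_Icc.mp ht)
    rw [pval_le hT f v this.2, deg_le hT f v (by omega)]
  · rw [pval_top, Nat.add_sub_cancel, deg_le hT f v le_rfl]
    unfold Lt; push_cast; congr 1; ring

def sT (m n : ℕ) (p : ℕ → ℕ) : ℕ → St n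
  | 0 => s0 n
  | 1 => s0 n
  | (t+2) => stp m n (t+1) (sT m n p (t+1)) (cb m n (p (t+2) - 1))

lemma sT_succ {m n : ℕ} {p : ℕ → ℕ} {t : ℕ} (ht : 1 ≤ t) :
    sT m n p (t+1) = stp m n t (sT m n p t) (cb m n (p (t+1) - 1)) := by
  obtain ⟨k, rfl⟩ : ∃ k, t = k + 1 := ⟨t - 1, by omega⟩
  rfl

lemma sT_congr {m n : ℕ} {p q : ℕ → ℕ} {t : ℕ} (h : ∀ j, j ≤ t → p j = q j) : sT m n p t = sT m n q t := by
  induction t using Nat.strong_induction_on with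
  | _ t ih =>
    match t, ih with
    | 0, _ => rfl
    | 1, _ => rfl
    | (t+2), ih =>
      simp only [sT]
      rw [ih (t+1) (by omega) (fun j hj => h j (by omega)), h (t+2) le_rfl]

lemma sT_Z {m n : ℕ} {p : ℕ → ℕ} {t : ℕ} (ht : 1 ≤ t) (i : Fin (n+1)) :
    (sT m n p t).Z i = ∑ j ∈ Finset.Icc 2 t, if cb m n (p j - 1) = i then (1:ℝ) else 0 := by
  induction t, ht using Nat.le_induction with
  | base => simp [sT, s0]
  | succ t ht ih =>
    rw [sT_succ ht, Finset.sum_Icc_succ_top (by omega), ← ih]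
    simp only [stp, stepZ, ind]
    congr 1
    simp only [eq_comm]

lemma sT_M {m n : ℕ} {p : ℕ → ℕ} {t : ℕ} (ht : 1 ≤ t) (i k : Fin (n+1)) (hik : i ≠ k) :
    (sT m n p t).M i k = ∑ j ∈ Finset.Icc 2 t, if (cb m n (j-1) = i ∧ cb m n (p j - 1) = k) ∨ (cb m n (j-1) = k ∧ cb m n (p j - 1) = i) then (1:ℝ) else 0 := by
  induction t, ht using Nat.le_induction with
  | base => simp [sT, s0]
  | succ t ht ih =>
    rw [sT_succ ht, Finset.sum_Icc_succ_top (by omega), ← ih]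
    simp only [stp, stepM, Nat.add_sub_cancel, ind]
    congr 1
    generalize cb m n t = c
    generalize cb m n (p (t+1) - 1) = a
    by_cases h1 : a = i <;> by_cases h2 : a = k <;> by_cases h3 : c = i <;> by_cases h4 : c = k <;> grind

lemma sum_blk (m n T : ℕ) {β : ℝ} (hm : 1 ≤ m) (hT : T ≤ n * m) (a : Fin (n+1)) :
    ∑ v ∈ Finset.Icc 1 T, (if cb m n (v - 1) = a then ((if 2 ≤ v then (1:ℝ) else 0) + β) else 0) =
      (1 + β) * nv m T a.val - if a.val = 0 ∧ 1 ≤ T then 1 else 0 := by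
  induction T with
  | zero => simp [nv]
  | succ T ih =>
    rw [Finset.sum_Icc_succ_top (by omega), ih (by omega), nv_succ hm, Nat.add_sub_cancel]
    have hc := cb_val (n := n) hm (t := T) (by omega)
    have e : (cb m n T = a) ↔ (a.val = T / m) := by rw [Fin.ext_iff, hc, eq_comm]
    simp only [e]
    by_cases h1 : a.val = T / m
    · simp only [h1, if_true]
      rcases Nat.eq_zero_or_pos T with rfl | h0
      · simp; ring
      · have : 2 ≤ T + 1 := by omega
        simp only [this, if_true, show 1 ≤ T by omega, show 1 ≤ T + 1 by omega, and_true]; ring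
    · simp only [h1, if_false]
      rcases Nat.eq_zero_or_pos T with rfl | h0
      · have : ¬ (a.val = 0) := by simpa using h1
        simp only [this, false_and, if_false]; ring
      · simp only [show 1 ≤ T by omega, show 1 ≤ T + 1 by omega, and_true]; ring

lemma kern {β : ℝ} {m n T : ℕ} (hm : 1 ≤ m) (h1 : 1 ≤ T) (hT : T ≤ n * m) (f : ParentSeq T) (a : Fin (n+1)) :
    ∑ v ∈ Finset.Icc 1 T, (if cb m n (v - 1) = a then ((deg f T v : ℝ) + β) else 0) = Xs β m n T (sT m n (pval f) T) a := by
  have e : ∀ v ∈ Finset.Icc 1 T, (if cb m n (v - 1) = a then ((deg f T v : ℝ) + β) else 0) =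
      (∑ j ∈ Finset.Icc 2 T, if pval f j = v then (if cb m n (v - 1) = a then (1:ℝ) else 0) else 0) + (if cb m n (v - 1) = a then ((if 2 ≤ v then (1:ℝ) else 0) + β) else 0) := by
    intro v _
    unfold deg
    split_ifs with q q2 <;> simp [Finset.sum_boole] <;> ring
  rw [Finset.sum_congr rfl e, Finset.sum_add_distrib, sum_blk m n T hm hT, Finset.sum_comm]
  unfold Xs xv
  rw [sT_Z h1]
  have e2 : ∀ j ∈ Finset.Icc 2 T, (∑ v ∈ Finset.Icc 1 T, if pval f j = v then (if cb m n (v - 1) = a then (1:ℝ) else 0) else 0) = if cb m n (pval f j - 1) = a then (1:ℝ) else 0 := by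
    intro j hj
    obtain ⟨j1, j2⟩ := Finset.mem_Icc.mp hj
    have := pval_mem f j1 j2
    rw [Finset.sum_ite_eq, if_pos (Finset.mem_Icc.mpr (by omega))]
  rw [Finset.sum_congr rfl e2]
  simp only [h1, and_true]

theorem link {β : ℝ} {m n : ℕ} (hm : 1 ≤ m) {T : ℕ} (h1 : 1 ≤ T) (hT : T ≤ n * m) : ∀ (F : St n → ℝ),
    moriE T β (fun f => F (sT m n (pval f) T)) = EE β m n T F := by
  induction T, h1 using Nat.le_induction with
  | base =>
    intro F
    have : Unique (ParentSeq 1) := by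
      refine ⟨⟨fun t => absurd t.2.1 (by have := t.2.2; omega)⟩, fun f => ?_⟩
      funext t
      exact absurd t.2.1 (by have := t.2.2; omega)
    simp [moriE, moriP, sT, EE_one, Fintype.card_unique]
  | succ T h1 ih =>
    intro F
    rw [EE_succ h1, ← ih (by omega)]
    unfold moriE
    rw [← Equiv.sum_comp (peq T h1).symm, Fintype.sum_prod_type]
    refine Finset.sum_congr rfl fun f _ => ?_
    have e : ∀ v : Set.Icc 1 T, moriP β ((peq T h1).symm (f, v)) * F (sT m n (pval ((peq T h1).symm (f, v))) (T + 1)) =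
        (fun v : ℕ => moriP β f * (((deg f T v : ℝ) + β) / Lt β T * F (stp m n T (sT m n (pval f) T) (cb m n (v - 1))))) v.1 := by
      intro v
      rw [moriP_succ, sT_succ h1, pval_top, sT_congr (fun j hj => pval_le h1 f v hj)]
      ring
    rw [Finset.sum_congr rfl (fun v _ => e v)]
    refine (Finset.sum_subtype (Finset.Icc 1 T) (p := fun x => x ∈ Set.Icc 1 T) (M := ℝ) (by simp) (fun v : ℕ => moriP β f * (((deg f T v : ℝ) + β) / Lt β T * F (stp m n T (sT m n (pval f) T) (cb m n (v - 1)))))).symm.trans ?_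
    rw [← Finset.mul_sum]
    congr 1
    unfold avg
    set H := fun a => F (stp m n T (sT m n (pval f) T) a) with hH
    calc _ = ∑ v ∈ Finset.Icc 1 T, ∑ a, (if cb m n (v - 1) = a then ((deg f T v : ℝ) + β) else 0) / Lt β T * H a := by
          refine Finset.sum_congr rfl fun v _ => ?_
          rw [Finset.sum_eq_single (cb m n (v-1))]
          · simp [hH]
          · intro b _ hb; rw [if_neg (fun h => hb h.symm)]; simp
          · simp
      _ = _ := by
          rw [Finset.sum_comm]
          refine Finset.sum_congr rfl fun a _ => ?_
          rw [← Finset.sum_mul, ← Finset.sum_div, kern hm h1 (by omega)]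
end link


section final

lemma tri_sum (n : ℕ) (g : ℕ → ℕ → ℝ) (gs : ∀ a b, g a b = g b a) (gd : ∀ a, g a a = 0) :
    ∑ a ∈ Icc 1 n, ∑ b ∈ Ioc a n, ∑ c ∈ Ioc b n, g a b * g a c * g b c =
      (∑ a ∈ Icc 1 n, ∑ b ∈ Icc 1 n, ∑ c ∈ Icc 1 n, g a b * g b c * g c a) / 6 := by
  set S := Icc 1 n with hS
  set h : ℕ → ℕ → ℕ → ℝ := fun a b c => if a < b ∧ b < c then g a b * g b c * g c a else 0 with hh
  set X := ∑ a ∈ S, ∑ b ∈ S, ∑ c ∈ S, h a b c with hX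
  have e1 : ∑ a ∈ S, ∑ b ∈ Ioc a n, ∑ c ∈ Ioc b n, g a b * g a c * g b c = X := by
    refine Finset.sum_congr rfl fun a ha => ?_
    have ha' := Finset.mem_Icc.mp ha
    have q1 : Ioc a n = S.filter (fun b => a < b) := by
      ext b; simp only [hS, mem_Ioc, mem_filter, mem_Icc]; omega
    rw [q1, Finset.sum_filter]
    refine Finset.sum_congr rfl fun b hb => ?_
    have hb' := Finset.mem_Icc.mp hb
    split_ifs with hab
    · have q2 : Ioc b n = S.filter (fun c => b < c) := by
        ext c; simp only [hS, mem_Ioc, mem_filter, mem_Icc]; omega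
      rw [q2, Finset.sum_filter]
      refine Finset.sum_congr rfl fun c hc => ?_
      simp only [hh, hab, true_and]
      split_ifs
      · rw [gs c a]; ring
      · rfl
    · simp [hh, hab]
  have e2 : ∀ a b c, g a b * g b c * g c a = h a b c + h a c b + h b a c + h b c a + h c a b + h c b a := by
    intro a b c
    simp only [hh]
    rcases lt_trichotomy a b with h1 | h1 | h1
    · rcases lt_trichotomy b c with h2 | h2 | h2
      · simp [h1, h2, h1.trans h2, h1.le, h2.le, (h1.trans h2).le, not_lt.mpr h1.le, not_lt.mpr h2.le, not_lt.mpr (h1.trans h2).le]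
      · subst h2; simp [gd]
      · rcases lt_trichotomy a c with h3 | h3 | h3
        · simp [h1, h2, h3, not_lt.mpr h1.le, not_lt.mpr h2.le, not_lt.mpr h3.le]
          rw [gs c b, gs b a, gs a c]; ring
        · subst h3; simp [gd]
        · simp [h1, h2, h3, not_lt.mpr h1.le, not_lt.mpr h2.le, not_lt.mpr h3.le]
          ring
    · subst h1; simp [gd]
    · rcases lt_trichotomy b c with h2 | h2 | h2
      · rcases lt_trichotomy a c with h3 | h3 | h3
        · simp [h1, h2, h3, not_lt.mpr h1.le, not_lt.mpr h2.le, not_lt.mpr h3.le]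
          rw [gs c b, gs b a, gs a c]; ring
        · subst h3; simp [gd]
        · simp [h1, h2, h3, not_lt.mpr h1.le, not_lt.mpr h2.le, not_lt.mpr h3.le]
          ring
      · subst h2; simp [gd]
      · simp [h1, h2, h2.trans h1, not_lt.mpr h1.le, not_lt.mpr h2.le, not_lt.mpr (h2.trans h1).le]
        rw [gs c b, gs b a, gs a c]; ring
  have sw : ∀ F : ℕ → ℕ → ℕ → ℝ, ∑ a ∈ S, ∑ b ∈ S, ∑ c ∈ S, F a b c = ∑ a ∈ S, ∑ b ∈ S, ∑ c ∈ S, F b a c := fun F =>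
    Finset.sum_comm
  have sw' : ∀ F : ℕ → ℕ → ℕ → ℝ, ∑ a ∈ S, ∑ b ∈ S, ∑ c ∈ S, F a b c = ∑ a ∈ S, ∑ b ∈ S, ∑ c ∈ S, F a c b := fun F =>
    Finset.sum_congr rfl fun a _ => Finset.sum_comm
  rw [e1]
  simp only [e2, Finset.sum_add_distrib]
  have x1 : ∑ a ∈ S, ∑ b ∈ S, ∑ c ∈ S, h a c b = X := (sw' h).symm
  have x2 : ∑ a ∈ S, ∑ b ∈ S, ∑ c ∈ S, h b a c = X := (sw h).symm
  have x3 : ∑ a ∈ S, ∑ b ∈ S, ∑ c ∈ S, h b c a = X := by rw [sw' (fun a b c => h b c a)]; rw [sw (fun a b c => h c b a)]; rw [sw' (fun a b c => h c a b), sw (fun a b c => h b a c)]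
  have x4 : ∑ a ∈ S, ∑ b ∈ S, ∑ c ∈ S, h c a b = X := by rw [sw' (fun a b c => h c a b), sw (fun a b c => h b a c)]
  have x5 : ∑ a ∈ S, ∑ b ∈ S, ∑ c ∈ S, h c b a = X := by rw [sw (fun a b c => h c b a)]; exact x4
  rw [x1, x2, x3, x4, x5]
  ring

lemma sum_fin (n : ℕ) (F : ℕ → ℝ) (hF : F (n+1) = 0) : ∑ i : Fin (n+1), F (i.val + 1) = ∑ a ∈ Icc 1 n, F a := by
  rw [Fin.sum_univ_castSucc]
  simp only [Fin.val_castSucc, Fin.val_last, hF, add_zero]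
  rw [← Finset.sum_range (fun i => F (i+1))]
  rw [Finset.range_eq_Ico, Finset.sum_Ico_add' (fun i => F i) 0 n 1]
  rfl

lemma blk_iff {m n t : ℕ} (hm : 1 ≤ m) (ht : t - 1 ≤ n * m) (i : Fin (n+1)) : cb m n (t-1) = i ↔ blk m t = i.val + 1 := by
  rw [Fin.ext_iff, cb_val hm ht]; unfold blk; omega

lemma sT_Md {m n : ℕ} {p : ℕ → ℕ} {t : ℕ} (ht : 1 ≤ t) (i : Fin (n+1)) : (sT m n p t).M i i = 0 := by
  induction t, ht using Nat.le_induction with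
  | base => simp [sT, s0]
  | succ t ht ih =>
    rw [sT_succ ht]
    simp only [stp, stepM, ih, ind]
    generalize cb m n t = c
    generalize cb m n (p (t+1) - 1) = a
    by_cases h1 : a = i <;> by_cases h3 : c = i <;> grind

variable {m n : ℕ}

lemma blk_le (hm : 1 ≤ m) (hn : 1 ≤ n) {t : ℕ} (ht : t ≤ n * m) : blk m t ≤ n := by
  unfold blk
  have : (t - 1) / m < n := by
    rw [Nat.div_lt_iff_lt_mul (by omega)]
    have : 0 < n * m := by positivity
    omega
  omega

lemma tri_NN (hm : 1 ≤ m) (hn : 1 ≤ n) (f : ParentSeq (n * m)) :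
    ∑ a ∈ Finset.Icc 1 n, ∑ b ∈ Finset.Ioc a n, ∑ c ∈ Finset.Ioc b n,
                (mult n m f a b : ℝ) * (mult n m f a c : ℝ) * (mult n m f b c : ℝ) = fN (sT m n (pval f) (n * m)) := by
  have hnm : 1 ≤ n * m := Nat.mul_pos hn hm
  set g : ℕ → ℕ → ℝ := fun a b => if a = b then 0 else (mult n m f a b : ℝ) with hg
  have gs : ∀ a b, g a b = g b a := by
    intro a b
    simp only [hg, mult, eq_comm (a := a) (b := b)]
    split_ifs
    · rfl
    · simp only [or_comm]
  have gd : ∀ a, g a a = 0 := by intro a; simp [hg]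
  have h1 : ∑ a ∈ Finset.Icc 1 n, ∑ b ∈ Finset.Ioc a n, ∑ c ∈ Finset.Ioc b n,
                (mult n m f a b : ℝ) * (mult n m f a c : ℝ) * (mult n m f b c : ℝ) = 
      ∑ a ∈ Icc 1 n, ∑ b ∈ Ioc a n, ∑ c ∈ Ioc b n, g a b * g a c * g b c := by
    refine Finset.sum_congr rfl fun a _ => Finset.sum_congr rfl fun b hb => Finset.sum_congr rfl fun c hc => ?_
    have := Finset.mem_Ioc.mp hb
    have := Finset.mem_Ioc.mp hc
    simp only [hg, show a ≠ b by omega, show a ≠ c by omega, show b ≠ c by omega, if_false]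
  have gM : ∀ i k : Fin (n+1), (sT m n (pval f) (n * m)).M i k = g (i.val+1) (k.val+1) := by
    intro i k
    by_cases hik : i = k
    · subst hik; rw [sT_Md hnm, gd]
    · have : i.val ≠ k.val := fun h => hik (Fin.ext h)
      rw [sT_M hnm i k hik, Finset.sum_boole]
      simp only [hg, mult, show i.val + 1 ≠ k.val + 1 by omega, if_false]
      congr 2
      refine Finset.filter_congr fun j hj => ?_
      obtain ⟨j1, j2⟩ := Finset.mem_Icc.mp hj
      have := pval_mem f j1 j2
      rw [blk_iff hm (by omega), blk_iff hm (by omega), blk_iff hm (by omega), blk_iff hm (by omega)]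
  have g0 : ∀ b, g (n+1) b = 0 := by
    intro b
    simp only [hg]
    split_ifs
    · rfl
    · simp only [mult, Nat.cast_eq_zero, Finset.card_eq_zero]
      refine Finset.filter_eq_empty_iff.mpr fun j hj => ?_
      obtain ⟨j1, j2⟩ := Finset.mem_Icc.mp hj
      have := pval_mem f j1 j2
      have := blk_le hm hn j2
      have := blk_le hm hn (t := pval f j) (by omega)
      omega
  rw [h1, tri_sum n g gs gd]
  unfold fN NN
  congr 1
  simp only [gM]
  have g0' : ∀ b, g b (n+1) = 0 := fun b => by rw [gs, g0]
  rw [← sum_fin n (fun a => ∑ b ∈ Icc 1 n, ∑ c ∈ Icc 1 n, g a b * g b c * g c a) (by simp [g0])]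
  refine Finset.sum_congr rfl fun a _ => ?_
  rw [← sum_fin n (fun b => ∑ c ∈ Icc 1 n, g (a.val+1) b * g b c * g c (a.val+1)) (by simp [g0])]
  refine Finset.sum_congr rfl fun b _ => ?_
  rw [← sum_fin n (fun c => g (a.val+1) (b.val+1) * g (b.val+1) c * g c (a.val+1)) (by simp [g0])]

noncomputable def dd (m n : ℕ) (s : St n) (i : Fin (n+1)) : ℝ := s.Z i + m - if i.val = 0 then 1 else 0
noncomputable def DD (m n : ℕ) (s : St n) : ℝ := ∑ i : Fin n, dd m n s i.castSucc * (dd m n s i.castSucc - 1) / 2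

lemma degU_dd (hm : 1 ≤ m) (hn : 1 ≤ n) (f : ParentSeq (n * m)) (i : Fin n) :
    (degU n m f (i.val + 1) : ℝ) = dd m n (sT m n (pval f) (n * m)) i.castSucc := by
  have hnm : 1 ≤ n * m := Nat.mul_pos hn hm
  have h1 := sum_blk m n (n * m) (β := 0) hm le_rfl i.castSucc
  unfold degU dd
  rw [sT_Z hnm, Finset.sum_boole]
  have e1 : (((Finset.Icc 2 (n * m)).filter (fun t => blk m (pval f t) = i.val + 1)).card : ℝ) =
      ((Finset.Icc 2 (n * m)).filter (fun t => cb m n (pval f t - 1) = i.castSucc)).card := by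
    congr 2
    refine Finset.filter_congr fun j hj => ?_
    obtain ⟨j1, j2⟩ := Finset.mem_Icc.mp hj
    have := pval_mem f j1 j2
    rw [blk_iff hm (by omega)]; simp
  have e2 : (((Finset.Icc 2 (n * m)).filter (fun t => blk m t = i.val + 1)).card : ℝ) = m - if i.val = 0 then 1 else 0 := by
    rw [nv_lt hm (by rw [Nat.mul_div_cancel _ (by omega)]; simp)] at h1
    simp only [hnm, and_true, Fin.val_castSucc] at h1
    rw [show (m:ℝ) = (1 + 0) * m by ring, ← h1, ← Finset.sum_boole]
    rw [show Icc 2 (n * m) = (Icc 1 (n * m)).filter (fun v => 2 ≤ v) by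
      ext v; simp only [mem_Icc, mem_filter]; omega, Finset.sum_filter]
    refine Finset.sum_congr rfl fun v hv => ?_
    have := Finset.mem_Icc.mp hv
    simp only [blk_iff hm (show v - 1 ≤ n * m by omega), Fin.val_castSucc]
    split_ifs <;> simp
  push_cast
  rw [e1, e2, Fin.val_castSucc]; ring

lemma DD_eq (hm : 1 ≤ m) (hn : 1 ≤ n) (f : ParentSeq (n * m)) :
    ∑ i ∈ Finset.Icc 1 n, (Nat.choose (degU n m f i) 2 : ℝ) = DD m n (sT m n (pval f) (n * m)) := by
  unfold DD
  simp only [← degU_dd hm hn f, Nat.cast_choose_two]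
  rw [← Finset.sum_range (fun i => (degU n m f (i + 1) : ℝ) * ((degU n m f (i + 1) : ℝ) - 1) / 2)]
  rw [Finset.range_eq_Ico, Finset.sum_Ico_add' (fun i => (degU n m f i : ℝ) * ((degU n m f i : ℝ) - 1) / 2) 0 n 1]
  rfl

noncomputable def cc2 (β : ℝ) (m : ℕ) : ℝ := (2 + 5 * β) / (2 * β) * (m : ℝ) ^ 2 + (2 - β) / (2 * β) * (m : ℝ)

lemma DD_G {β : ℝ} (hβ : 0 < β) (hm : 1 ≤ m) (hn : 1 ≤ n) {s : St n} (hs : IV m n (n * m) s) :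
    DD m n s - cc2 β m * n = (fG β m n (n * m) s + (2 * β * m + 3 - 2 * m)) / 2 := by
  have hl : s.Z (Fin.last n) = 0 := by
    have h1 := hs.Zc
    have : cb m n (n * m) = Fin.last n := by
      rw [Fin.ext_iff, cb_val hm le_rfl, Nat.mul_div_cancel _ (by omega)]; simp
    rw [this, Nat.mul_mod_left] at h1
    exact le_antisymm (by simpa using h1) (hs.Znn _)
  have hZ := hs.Zsum
  rw [Fin.sum_univ_castSucc, hl, add_zero] at hZ
  have hS : fS β m n s = ∑ i : Fin n, (sW β m n s i.castSucc ^ 2 - wv β m n i.castSucc ^ 2) := by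
    unfold fS; rw [Fin.sum_univ_castSucc]; simp [sW, hl]
  have e0 : ∑ i : Fin n, (if i.val = 0 then (1:ℝ) else 0) = 1 := by
    obtain ⟨k, rfl⟩ : ∃ k, n = k + 1 := ⟨n - 1, by omega⟩
    exact sum_i0
  have e : ∀ i : Fin n, dd m n s i.castSucc * (dd m n s i.castSucc - 1) / 2 = 1 / 2 * ((sW β m n s i.castSucc ^ 2 - wv β m n i.castSucc ^ 2)) - (2 * β * m + 1) / 2 * s.Z i.castSucc + (m ^ 2 - m) / 2 - (m - 1) * (if i.val = 0 then (1:ℝ) else 0) := by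
    intro i
    unfold dd sW wv
    simp only [Fin.val_castSucc]
    split_ifs <;> ring
  unfold DD
  simp only [e, Finset.sum_sub_distrib, Finset.sum_add_distrib, ← Finset.mul_sum, e0, hZ]
  rw [← Finset.sum_sub_distrib, ← hS]
  unfold fG cc2 sg
  simp only [Finset.sum_const, Finset.card_univ, Fintype.card_fin, nsmul_eq_mul]
  push_cast
  field_simp
  ring

lemma DD_ge (hm : 2 ≤ m) (hn : 1 ≤ n) {s : St n} (hs : IV m n (n * m) s) : (n:ℝ) - 1 ≤ DD m n s := by
  have e0 : ∑ i : Fin n, (if i.val = 0 then (1:ℝ) else 0) = 1 := by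
    obtain ⟨k, rfl⟩ : ∃ k, n = k + 1 := ⟨n - 1, by omega⟩
    exact sum_i0
  have : (n:ℝ) - 1 = ∑ i : Fin n, (1 - (if i.val = 0 then (1:ℝ) else 0)) := by
    rw [Finset.sum_sub_distrib, e0]; simp
  rw [this]
  unfold DD
  refine Finset.sum_le_sum fun i _ => ?_
  have h2 : (2:ℝ) ≤ m := by exact_mod_cast hm
  have h3 := hs.Znn i.castSucc
  unfold dd
  simp only [Fin.val_castSucc]
  split_ifs <;> nlinarith

lemma cc2_pos {β : ℝ} (hβ : 0 < β) (hm : 1 ≤ m) : 0 < cc2 β m := by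
  have h2 : (1:ℝ) ≤ m := by exact_mod_cast hm
  have : cc2 β m = (m:ℝ) * ((2 + 5 * β) * m + (2 - β)) / (2 * β) := by unfold cc2; field_simp
  rw [this]
  have : 0 < (2 + 5 * β) * m + (2 - β) := by nlinarith
  positivity

lemma c1_eq {β : ℝ} (hβ : 0 < β) : qb β m / (2 + β) * (((m:ℝ) - 1) / 2) = (m : ℝ) * ((m : ℝ) - 1) * (1 + β) ^ 2 / β ^ 2
                + (m : ℝ) * ((m : ℝ) - 1) ^ 2 * (1 + β) ^ 3 / (β ^ 2 * (2 + β)) := by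
  unfold qb pb sg kp; field_simp; ring

lemma NG {β : ℝ} (hβ : 0 < β) (hm : 2 ≤ m) : ∃ K : ℝ, 0 ≤ K ∧ ∀ n : ℕ, 1 ≤ n →
    EE β m n (n * m) (fun s => fN s * |fG β m n (n * m) s + (2 * β * m + 3 - 2 * m)|) ≤ K * n := by
  have hm1 : 1 ≤ m := by omega
  obtain ⟨K1, hK1, h1⟩ := mN2 hβ hm
  obtain ⟨K2, hK2, h2⟩ := mG2 hβ hm1
  set B := |2 * β * (m:ℝ) + 3 - 2 * m| with hB
  have B0 : 0 ≤ B := abs_nonneg _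
  refine ⟨((K1 + K2) / 2 + B * (1 + K1)) * m, by positivity, fun n hn => ?_⟩
  have hnm : 1 ≤ n * m := Nat.mul_pos hn hm1
  have a1 := h1 n (n * m) hnm le_rfl
  have a2 := h2 n (n * m) hnm le_rfl
  set T := n * m with hT
  have T0 : (0:ℝ) < T := by exact_mod_cast hnm
  set x := (T:ℝ) ^ (rh β - 1) with hx
  set y := (T:ℝ) ^ (1 - rh β) with hy
  have xy : x * y = 1 := by rw [hx, hy, ← Real.rpow_add T0]; simp
  have x0 : 0 ≤ x := tr_nn _ _
  have y0 : 0 ≤ y := tr_nn _ _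
  have b1 : EE β m n T (fun s => fN s * |fG β m n T s + (2 * β * m + 3 - 2 * m)|) ≤
      EE β m n T (fun s => x / 2 * fN s ^ 2 + y / 2 * fG β m n T s ^ 2 + B * (1 + fN s ^ 2)) := by
    refine EE_le hβ hm1 hnm le_rfl fun s hs => ?_
    have N0 : 0 ≤ fN s := (hs.good hβ hm1 hnm le_rfl).NNnn
    have c1 := abs_add_le (fG β m n T s) (2 * β * m + 3 - 2 * m)
    have c2 := mul_le_mul_of_nonneg_left c1 N0
    have c3 : fN s * |fG β m n T s| ≤ x / 2 * fN s ^ 2 + y / 2 * fG β m n T s ^ 2 := by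
      rw [← sq_abs (fG β m n T s)]
      set G := |fG β m n T s|
      have : 0 ≤ y * (x * fN s - G) ^ 2 := by positivity
      have e : y * (x * fN s - G) ^ 2 = (x * y) * x * fN s ^ 2 - 2 * (x * y) * (fN s * G) + y * G ^ 2 := by ring
      rw [e, xy] at this; linarith
    have c4 : fN s * B ≤ B * (1 + fN s ^ 2) := by nlinarith [sq_nonneg (fN s - 1)]
    rw [mul_add] at c2
    linarith
  rw [EE_add, EE_add, EE_mul, EE_mul, EE_mul, EE_add, EE_const hβ hm1 hnm le_rfl] at b1
  have d1 := mul_le_mul_of_nonneg_left a1 (show 0 ≤ x / 2 by positivity)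
  have d2 := mul_le_mul_of_nonneg_left a2 (show 0 ≤ y / 2 by positivity)
  have d3 : (T:ℝ) ^ (2 - rh β) ≤ T := by
    have := tr_mono hnm (show 2 - rh β ≤ 1 by linarith [rh_gt hβ])
    simpa using this
  have e1 : x / 2 * (K1 * (T:ℝ) ^ (2 - rh β)) = K1 / 2 * T := by
    have : x * (T:ℝ) ^ (2 - rh β) = T := by
      rw [hx, ← Real.rpow_add T0]; convert Real.rpow_one _ using 2; ring
    rw [show x / 2 * (K1 * (T:ℝ) ^ (2 - rh β)) = K1 / 2 * (x * (T:ℝ) ^ (2 - rh β)) by ring, this]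
  have e2 : y / 2 * (K2 * (T:ℝ) ^ (rh β)) = K2 / 2 * T := by
    have : y * (T:ℝ) ^ (rh β) = T := by
      rw [hy, ← Real.rpow_add T0]; convert Real.rpow_one _ using 2; ring
    rw [show y / 2 * (K2 * (T:ℝ) ^ (rh β)) = K2 / 2 * (y * (T:ℝ) ^ (rh β)) by ring, this]
  have d4 : 1 + EE β m n T (fun s => fN s ^ 2) ≤ (1 + K1) * T := by
    have t1 : (1:ℝ) ≤ T := by exact_mod_cast hnm
    have := mul_le_mul_of_nonneg_left d3 hK1
    linarith
  have d5 := mul_le_mul_of_nonneg_left d4 B0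
  have e3 : ((K1 + K2) / 2 + B * (1 + K1)) * m * n = K1 / 2 * T + K2 / 2 * T + B * ((1 + K1) * T) := by
    rw [hT]; push_cast; ring
  rw [e3]
  linarith

lemma main_ge2 {β : ℝ} (hβ : 0 < β) (hm : 2 ≤ m) : ∃ K : ℝ, 0 ≤ K ∧ ∀ n : ℕ, 3 ≤ n →
    |EE β m n (n * m) (fun s => 3 * fN s / DD m n s) - 3 * (qb β m / (2 + β) * (((m:ℝ) - 1) / 2)) * Real.log n / (cc2 β m * n)| ≤ K / n := by
  have hm1 : 1 ≤ m := by omega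
  obtain ⟨K1, hK1, h1⟩ := NG hβ hm
  obtain ⟨K2, hK2, h2⟩ := mN hβ hm
  have c0 := cc2_pos hβ hm1
  set c := cc2 β m with hc
  set q := qb β m / (2 + β) * (((m:ℝ) - 1) / 2) with hq
  refine ⟨3 * K1 / c + 3 * K2 / c, by positivity, fun n hn => ?_⟩
  have hnm : 1 ≤ n * m := Nat.mul_pos (by omega) hm1
  have n3 : (3:ℝ) ≤ n := by exact_mod_cast hn
  have n0 : (0:ℝ) < n := by linarith
  have a1 : |EE β m n (n * m) (fun s => 3 * fN s / DD m n s) - EE β m n (n * m) (fun s => 3 / (c * n) * fN s)| ≤ 3 * K1 / c / n := by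
    rw [← EE_sub]
    refine (EE_abs hβ hm1 hnm le_rfl _).trans ?_
    have : EE β m n (n * m) (fun s => |3 * fN s / DD m n s - 3 / (c * n) * fN s|) ≤
        EE β m n (n * m) (fun s => 3 / (c * n ^ 2) * (fN s * |fG β m n (n * m) s + (2 * β * m + 3 - 2 * m)|)) := by
      refine EE_le hβ hm1 hnm le_rfl fun s hs => ?_
      have N0 : 0 ≤ fN s := (hs.good hβ hm1 hnm le_rfl).NNnn
      have g1 := DD_G hβ hm1 (by omega) hs
      have g2 := DD_ge hm (by omega) hs
      have g3 : (n:ℝ) / 2 ≤ DD m n s := by linarith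
      have D0 : 0 < DD m n s := by linarith
      have e : 3 * fN s / DD m n s - 3 / (c * n) * fN s = - (3 * fN s * (DD m n s - c * n) / (DD m n s * (c * n))) := by
        field_simp; ring
      rw [e, g1, abs_neg, abs_div, abs_mul, abs_div, abs_two, abs_of_nonneg (show 0 ≤ 3 * fN s by positivity), abs_of_pos (show 0 < DD m n s * (c * n) by positivity)]
      set Y := |fG β m n (n * m) s + (2 * β * m + 3 - 2 * m)|
      have Y0 : 0 ≤ Y := abs_nonneg _
      calc 3 * fN s * (Y / 2) / (DD m n s * (c * n)) ≤ 3 * fN s * (Y / 2) / ((n:ℝ) / 2 * (c * n)) :=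
            div_le_div_of_nonneg_left (by positivity) (by positivity) (mul_le_mul_of_nonneg_right g3 (by positivity))
        _ = _ := by field_simp
    refine this.trans ?_
    rw [EE_mul]
    have := mul_le_mul_of_nonneg_left (h1 n (by omega)) (show 0 ≤ 3 / (c * n ^ 2) by positivity)
    refine this.trans (le_of_eq ?_)
    field_simp
  rw [EE_mul] at a1
  have a2 : |3 / (c * n) * EE β m n (n * m) (fun s => fN s) - 3 * q * Real.log n / (c * n)| ≤ 3 * K2 / c / n := by
    have e : 3 / (c * n) * EE β m n (n * m) (fun s => fN s) - 3 * q * Real.log n / (c * n) = 3 / (c * n) * (EE β m n (n * m) (fun s => fN s) - q * Real.log n) := by ring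
    rw [e, abs_mul, abs_of_pos (show 0 < 3 / (c * n) by positivity)]
    refine (mul_le_mul_of_nonneg_left (h2 n (by omega)) (by positivity)).trans (le_of_eq ?_)
    field_simp
  have := abs_sub_le (EE β m n (n * m) (fun s => 3 * fN s / DD m n s)) (3 / (c * n) * EE β m n (n * m) (fun s => fN s)) (3 * q * Real.log n / (c * n))
  rw [add_div]
  linarith

lemma tri_one (n : ℕ) (f : ParentSeq (n * 1)) : ∑ a ∈ Finset.Icc 1 n, ∑ b ∈ Finset.Ioc a n, ∑ c ∈ Finset.Ioc b n,
                (mult n 1 f a b : ℝ) * (mult n 1 f a c : ℝ) * (mult n 1 f b c : ℝ) = 0 := by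
  have key : ∀ a c, a < c → mult n 1 f a c ≠ 0 → pval f c = a := by
    intro a c hac h
    obtain ⟨t, ht⟩ := Finset.card_ne_zero.mp h
    obtain ⟨h1, h2⟩ := Finset.mem_filter.mp ht
    obtain ⟨j1, j2⟩ := Finset.mem_Icc.mp h1
    have h3 := pval_mem f j1 j2
    simp only [blk, Nat.div_one] at h2
    rcases h2 with ⟨p, q⟩ | ⟨p, q⟩
    · omega
    · have : t = c := by omega
      subst this; omega
  refine Finset.sum_eq_zero fun a _ => Finset.sum_eq_zero fun b hb => Finset.sum_eq_zero fun c hc => ?_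
  have hb := (Finset.mem_Ioc.mp hb).1
  have hc := (Finset.mem_Ioc.mp hc).1
  by_cases h1 : mult n 1 f a c = 0
  · simp [h1]
  by_cases h2 : mult n 1 f b c = 0
  · simp [h2]
  have := key a c (by omega) h1
  have := key b c (by omega) h2
  omega

end final

/-- **Theorem 6.1 (main theorem).** For `β > 0`, the expected clustering coefficient of the
Móri graph `G^n_{m,β}` is `3c₁ log n/(c₂ n) + O(1/n)`, where
`c₁ = m(m−1)(1+β)²/β² + m(m−1)²(1+β)³/(β²(2+β))` and
`c₂ = (2+5β)/(2β)·m² + (2−β)/(2β)·m`. Here the clustering coefficient is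
`3N/D` with `N` the number of triangles and `D = Σ_i binom(d(u_i),2)`. -/
theorem expected_clustering_coefficient (β : ℝ) (hβ : 0 < β) (m : ℕ) (hm : 1 ≤ m) :
    ∃ K : ℝ, 0 < K ∧ ∃ n₀ : ℕ, 3 ≤ n₀ ∧ ∀ n : ℕ, n₀ ≤ n →
      |moriE (n * m) β (fun f =>
          3 * (∑ a ∈ Finset.Icc 1 n, ∑ b ∈ Finset.Ioc a n, ∑ c ∈ Finset.Ioc b n,
                (mult n m f a b : ℝ) * (mult n m f a c : ℝ) * (mult n m f b c : ℝ))
            / (∑ i ∈ Finset.Icc 1 n, (Nat.choose (degU n m f i) 2 : ℝ)))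
        - 3 * ((m : ℝ) * ((m : ℝ) - 1) * (1 + β) ^ 2 / β ^ 2
                + (m : ℝ) * ((m : ℝ) - 1) ^ 2 * (1 + β) ^ 3 / (β ^ 2 * (2 + β)))
            * Real.log n
            / (((2 + 5 * β) / (2 * β) * (m : ℝ) ^ 2 + (2 - β) / (2 * β) * (m : ℝ)) * (n : ℝ))|
        ≤ K / (n : ℝ) := by
  rcases Nat.lt_or_ge m 2 with h | h
  · obtain rfl : m = 1 := by omega
    refine ⟨1, one_pos, 3, le_rfl, fun n hn => ?_⟩
    simp only [tri_one]
    simp [moriE]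
  · obtain ⟨K, hK, hh⟩ := main_ge2 hβ h
    refine ⟨K + 1, by linarith, 3, le_rfl, fun n hn => ?_⟩
    have hnm : 1 ≤ n * m := Nat.mul_pos (by omega) hm
    have e := link (β := β) hm hnm le_rfl (fun s => 3 * fN s / DD m n s)
    simp only [tri_NN hm (show 1 ≤ n by omega), DD_eq hm (show 1 ≤ n by omega)]
    rw [e, ← c1_eq hβ]
    refine (hh n hn).trans ?_
    exact div_le_div_of_nonneg_right (by linarith) (by positivity)
end

section
/- Let β > 0. There exists a constant C > 0 depending only on β such that for all integers 1 ≤ s ≤ t, Γ(t − 1/(2+β))·Γ(s − 2/(2+β)) / (Γ(t − 2/(2+β))·Γ(s − 1/(2+β))) ≤ (t/s)^{1/(2+β)}·(1 + C/s). -/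
theorem aux_up (x a : ℝ) (hx : 0 < x) (ha : 0 < a) (ha1 : a < 1) :
    Real.Gamma (x + a) ≤ Real.Gamma x * x ^ a := by
  have h := Real.Gamma_mul_add_mul_le_rpow_Gamma_mul_rpow_Gamma (s := x) (t := x + 1)
    (a := 1 - a) (b := a) hx (by linarith) (by linarith) ha (by ring)
  have hG := Real.Gamma_pos_of_pos hx
  rw [Real.Gamma_add_one hx.ne', Real.mul_rpow hx.le hG.le,
    show (1 - a) * x + a * (x + 1) = x + a by ring] at h
  calc _ ≤ _ := h
    _ = (Real.Gamma x ^ (1 - a) * Real.Gamma x ^ a) * x ^ a := by ring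
    _ = _ := by rw [← Real.rpow_add hG]; simp

/-- The Gamma-ratio estimate used in Lemma 5.1: for `β > 0` there is `C > 0` depending only
on `β` such that for all integers `1 ≤ s ≤ t`,
`Γ(t−1/(2+β))Γ(s−2/(2+β))/(Γ(t−2/(2+β))Γ(s−1/(2+β))) ≤ (t/s)^{1/(2+β)}(1+C/s)`. -/
theorem gamma_ratio_bound (β : ℝ) (hβ : 0 < β) :
    ∃ C : ℝ, 0 < C ∧ ∀ s t : ℕ, 1 ≤ s → s ≤ t →
      Real.Gamma ((t : ℝ) - 1 / (2 + β)) * Real.Gamma ((s : ℝ) - 2 / (2 + β)) /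
          (Real.Gamma ((t : ℝ) - 2 / (2 + β)) * Real.Gamma ((s : ℝ) - 1 / (2 + β)))
        ≤ ((t : ℝ) / (s : ℝ)) ^ (1 / (2 + β)) * (1 + C / (s : ℝ)) := by
  obtain ⟨a, ha⟩ : ∃ a : ℝ, a = 1 / (2 + β) := ⟨_, rfl⟩
  have ha2 : 2 / (2 + β) = 2 * a := by rw [ha]; ring
  have ha0 : 0 < a := by rw [ha]; positivity
  have ha1 : 2 * a < 1 := by
    rw [← ha2, div_lt_one (by linarith)]; linarith
  rw [ha2, ← ha]
  have hd : 0 < 1 - 2 * a := by linarith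
  refine ⟨2 * a / (1 - 2 * a), by positivity, ?_⟩
  intro s t hs hst
  have hs1 : (1 : ℝ) ≤ s := by exact_mod_cast hs
  have ht1 : (1 : ℝ) ≤ t := by exact_mod_cast hs.trans hst
  generalize (s : ℝ) = s at *
  generalize (t : ℝ) = t at *
  have hs0 : 0 < s := by linarith
  have ht0 : 0 < t := by linarith
  have hy : 0 < s - 2 * a := by linarith
  have h1 := aux_up (t - 2 * a) a (by linarith) ha0 (by linarith)
  have h2 := aux_up (s - a) (1 - a) (by linarith) (by linarith) (by linarith)
  rw [show t - 2 * a + a = t - a by ring] at h1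
  rw [show s - a + (1 - a) = (s - 2 * a) + 1 by ring, Real.Gamma_add_one hy.ne'] at h2
  have g1 := Real.Gamma_pos_of_pos (show 0 < t - 2 * a by linarith)
  have g2 := Real.Gamma_pos_of_pos (show 0 < s - a by linarith)
  have g3 := Real.Gamma_pos_of_pos hy
  have p1 : (t - 2 * a) ^ a ≤ t ^ a :=
    Real.rpow_le_rpow (by linarith) (by linarith) ha0.le
  have p2 : (s - a) ^ (1 - a) ≤ s ^ (1 - a) :=
    Real.rpow_le_rpow (by linarith) (by linarith) (by linarith)
  have k1 : Real.Gamma (t - a) ≤ Real.Gamma (t - 2 * a) * t ^ a :=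
    h1.trans (mul_le_mul_of_nonneg_left p1 g1.le)
  have k2 : Real.Gamma (s - 2 * a) ≤ Real.Gamma (s - a) * (s ^ (1 - a) / (s - 2 * a)) := by
    rw [← mul_div_assoc, le_div_iff₀ hy, mul_comm]
    exact h2.trans (mul_le_mul_of_nonneg_left p2 g2.le)
  have k3 : s / (s - 2 * a) ≤ 1 + 2 * a / (1 - 2 * a) / s := by
    have : 1 + 2 * a / (1 - 2 * a) / s - s / (s - 2 * a)
        = 4 * a ^ 2 * (s - 1) / ((1 - 2 * a) * s * (s - 2 * a)) := by
      field_simp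
      ring
    have h0 : 0 ≤ 4 * a ^ 2 * (s - 1) / ((1 - 2 * a) * s * (s - 2 * a)) :=
      div_nonneg (mul_nonneg (by positivity) (by linarith)) (by positivity)
    linarith
  rw [div_le_iff₀ (by positivity)]
  calc _ ≤ (Real.Gamma (t - 2 * a) * t ^ a) *
        (Real.Gamma (s - a) * (s ^ (1 - a) / (s - 2 * a))) :=
        mul_le_mul k1 k2 g3.le (by positivity)
    _ = (t / s) ^ a * (s / (s - 2 * a)) * (Real.Gamma (t - 2 * a) * Real.Gamma (s - a)) := by
        rw [Real.div_rpow ht0.le hs0.le, Real.rpow_sub hs0, Real.rpow_one]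
        ring
    _ ≤ _ := by gcongr
end
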